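/- arXiv:2406.06354 — 5 statements merged into one kernel-verified Lean document; each statement's English description precedes it below -/
import Mathlib

section
/- Fix integers d ≥ 1 and p ≥ 1, and let σ satisfy Assumption A. Let f ∈ Π_p(ℝ^d) be a target function and let U ⊊ ℝ^d be a set whose complement U^c = ℝ^d ∖ U is nonempty. Let p* be the minimum of deg g over all g ∈ Π_p(ℝ^d) such that g(x) = f(x) for all x ∈ U^c (this set contains f, so p* is well defined). For ε > 0 and N ≥ 1, in the small features regime with parameter ε, consider the random affine set A = {a ∈ ℝ^N : f_RF(a; x) = f(x) for all x ∈ U^c}; on the event that A is nonempty, let a* denote its unique element of minimal Euclidean norm. Then: (i) for every ε > 0 and every η > 0 there exists N₀ such that for all N ≥ N₀, P(A ≠ ∅) ≥ 1 − η; and (ii) for all δ > 0 and η > 0 there exists ε₀ > 0 such that for every ε ∈ (0, ε₀) there exists N₀ such that for all N ≥ N₀, with probability at least 1 − η, A ≠ ∅ and the L²(γ_d)-distance from the polynomial x ↦ f_RF(a*; x) to the subspace Π_{p*}(ℝ^d) is at most δ. -/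
open MeasureTheory ProbabilityTheory

/-- The standard Gaussian measure `N(0, I_d)` on `ℝ^d`. -/
noncomputable def gaussD (d : ℕ) : Measure (Fin d → ℝ) :=
  Measure.pi fun _ => gaussianReal 0 1

/-- The law of a feature pair `(w, b)` with `w ∼ N(0, v I_d)` and `b ∼ N(0, v)` independent. -/
noncomputable def featMeas (d : ℕ) (v : NNReal) : Measure ((Fin d → ℝ) × ℝ) :=
  (Measure.pi fun _ : Fin d => gaussianReal 0 v).prod (gaussianReal 0 v)

/-- The random features model `f_RF(a; x) = N^{-1/2} Σᵢ aᵢ σ(⟨wᵢ,x⟩ + bᵢ)`,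
where `ω i = (wᵢ, bᵢ)`. -/
noncomputable def fRF (d N : ℕ) (σ : ℝ → ℝ) (ω : Fin N → (Fin d → ℝ) × ℝ)
    (a : Fin N → ℝ) (x : Fin d → ℝ) : ℝ :=
  (1 / Real.sqrt N) * ∑ i, a i * σ (∑ j, (ω i).1 j * x j + (ω i).2)

/-- The affine set `A = {a : f_RF(a; x) = f(x) for all x ∈ Uᶜ}` of interpolating
parameters. -/
def interpSet (d N : ℕ) (σ : ℝ → ℝ) (U : Set (Fin d → ℝ))
    (F : MvPolynomial (Fin d) ℝ) (ω : Fin N → (Fin d → ℝ) × ℝ) : Set (Fin N → ℝ) :=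
  {a | ∀ x ∈ Uᶜ, fRF d N σ ω a x = MvPolynomial.eval x F}

/-- `p*`: the minimal total degree of a polynomial of degree at most `p` interpolating
the target `F` on `Uᶜ`. -/
noncomputable def minInterpDeg (d p : ℕ) (U : Set (Fin d → ℝ))
    (F : MvPolynomial (Fin d) ℝ) : ℕ :=
  sInf {k : ℕ | ∃ G : MvPolynomial (Fin d) ℝ, G.totalDegree ≤ p ∧
    (∀ x ∈ Uᶜ, MvPolynomial.eval x G = MvPolynomial.eval x F) ∧ G.totalDegree = k}


/-! ### Deterministic linear algebra -/

lemma aux_upper {ι : Type*} [Fintype ι] (N : ℕ) (φ : Fin N → ι → ℝ) (a : Fin N → ℝ) :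
    ∑ β, ((1 / Real.sqrt N) * ∑ i, a i * φ i β) ^ 2
      ≤ (∑ i, a i ^ 2) * ∑ β, (1 / (N : ℝ)) * ∑ i, φ i β * φ i β := by
  rw [Finset.mul_sum]
  refine Finset.sum_le_sum fun β _ => ?_
  have h := Finset.sum_mul_sq_le_sq_mul_sq Finset.univ a (fun i => φ i β)
  rw [mul_pow, div_pow, Real.sq_sqrt (Nat.cast_nonneg N), one_pow]
  have hN : (0 : ℝ) ≤ 1 / N := by positivity
  calc (1 / (N : ℝ)) * (∑ i, a i * φ i β) ^ 2
      ≤ (1 / (N : ℝ)) * ((∑ i, a i ^ 2) * ∑ i, φ i β ^ 2) := mul_le_mul_of_nonneg_left h hN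
    _ = _ := by simp only [pow_two]; ring

lemma aux_lower {ι : Type*} [Fintype ι] (N : ℕ) (φ : Fin N → ι → ℝ) (l : ℝ) (hl : 0 < l)
    (hlow : ∀ u : ι → ℝ, l * ∑ β, u β ^ 2 ≤ (1 / (N : ℝ)) * ∑ i, (∑ β, u β * φ i β) ^ 2)
    (g : ι → ℝ) :
    ∃ a : Fin N → ℝ, (∀ β, (1 / Real.sqrt N) * ∑ i, a i * φ i β = g β) ∧
      ∑ i, a i ^ 2 ≤ l⁻¹ * ∑ β, g β ^ 2 := by
  let T : (ι → ℝ) →ₗ[ℝ] (ι → ℝ) :=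
    { toFun := fun u γ => (1 / (N : ℝ)) * ∑ i, (∑ β, u β * φ i β) * φ i γ
      map_add' := by
        intro u v; funext γ
        simp only [Pi.add_apply, add_mul, Finset.sum_add_distrib, mul_add]
      map_smul' := by
        intro c u; funext γ
        simp only [Pi.smul_apply, smul_eq_mul, RingHom.id_apply, Finset.mul_sum, Finset.sum_mul]
        refine Finset.sum_congr rfl fun i _ => Finset.sum_congr rfl fun j _ => by ring }
  have hT : ∀ u γ, T u γ = (1 / (N : ℝ)) * ∑ i, (∑ β, u β * φ i β) * φ i γ := fun _ _ => rfl
  have hquad : ∀ u, ∑ γ, u γ * T u γ = (1 / (N : ℝ)) * ∑ i, (∑ β, u β * φ i β) ^ 2 := by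
    intro u
    simp only [hT]
    simp_rw [mul_left_comm _ (1 / (N : ℝ)), ← Finset.mul_sum]
    congr 1
    simp_rw [Finset.mul_sum]
    rw [Finset.sum_comm]
    refine Finset.sum_congr rfl fun i _ => ?_
    rw [pow_two, Finset.mul_sum]
    refine Finset.sum_congr rfl fun γ _ => by ring
  have hinj : Function.Injective T := by
    rw [← LinearMap.ker_eq_bot, LinearMap.ker_eq_bot']
    intro u hu
    have h1 := hlow u
    rw [← hquad, hu] at h1
    simp only [Pi.zero_apply, mul_zero, Finset.sum_const_zero] at h1
    have h2 : ∑ β, u β ^ 2 ≤ 0 := by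
      by_contra h; push Not at h; nlinarith
    have h3 := (Finset.sum_eq_zero_iff_of_nonneg (fun i _ => sq_nonneg (u i))).1
      (le_antisymm h2 (Finset.sum_nonneg fun i _ => sq_nonneg (u i)))
    funext β
    simpa using h3 β (Finset.mem_univ β)
  obtain ⟨u, hu⟩ := (LinearMap.injective_iff_surjective.1 hinj) g
  refine ⟨fun i => (1 / Real.sqrt N) * ∑ β, u β * φ i β, ?_, ?_⟩
  · intro β
    rw [← hu, hT]
    simp_rw [mul_assoc, ← Finset.mul_sum]
    rw [← mul_assoc, div_mul_div_comm, one_mul, Real.mul_self_sqrt (Nat.cast_nonneg N)]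
  · have e1 : ∑ i, ((1 / Real.sqrt N) * ∑ β, u β * φ i β) ^ 2 = ∑ γ, u γ * g γ := by
      rw [← hu, hquad]
      simp_rw [mul_pow, div_pow, Real.sq_sqrt (Nat.cast_nonneg N), one_pow, ← Finset.mul_sum]
    rw [e1]
    have h1 := hlow u
    rw [← hquad, hu] at h1
    have h2 := Finset.sum_mul_sq_le_sq_mul_sq Finset.univ u g
    set X := ∑ γ, u γ * g γ
    set P := ∑ γ, u γ ^ 2
    set Q := ∑ γ, g γ ^ 2
    have hP : 0 ≤ P := Finset.sum_nonneg fun i _ => sq_nonneg (u i)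
    have hQ : 0 ≤ Q := Finset.sum_nonneg fun i _ => sq_nonneg (g i)
    have hX : 0 ≤ X := le_trans (by positivity) h1
    rw [inv_mul_eq_div, le_div_iff₀ hl]
    rcases hX.eq_or_lt with h | h
    · rw [← h]; simpa using hQ
    · have : X * (X * l) ≤ X * Q := by nlinarith
      exact le_of_mul_le_mul_left this h

/-- Existence and uniqueness of the minimal norm element. -/
lemma aux_minnorm {N : ℕ} (A : Set (Fin N → ℝ)) (hc : IsClosed A)
    (hconv : ∀ a ∈ A, ∀ b ∈ A, (fun i => (a i + b i) / 2) ∈ A) (hne : A.Nonempty) :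
    ∃ astar ∈ A, (∀ a ∈ A, ∑ i, astar i ^ 2 ≤ ∑ i, a i ^ 2) ∧
      (∀ a ∈ A, (∀ a' ∈ A, ∑ i, a i ^ 2 ≤ ∑ i, a' i ^ 2) → a = astar) := by
  obtain ⟨a0, ha0⟩ := hne
  set R := ∑ i, a0 i ^ 2
  have hcont : Continuous fun a : Fin N → ℝ => ∑ i, a i ^ 2 := by fun_prop
  have hK : IsCompact (A ∩ {a | ∑ i, a i ^ 2 ≤ R}) := by
    refine Metric.isCompact_of_isClosed_isBounded
      (hc.inter (isClosed_le hcont continuous_const)) ?_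
    refine (Metric.isBounded_iff_subset_closedBall 0).2 ⟨Real.sqrt R, ?_⟩
    rintro a ⟨_, ha⟩
    rw [mem_closedBall_zero_iff, pi_norm_le_iff_of_nonneg (Real.sqrt_nonneg _)]
    intro i
    rw [Real.norm_eq_abs]
    refine Real.abs_le_sqrt (le_trans ?_ ha)
    exact Finset.single_le_sum (f := fun i => a i ^ 2) (fun i _ => sq_nonneg _)
      (Finset.mem_univ i)
  obtain ⟨b, hb, hbmin⟩ := hK.exists_isMinOn ⟨a0, ha0, le_refl R⟩ hcont.continuousOn
  have hmin : ∀ a ∈ A, ∑ i, b i ^ 2 ≤ ∑ i, a i ^ 2 := by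
    intro a ha
    by_cases h : ∑ i, a i ^ 2 ≤ R
    · exact hbmin ⟨ha, h⟩
    · exact le_trans hb.2 (le_of_lt (not_le.1 h))
  refine ⟨b, hb.1, hmin, fun a ha hamin => ?_⟩
  have h1 := hmin _ (hconv a ha b hb.1)
  have h2 := hamin b hb.1
  have h3 : ∑ i, ((a i + b i) / 2) ^ 2
      = (∑ i, a i ^ 2) / 2 + (∑ i, b i ^ 2) / 2 - (∑ i, (a i - b i) ^ 2) / 4 := by
    rw [Finset.sum_div, Finset.sum_div, Finset.sum_div, ← Finset.sum_add_distrib,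
      ← Finset.sum_sub_distrib]
    refine Finset.sum_congr rfl fun i _ => by ring
  have h4 : ∑ i, (a i - b i) ^ 2 ≤ 0 := by
    rw [h3] at h1
    linarith
  have h5 := (Finset.sum_eq_zero_iff_of_nonneg (fun i _ => sq_nonneg (a i - b i))).1
      (le_antisymm h4 (Finset.sum_nonneg fun i _ => sq_nonneg _))
  funext i
  have := h5 i (Finset.mem_univ i)
  nlinarith [pow_eq_zero_iff (two_ne_zero) |>.1 this]

/-! ### Functions with all moments -/

def AllMom {Ω : Type*} [MeasurableSpace Ω] (μ : Measure Ω) (f : Ω → ℝ) : Prop :=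
  ∀ q : ENNReal, q ≠ ⊤ → MemLp f q μ

namespace AllMom
variable {Ω : Type*} [MeasurableSpace Ω] {μ : Measure Ω}

lemma mul {f g : Ω → ℝ} (hf : AllMom μ f) (hg : AllMom μ g) :
    AllMom μ (fun x => f x * g x) := by
  intro q hq
  have h2 : (2 * q) ≠ ⊤ := ENNReal.mul_ne_top (by simp) hq
  have : ENNReal.HolderTriple (2 * q) (2 * q) q := by
    constructor
    rw [ENNReal.mul_inv (by simp) (by simp), ← add_mul, ENNReal.inv_two_add_inv_two, one_mul]
  exact MemLp.mul' (hg _ h2) (hf _ h2)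

lemma const [IsFiniteMeasure μ] (c : ℝ) : AllMom μ (fun _ => c) :=
  fun _ _ => memLp_const c

lemma sum {ι : Type*} (s : Finset ι) {f : ι → Ω → ℝ} (h : ∀ i ∈ s, AllMom μ (f i)) :
    AllMom μ (fun x => ∑ i ∈ s, f i x) :=
  fun q hq => memLp_finsetSum s fun i hi => h i hi q hq

lemma prod [IsFiniteMeasure μ] {ι : Type*} (s : Finset ι) {f : ι → Ω → ℝ}
    (h : ∀ i ∈ s, AllMom μ (f i)) : AllMom μ (fun x => ∏ i ∈ s, f i x) := by
  classical
  induction s using Finset.induction_on with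
  | empty => simpa using const 1
  | insert i s hi ih =>
    simp_rw [Finset.prod_insert hi]
    exact (h i (by simp)).mul (ih fun j hj => h j (by simp [hj]))

lemma pow [IsFiniteMeasure μ] {f : Ω → ℝ} (h : AllMom μ f) (n : ℕ) :
    AllMom μ (fun x => f x ^ n) := by
  induction n with
  | zero => simpa using const 1
  | succ n ih => simp_rw [pow_succ]; exact ih.mul h

lemma integrable {f : Ω → ℝ} (h : AllMom μ f) : Integrable f μ :=
  memLp_one_iff_integrable.1 (h 1 (by simp))

lemma comp {Ω' : Type*} [MeasurableSpace Ω'] {ν : Measure Ω'} {f : Ω' → ℝ} {T : Ω → Ω'}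
    (h : AllMom ν f) (hT : MeasurePreserving T μ ν) : AllMom μ (fun x => f (T x)) :=
  fun q hq => (h q hq).comp_measurePreserving hT

end AllMom

lemma allMom_gauss (v : NNReal) : AllMom (gaussianReal 0 v) (fun x => x) :=
  fun q hq => memLp_id_gaussianReal' q hq

/-! ### Weak law of large numbers -/

lemma wlln {Ω : Type*} [MeasurableSpace Ω] (ν : Measure Ω) [IsProbabilityMeasure ν]
    (G : Ω → ℝ) (hG : MemLp G 2 ν) (t η : ℝ) (ht : 0 < t) (hη : 0 < η) :
    ∃ N₀ : ℕ, ∀ N : ℕ, N₀ ≤ N → 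
      (Measure.pi fun _ : Fin N => ν)
        {ω | t ≤ |(1 / (N : ℝ)) * ∑ i, G (ω i) - ∫ x, G x ∂ν|} ≤ ENNReal.ofReal η := by
  obtain ⟨N₀, hN₀⟩ := exists_nat_ge (Var[G; ν] / t ^ 2 / η)
  refine ⟨N₀ + 1, fun N hN => ?_⟩
  have hNpos : (0 : ℝ) < N := by
    have : 0 < N := by omega
    exact_mod_cast this
  have hmem : ∀ i : Fin N, MemLp (fun ω : Fin N → Ω => G (ω i)) 2 (Measure.pi fun _ => ν) :=
    fun i => hG.comp_measurePreserving (measurePreserving_eval (fun _ => ν) i)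
  have hS : MemLp (∑ i : Fin N, fun ω : Fin N → Ω => G (ω i)) 2 (Measure.pi fun _ => ν) :=
    memLp_finsetSum' _ fun i _ => hmem i
  have hv := variance_sum_pi (μ := fun _ : Fin N => ν) (X := fun _ => G) (fun _ => hG)
  have hE : ∫ ω, (∑ i : Fin N, fun ω : Fin N → Ω => G (ω i)) ω ∂(Measure.pi fun _ => ν)
      = N * ∫ x, G x ∂ν := by
    simp only [Finset.sum_apply]
    rw [integral_finsetSum _ (fun i _ => (hmem i).integrable (by norm_num))]
    have : ∀ i : Fin N, ∫ ω : Fin N → Ω, G (ω i) ∂(Measure.pi fun _ => ν) = ∫ x, G x ∂ν :=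
      fun i => integral_comp_eval (μ := fun _ : Fin N => ν) hG.aestronglyMeasurable
    simp [this]
  have hc := meas_ge_le_variance_div_sq hS (c := N * t) (by positivity)
  rw [hv, hE] at hc
  refine le_trans (measure_mono ?_) (le_trans hc (ENNReal.ofReal_le_ofReal ?_))
  · intro ω hω
    simp only [Set.mem_ofPred_eq, Finset.sum_apply] at hω ⊢
    have : (∑ i, G (ω i)) - N * ∫ x, G x ∂ν
        = N * ((1 / (N : ℝ)) * ∑ i, G (ω i) - ∫ x, G x ∂ν) := by field_simp
    rw [this, abs_mul, abs_of_pos hNpos]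
    exact mul_le_mul_of_nonneg_left hω hNpos.le
  · simp only [Finset.sum_const, Finset.card_univ, Fintype.card_fin, nsmul_eq_mul]
    have hvn : 0 ≤ Var[G; ν] := variance_nonneg _ _
    have h1 : Var[G; ν] / t ^ 2 / η ≤ N := hN₀.trans (by exact_mod_cast (by omega : N₀ ≤ N))
    rw [div_le_iff₀ hη] at h1
    have h2 : N * Var[G; ν] / (N * t) ^ 2 = (Var[G; ν] / t ^ 2) / N := by
      field_simp
    rw [h2, div_le_iff₀ hNpos]
    linarith

/-- Uniform WLLN for the empirical second moment matrix. -/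
lemma wlln_matrix {Ω ι : Type*} [MeasurableSpace Ω] [Fintype ι] (ν : Measure Ω)
    [IsProbabilityMeasure ν]
    (X : ι → Ω → ℝ) (hX : ∀ β, AllMom ν (X β)) (t η : ℝ) (ht : 0 < t) (hη : 0 < η) :
    ∃ N₀ : ℕ, ∀ N : ℕ, N₀ ≤ N → ENNReal.ofReal (1 - η) ≤
      (Measure.pi fun _ : Fin N => ν)
        {ω | ∀ β γ, |(1 / (N : ℝ)) * ∑ i, X β (ω i) * X γ (ω i)
          - ∫ x, X β x * X γ x ∂ν| ≤ t} := by
  classical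
  set η' : ℝ := η / (Fintype.card (ι × ι) + 1) with hη'
  have hη'pos : 0 < η' := by positivity
  have H := fun q : ι × ι => wlln ν (fun x => X q.1 x * X q.2 x)
    (((hX q.1).mul (hX q.2)) 2 (by simp)) t η' ht hη'pos
  choose M hM using H
  refine ⟨∑ q, M q, fun N hN => ?_⟩
  set μ := (Measure.pi fun _ : Fin N => ν)
  set B : ι × ι → Set (Fin N → Ω) := fun q =>
    {ω | t ≤ |(1 / (N : ℝ)) * ∑ i, X q.1 (ω i) * X q.2 (ω i) - ∫ x, X q.1 x * X q.2 x ∂ν|} with hB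
  have hBm : μ (⋃ q, B q) ≤ ENNReal.ofReal η := by
    refine le_trans (measure_iUnion_fintype_le μ B) ?_
    refine le_trans (Finset.sum_le_sum (g := fun _ => ENNReal.ofReal η') fun q _ => ?_) ?_
    · refine hM q N (le_trans ?_ hN)
      exact Finset.single_le_sum (f := M) (fun _ _ => Nat.zero_le _) (Finset.mem_univ q)
    · rw [Finset.sum_const, Finset.card_univ, nsmul_eq_mul, ← ENNReal.ofReal_natCast,
        ← ENNReal.ofReal_mul (by positivity)]
      refine ENNReal.ofReal_le_ofReal ?_
      rw [hη', mul_div_assoc', div_le_iff₀ (by positivity)]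
      nlinarith
  have hcompl : (⋃ q, B q)ᶜ ⊆ {ω | ∀ β γ, |(1 / (N : ℝ)) * ∑ i, X β (ω i) * X γ (ω i)
          - ∫ x, X β x * X γ x ∂ν| ≤ t} := by
    intro ω hω β γ
    simp only [Set.mem_compl_iff, Set.mem_iUnion, not_exists, hB, Set.mem_ofPred_eq, not_le] at hω
    exact (hω (β, γ)).le
  refine le_trans ?_ (measure_mono hcompl)
  have h1 : (1 : ENNReal) ≤ μ (⋃ q, B q) + μ (⋃ q, B q)ᶜ := by
    have : μ Set.univ = 1 := measure_univ
    rw [← this, ← Set.union_compl_self (⋃ q, B q)]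
    exact measure_union_le _ _
  rw [ENNReal.ofReal_sub _ hη.le, ENNReal.ofReal_one]
  exact tsub_le_iff_left.2 (h1.trans (by gcongr))

/-! ### The features -/

/-- Multi-indices of total degree at most `p`. -/
def multiIdx (d p : ℕ) : Finset (Fin d → ℕ) :=
  (Finset.range (p + 1)).biUnion fun m => Finset.piAntidiag Finset.univ m

lemma mem_multiIdx {d p : ℕ} {β : Fin d → ℕ} : β ∈ multiIdx d p ↔ ∑ j, β j ≤ p := by
  simp [multiIdx]

/-- Normalised derivatives of the activation. -/
noncomputable def psi {p : ℕ} (cf : Fin (p + 1) → ℝ) (m : ℕ) (y : ℝ) : ℝ :=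
  ∑ k : Fin (p + 1), cf k * ((k : ℕ).choose m) * y ^ ((k : ℕ) - m)

lemma psi_zero {p : ℕ} (cf : Fin (p + 1) → ℝ) (m : Fin (p + 1)) : psi cf m 0 = cf m := by
  unfold psi
  rw [Finset.sum_eq_single m]
  · simp
  · intro k _ hk
    rcases lt_trichotomy (k : ℕ) m with h | h | h
    · simp [Nat.choose_eq_zero_of_lt h]
    · exact absurd (Fin.ext h) hk
    · have : (k : ℕ) - m ≠ 0 := by omega
      simp [this]
  · simp

lemma sigma_add {p : ℕ} (cf : Fin (p + 1) → ℝ) (a b : ℝ) :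
    ∑ k : Fin (p + 1), cf k * (a + b) ^ (k : ℕ)
      = ∑ m ∈ Finset.range (p + 1), a ^ m * psi cf m b := by
  unfold psi
  simp_rw [Finset.mul_sum]
  rw [Finset.sum_comm]
  refine Finset.sum_congr rfl fun k _ => ?_
  rw [add_pow, Finset.mul_sum]
  have hsub : Finset.range ((k : ℕ) + 1) ⊆ Finset.range (p + 1) := by
    intro m; simp only [Finset.mem_range]; omega
  refine (Finset.sum_subset hsub ?_).trans ?_
  · intro m _ hm
    simp only [Finset.mem_range] at hm
    rw [Nat.choose_eq_zero_of_lt (by omega)]; simp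
  · exact Finset.sum_congr rfl fun m _ => by ring

/-- Rescaled feature coefficients. -/
noncomputable def feat {d p : ℕ} (cf : Fin (p + 1) → ℝ) (s : ℝ) (β : Fin d → ℕ)
    (x : (Fin d → ℝ) × ℝ) : ℝ :=
  (Nat.multinomial Finset.univ β : ℝ) * (∏ j, x.1 j ^ β j) * psi cf (∑ j, β j) (s * x.2)

lemma sigma_expand {d p : ℕ} (cf : Fin (p + 1) → ℝ) (s : ℝ) (z x : Fin d → ℝ) (t : ℝ) :
    ∑ k : Fin (p + 1), cf k * (∑ j, (s * z j) * x j + s * t) ^ (k : ℕ)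
      = ∑ β : multiIdx d p, s ^ (∑ j, β.1 j) * feat cf s β.1 (z, t) * ∏ j, x j ^ β.1 j := by
  rw [sigma_add]
  rw [Finset.sum_coe_sort (multiIdx d p)
    (fun β => s ^ (∑ j, β j) * feat cf s β (z, t) * ∏ j, x j ^ β j)]
  unfold multiIdx
  rw [Finset.sum_biUnion]
  · refine Finset.sum_congr rfl fun m _ => ?_
    rw [Finset.sum_pow_eq_sum_piAntidiag, Finset.sum_mul]
    refine Finset.sum_congr rfl fun β hβ => ?_
    have hβ' : ∑ j, β j = m := (Finset.mem_piAntidiag.1 hβ).1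
    simp only [feat, hβ']
    have h1 : ∏ i, (s * z i * x i) ^ β i
        = s ^ m * (∏ j, z j ^ β j) * ∏ j, x j ^ β j := by
      simp_rw [mul_pow]
      rw [Finset.prod_mul_distrib, Finset.prod_mul_distrib, Finset.prod_pow_eq_pow_sum, hβ']
    rw [h1]; ring
  · intro m _ n _ hmn
    rw [Function.onFun, Finset.disjoint_left]
    intro β h1 h2
    exact hmn ((Finset.mem_piAntidiag.1 h1).1.symm.trans (Finset.mem_piAntidiag.1 h2).1)

instance (d : ℕ) (v : NNReal) : IsProbabilityMeasure (featMeas d v) := by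
  unfold featMeas; infer_instance

instance (d : ℕ) : IsProbabilityMeasure (gaussD d) := by
  unfold gaussD; infer_instance

instance featOpenPos (d : ℕ) : (featMeas d 1).IsOpenPosMeasure := by
  have : (gaussianReal 0 1).IsOpenPosMeasure :=
    (gaussianReal_absolutelyContinuous' 0 one_ne_zero).isOpenPosMeasure
  unfold featMeas; infer_instance

lemma allMom_fst (d : ℕ) (v : NNReal) (j : Fin d) :
    AllMom (featMeas d v) (fun x => x.1 j) := by
  have h1 : MeasurePreserving (fun x : (Fin d → ℝ) × ℝ => x.1 j) (featMeas d v)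
      (gaussianReal 0 v) :=
    (measurePreserving_eval (fun _ : Fin d => gaussianReal 0 v) j).comp measurePreserving_fst
  exact (allMom_gauss v).comp h1

lemma allMom_snd (d : ℕ) (v : NNReal) :
    AllMom (featMeas d v) (fun x => x.2) := by
  have h1 : MeasurePreserving (fun x : (Fin d → ℝ) × ℝ => x.2) (featMeas d v)
      (gaussianReal 0 v) := measurePreserving_snd
  exact (allMom_gauss v).comp h1

/-- Monomials in the random features. -/
def emon {d : ℕ} (β : Fin d → ℕ) (n : ℕ) (x : (Fin d → ℝ) × ℝ) : ℝ :=
  (∏ j, x.1 j ^ β j) * x.2 ^ n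

lemma allMom_emon {d : ℕ} (v : NNReal) (β : Fin d → ℕ) (n : ℕ) :
    AllMom (featMeas d v) (emon β n) :=
  (AllMom.prod _ fun j _ => (allMom_fst d v j).pow _).mul ((allMom_snd d v).pow n)

lemma feat_eq {d p : ℕ} (cf : Fin (p + 1) → ℝ) (s : ℝ) (β : Fin d → ℕ)
    (x : (Fin d → ℝ) × ℝ) : feat cf s β x =
      ∑ k : Fin (p + 1), ((Nat.multinomial Finset.univ β : ℝ) * cf k *
        ((k : ℕ).choose (∑ j, β j)) * s ^ ((k : ℕ) - ∑ j, β j)) *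
          emon β ((k : ℕ) - ∑ j, β j) x := by
  unfold feat psi emon
  rw [Finset.mul_sum]
  exact Finset.sum_congr rfl fun k _ => by rw [mul_pow]; ring

lemma allMom_feat {d p : ℕ} (cf : Fin (p + 1) → ℝ) (v : NNReal) (s : ℝ) (β : Fin d → ℕ) :
    AllMom (featMeas d v) (feat cf s β) := by
  have : feat cf s β = fun x => ∑ k : Fin (p + 1), ((Nat.multinomial Finset.univ β : ℝ) * cf k *
        ((k : ℕ).choose (∑ j, β j)) * s ^ ((k : ℕ) - ∑ j, β j)) *
          emon β ((k : ℕ) - ∑ j, β j) x := funext fun x => feat_eq cf s β x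
  rw [this]
  exact AllMom.sum _ fun k _ => (AllMom.const _).mul (allMom_emon v _ _)

noncomputable def momMat {d p : ℕ} (cf : Fin (p + 1) → ℝ) (s : ℝ) (β γ : Fin d → ℕ) : ℝ :=
  ∫ x, feat cf s β x * feat cf s γ x ∂(featMeas d 1)

lemma continuous_momMat {d p : ℕ} (cf : Fin (p + 1) → ℝ) (β γ : Fin d → ℕ) :
    Continuous fun s => momMat cf s β γ := by
  have : (fun s => momMat cf s β γ) = fun s => ∑ k : Fin (p + 1), ∑ l : Fin (p + 1),
      (((Nat.multinomial Finset.univ β : ℝ) * cf k *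
        ((k : ℕ).choose (∑ j, β j)) * s ^ ((k : ℕ) - ∑ j, β j)) *
      ((Nat.multinomial Finset.univ γ : ℝ) * cf l *
        ((l : ℕ).choose (∑ j, γ j)) * s ^ ((l : ℕ) - ∑ j, γ j))) *
        ∫ x, emon β ((k : ℕ) - ∑ j, β j) x * emon γ ((l : ℕ) - ∑ j, γ j) x
          ∂(featMeas d 1) := by
    funext s
    unfold momMat
    simp_rw [feat_eq, Finset.sum_mul_sum]
    have hint : ∀ k l : Fin (p + 1), Integrable (fun x =>
        emon β ((k : ℕ) - ∑ j, β j) x * emon γ ((l : ℕ) - ∑ j, γ j) x) (featMeas d 1) :=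
      fun k l => ((allMom_emon 1 _ _).mul (allMom_emon 1 _ _)).integrable
    simp_rw [mul_mul_mul_comm _ (emon _ _ _)]
    rw [integral_finsetSum]
    · refine Finset.sum_congr rfl fun k _ => ?_
      rw [integral_finsetSum]
      · refine Finset.sum_congr rfl fun l _ => ?_
        rw [integral_const_mul]
      · exact fun l _ => (hint k l).const_mul _
    · exact fun k _ => integrable_finsetSum _ fun l _ => (hint k l).const_mul _
  rw [this]
  fun_prop

lemma quad_eq {d p : ℕ} (cf : Fin (p + 1) → ℝ) (s : ℝ) (u : multiIdx d p → ℝ) :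
    ∑ β, ∑ γ, u β * u γ * momMat cf s β.1 γ.1
      = ∫ x, (∑ β : multiIdx d p, u β * feat cf s β.1 x) ^ 2 ∂(featMeas d 1) := by
  simp_rw [pow_two, Finset.sum_mul_sum, mul_mul_mul_comm]
  have hint : ∀ β γ : multiIdx d p, Integrable (fun x =>
      feat cf s β.1 x * feat cf s γ.1 x) (featMeas d 1) :=
    fun β γ => ((allMom_feat cf 1 _ _).mul (allMom_feat cf 1 _ _)).integrable
  rw [integral_finsetSum]
  · refine Finset.sum_congr rfl fun β _ => ?_
    rw [integral_finsetSum]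
    · refine Finset.sum_congr rfl fun γ _ => ?_
      rw [integral_const_mul]; rfl
    · exact fun γ _ => (hint β γ).const_mul _
  · exact fun β _ => integrable_finsetSum _ fun γ _ => (hint β γ).const_mul _

lemma continuous_feat {d p : ℕ} (cf : Fin (p + 1) → ℝ) (s : ℝ) (β : Fin d → ℕ) :
    Continuous (feat cf s β) := by
  unfold feat psi; fun_prop

lemma mon_indep {d p : ℕ} (c : multiIdx d p → ℝ)
    (h : ∀ z : Fin d → ℝ, ∑ β : multiIdx d p, c β * ∏ j, z j ^ β.1 j = 0) : c = 0 := by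
  classical
  set P : MvPolynomial (Fin d) ℝ :=
    ∑ β : multiIdx d p, MvPolynomial.monomial (Finsupp.equivFunOnFinite.symm β.1) (c β) with hP
  have hP0 : P = 0 := by
    apply MvPolynomial.funext
    intro z
    rw [map_zero, ← h z, hP, map_sum]
    refine Finset.sum_congr rfl fun β _ => ?_
    rw [MvPolynomial.eval_monomial, Finsupp.prod_fintype _ _ (by simp)]
    simp
  funext β
  have h1 : MvPolynomial.coeff (Finsupp.equivFunOnFinite.symm β.1) P = c β := by
    rw [hP, MvPolynomial.coeff_sum]
    simp only [MvPolynomial.coeff_monomial, EmbeddingLike.apply_eq_iff_eq]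
    rw [Finset.sum_eq_single β]
    · simp
    · intro γ _ hγ
      rw [if_neg (fun h => hγ (Subtype.ext h))]
    · simp
  rw [← h1, hP0]; simp

lemma quad_pos {d p : ℕ} (cf : Fin (p + 1) → ℝ) (hcf : ∀ k, cf k ≠ 0) (s : ℝ)
    (u : multiIdx d p → ℝ) (hu : u ≠ 0) :
    0 < ∑ β, ∑ γ, u β * u γ * momMat cf s β.1 γ.1 := by
  rw [quad_eq]
  refine lt_of_le_of_ne (integral_nonneg fun x => sq_nonneg _) fun h0 => hu ?_
  have hAM : AllMom (featMeas d 1) (fun x => ∑ β : multiIdx d p, u β * feat cf s β.1 x) :=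
    AllMom.sum _ fun β _ => (AllMom.const _).mul (allMom_feat cf 1 s β.1)
  have hae := (integral_eq_zero_iff_of_nonneg (fun x => sq_nonneg _)
    (hAM.pow 2).integrable).1 h0.symm
  have hcont : Continuous fun x : (Fin d → ℝ) × ℝ =>
      (∑ β : multiIdx d p, u β * feat cf s β.1 x) ^ 2 := by
    have := fun β : multiIdx d p => continuous_feat cf s β.1
    fun_prop
  have hz := Continuous.ae_eq_iff_eq (featMeas d 1) hcont continuous_zero |>.1 hae
  have hall : ∀ z : Fin d → ℝ, ∑ β : multiIdx d p,
      (u β * ((Nat.multinomial Finset.univ β.1 : ℝ) * psi cf (∑ j, β.1 j) 0)) *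
        ∏ j, z j ^ β.1 j = 0 := by
    intro z
    have := congrFun hz (z, 0)
    simp only [Pi.zero_apply] at this
    have := pow_eq_zero_iff (two_ne_zero) |>.1 this
    refine Eq.trans ?_ this
    refine Finset.sum_congr rfl fun β _ => ?_
    simp only [feat, mul_zero]; ring
  have hc := mon_indep _ hall
  funext β
  have hβ := congrFun hc β
  have h1 : psi cf (∑ j, β.1 j) 0 ≠ 0 := by
    have := psi_zero cf ⟨∑ j, β.1 j, Nat.lt_succ_of_le (mem_multiIdx.1 β.2)⟩
    simp only at this
    rw [this]; exact hcf _
  have h2 : (Nat.multinomial Finset.univ β.1 : ℝ) ≠ 0 := by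
    exact_mod_cast (Nat.multinomial_pos _ _).ne'
  simpa [h1, h2] using hβ

lemma quad_lower {d p : ℕ} (cf : Fin (p + 1) → ℝ) (hcf : ∀ k, cf k ≠ 0) (S : ℝ) :
    ∃ l > 0, ∀ s ∈ Set.Icc 0 S, ∀ u : multiIdx d p → ℝ,
      l * ∑ β, u β ^ 2 ≤ ∑ β, ∑ γ, u β * u γ * momMat cf s β.1 γ.1 := by
  set q : ℝ × (multiIdx d p → ℝ) → ℝ :=
    fun r => ∑ β, ∑ γ, r.2 β * r.2 γ * momMat cf r.1 β.1 γ.1 with hq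
  have hqc : Continuous q := by
    have := fun β γ : multiIdx d p => continuous_momMat cf β.1 γ.1
    have := fun β γ : multiIdx d p =>
      (this β γ).comp (continuous_fst (X := ℝ) (Y := multiIdx d p → ℝ))
    simp only [Function.comp_def] at this
    fun_prop
  have hsph : IsCompact {u : multiIdx d p → ℝ | ∑ β, u β ^ 2 = 1} := by
    refine Metric.isCompact_of_isClosed_isBounded
      (isClosed_eq (by fun_prop) continuous_const) ?_
    refine (Metric.isBounded_iff_subset_closedBall 0).2 ⟨1, ?_⟩
    intro a ha
    rw [mem_closedBall_zero_iff, pi_norm_le_iff_of_nonneg zero_le_one]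
    intro i
    rw [Real.norm_eq_abs, ← sq_le_one_iff_abs_le_one]
    rw [← (show ∑ β, a β ^ 2 = 1 from ha)]
    exact Finset.single_le_sum (f := fun i => a i ^ 2) (fun i _ => sq_nonneg _)
      (Finset.mem_univ i)
  have hK := (isCompact_Icc (a := (0 : ℝ)) (b := S)).prod hsph
  have key : ∃ l > 0, ∀ s ∈ Set.Icc 0 S, ∀ u : multiIdx d p → ℝ, ∑ β, u β ^ 2 = 1 →
      l ≤ q (s, u) := by
    by_cases hne : (Set.Icc (0 : ℝ) S ×ˢ {u : multiIdx d p → ℝ | ∑ β, u β ^ 2 = 1}).Nonempty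
    · obtain ⟨r, hr, hmin⟩ := hK.exists_isMinOn hne hqc.continuousOn
      refine ⟨q r, quad_pos cf hcf r.1 r.2 ?_, fun s hs u hu => hmin ⟨hs, hu⟩⟩
      intro h0
      have : ∑ β, r.2 β ^ 2 = 1 := hr.2
      rw [h0] at this
      simp at this
    · exact ⟨1, one_pos, fun s hs u hu => absurd ⟨(s, u), hs, hu⟩ hne⟩
  obtain ⟨l, hl, hk⟩ := key
  refine ⟨l, hl, fun s hs u => ?_⟩
  set P := ∑ β, u β ^ 2 with hP
  have hPn : 0 ≤ P := Finset.sum_nonneg fun _ _ => sq_nonneg _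
  rcases hPn.eq_or_lt with h | h
  · rw [← h, mul_zero, quad_eq]; exact integral_nonneg fun x => sq_nonneg _
  · have h1 := hk s hs (fun β => u β / Real.sqrt P) (by
      simp_rw [div_pow, Real.sq_sqrt hPn]
      rw [← Finset.sum_div, ← hP, div_self h.ne'])
    have h2 : q (s, fun β => u β / Real.sqrt P)
        = (∑ β, ∑ γ, u β * u γ * momMat cf s β.1 γ.1) / P := by
      simp only [hq]
      rw [Finset.sum_div]
      refine Finset.sum_congr rfl fun β _ => ?_
      rw [Finset.sum_div]
      refine Finset.sum_congr rfl fun γ _ => ?_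
      rw [div_mul_div_comm, Real.mul_self_sqrt hPn]; ring
    rw [h2, le_div_iff₀ h] at h1
    exact h1

lemma event_prob {d p : ℕ} (cf : Fin (p + 1) → ℝ) (hcf : ∀ k, cf k ≠ 0) (S : ℝ) :
    ∃ l > 0, ∃ L > 0, ∀ s ∈ Set.Icc 0 S, ∀ η : ℝ, 0 < η → ∃ N₀ : ℕ, ∀ N : ℕ, N₀ ≤ N →
      ENNReal.ofReal (1 - η) ≤ (Measure.pi fun _ : Fin N => featMeas d 1)
        {ω | (∀ u : multiIdx d p → ℝ, l * ∑ β, u β ^ 2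
            ≤ (1 / (N : ℝ)) * ∑ i, (∑ β, u β * feat cf s β.1 (ω i)) ^ 2) ∧
          ∑ β : multiIdx d p, (1 / (N : ℝ)) *
            ∑ i, feat cf s β.1 (ω i) * feat cf s β.1 (ω i) ≤ L} := by
  obtain ⟨l, hl, hlow⟩ := quad_lower (d := d) cf hcf S
  have htr : ∃ L : ℝ, ∀ s ∈ Set.Icc 0 S, ∑ β : multiIdx d p, momMat cf s β.1 β.1 ≤ L := by
    have hc : Continuous fun s => ∑ β : multiIdx d p, momMat cf s β.1 β.1 := by
      have := fun β : multiIdx d p => continuous_momMat cf β.1 β.1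
      fun_prop
    obtain ⟨L, hL⟩ := (isCompact_Icc (a := (0 : ℝ)) (b := S)).bddAbove_image hc.continuousOn
    exact ⟨L, fun s hs => hL ⟨s, hs, rfl⟩⟩
  obtain ⟨L, hL⟩ := htr
  set D : ℝ := ((Fintype.card (multiIdx d p) : ℕ) : ℝ) with hD
  have hDn : 0 ≤ D := Nat.cast_nonneg _
  set t : ℝ := l / (2 * (D + 1)) with ht
  have htpos : 0 < t := by positivity
  refine ⟨l / 2, by positivity, |L| + D * t + 1, by positivity, fun s hs η hη => ?_⟩
  obtain ⟨N₀, hN₀⟩ := wlln_matrix (featMeas d 1) (fun β : multiIdx d p => feat cf s β.1)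
    (fun β => allMom_feat cf 1 s β.1) t η htpos hη
  refine ⟨N₀, fun N hN => (hN₀ N hN).trans (measure_mono ?_)⟩
  intro ω hω
  simp only [Set.mem_ofPred_eq] at hω
  refine ⟨fun u => ?_, ?_⟩
  · have e1 : (1 / (N : ℝ)) * ∑ i, (∑ β, u β * feat cf s β.1 (ω i)) ^ 2
        = ∑ β, ∑ γ, u β * u γ *
          ((1 / (N : ℝ)) * ∑ i, feat cf s β.1 (ω i) * feat cf s γ.1 (ω i)) := by
      simp_rw [pow_two, Finset.sum_mul_sum, Finset.mul_sum]
      rw [Finset.sum_comm]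
      refine Finset.sum_congr rfl fun β _ => ?_
      rw [Finset.sum_comm]
      refine Finset.sum_congr rfl fun γ _ => ?_
      refine Finset.sum_congr rfl fun i _ => by ring
    have e2 : ∑ β, ∑ γ, u β * u γ * momMat cf s β.1 γ.1 - ∑ β, ∑ γ, u β * u γ *
          ((1 / (N : ℝ)) * ∑ i, feat cf s β.1 (ω i) * feat cf s γ.1 (ω i))
        ≤ ∑ β, ∑ γ, |u β| * |u γ| * t := by
      rw [← Finset.sum_sub_distrib]
      refine Finset.sum_le_sum fun β _ => ?_
      rw [← Finset.sum_sub_distrib]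
      refine Finset.sum_le_sum fun γ _ => ?_
      rw [← mul_sub, ← abs_mul]
      refine (le_abs_self _).trans ?_
      rw [abs_mul, abs_sub_comm]
      exact mul_le_mul_of_nonneg_left (hω β γ) (abs_nonneg _)
    have e3 : ∑ β, ∑ γ, |u β| * |u γ| * t ≤ D * t * ∑ β, u β ^ 2 := by
      simp_rw [← Finset.sum_mul]
      rw [← Finset.sum_mul_sum, ← pow_two]
      have := sq_sum_le_card_mul_sum_sq (s := Finset.univ) (f := fun β => |u β|)
      simp only [sq_abs, Finset.card_univ] at this
      nlinarith
    have e4 : D * t ≤ l / 2 := by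
      rw [ht, mul_div_assoc', div_le_div_iff₀ (by positivity) (by positivity)]
      nlinarith
    have hPn : 0 ≤ ∑ β, u β ^ 2 := Finset.sum_nonneg fun _ _ => sq_nonneg _
    have e5 := hlow s hs u
    rw [e1]
    nlinarith [mul_le_mul_of_nonneg_right e4 hPn]
  · have e1 : ∑ β : multiIdx d p, (1 / (N : ℝ)) *
            ∑ i, feat cf s β.1 (ω i) * feat cf s β.1 (ω i)
        ≤ ∑ β : multiIdx d p, (momMat cf s β.1 β.1 + t) := by
      refine Finset.sum_le_sum fun β _ => ?_
      have := (abs_le.1 (hω β β)).2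
      unfold momMat
      linarith
    rw [Finset.sum_add_distrib, Finset.sum_const, Finset.card_univ, nsmul_eq_mul] at e1
    have := hL s hs
    have := le_abs_self L
    linarith

/-! ### Scaling and assembly -/

/-- Scaling of all features. -/
def scaleF {d N : ℕ} (s : ℝ) (ω : Fin N → (Fin d → ℝ) × ℝ) : Fin N → (Fin d → ℝ) × ℝ :=
  fun i => (fun j => s * (ω i).1 j, s * (ω i).2)

lemma scale_meas (d N : ℕ) (ε : ℝ) (hε : 0 < ε) (E : Set (Fin N → (Fin d → ℝ) × ℝ)) :
    (Measure.pi fun _ : Fin N => featMeas d 1) (scaleF (Real.sqrt ε) ⁻¹' E)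
      ≤ (Measure.pi fun _ : Fin N => featMeas d ε.toNNReal) E := by
  have h0 : MeasurePreserving (fun x : ℝ => Real.sqrt ε * x) (gaussianReal 0 1)
      (gaussianReal 0 ε.toNNReal) := by
    refine ⟨by fun_prop, ?_⟩
    have := gaussianReal_map_const_mul (μ := 0) (v := 1) (Real.sqrt ε)
    rw [this, mul_zero]
    congr 1
    ext
    simp [Real.sq_sqrt hε.le, hε.le]
  have h1 : MeasurePreserving (fun x : (Fin d → ℝ) × ℝ =>
      ((fun j => Real.sqrt ε * x.1 j), Real.sqrt ε * x.2)) (featMeas d 1)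
      (featMeas d ε.toNNReal) := by
    have h2 := measurePreserving_pi (fun _ : Fin d => gaussianReal 0 1)
      (fun _ : Fin d => gaussianReal 0 ε.toNNReal) (fun _ => h0)
    exact h2.prod h0
  have h3 : MeasurePreserving (scaleF (d := d) (N := N) (Real.sqrt ε))
      (Measure.pi fun _ : Fin N => featMeas d 1)
      (Measure.pi fun _ : Fin N => featMeas d ε.toNNReal) :=
    measurePreserving_pi (fun _ : Fin N => featMeas d 1)
      (fun _ : Fin N => featMeas d ε.toNNReal) (fun _ => h1)
  rw [← h3.map_eq]
  exact Measure.le_map_apply h3.measurable.aemeasurable E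

lemma fRF_scale {d p N : ℕ} (cf : Fin (p + 1) → ℝ) (σ : ℝ → ℝ)
    (hσ : ∀ y, σ y = ∑ k : Fin (p + 1), cf k * y ^ (k : ℕ)) (s : ℝ)
    (ω : Fin N → (Fin d → ℝ) × ℝ) (a : Fin N → ℝ) (x : Fin d → ℝ) :
    fRF d N σ (scaleF s ω) a x = ∑ β : multiIdx d p,
      (s ^ (∑ j, β.1 j) * ((1 / Real.sqrt N) * ∑ i, a i * feat cf s β.1 (ω i))) *
        ∏ j, x j ^ β.1 j := by
  unfold fRF scaleF
  simp only [hσ]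
  simp_rw [sigma_expand, Finset.mul_sum, Finset.sum_mul]
  rw [Finset.sum_comm]
  refine Finset.sum_congr rfl fun β _ => Finset.sum_congr rfl fun i _ => by ring

lemma eval_multiIdx {d p : ℕ} (G : MvPolynomial (Fin d) ℝ) (hG : G.totalDegree ≤ p)
    (x : Fin d → ℝ) : MvPolynomial.eval x G = ∑ β : multiIdx d p,
      G.coeff (Finsupp.equivFunOnFinite.symm β.1) * ∏ j, x j ^ β.1 j := by
  classical
  rw [MvPolynomial.eval_eq', Finset.sum_coe_sort (multiIdx d p)
    (fun β => G.coeff (Finsupp.equivFunOnFinite.symm β) * ∏ j, x j ^ β j)]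
  have hsub : G.support ⊆ (multiIdx d p).map Finsupp.equivFunOnFinite.symm.toEmbedding := by
    intro m hm
    rw [Finset.mem_map]
    refine ⟨m, ?_, by simp⟩
    rw [mem_multiIdx]
    have := MvPolynomial.le_totalDegree hm
    rw [Finsupp.sum_fintype _ _ (by simp)] at this
    exact this.trans hG
  rw [Finset.sum_subset hsub, Finset.sum_map]
  · simp
  · intro m _ hm
    rw [MvPolynomial.notMem_support_iff.1 hm, zero_mul]

lemma interp_exists {d p N : ℕ} (cf : Fin (p + 1) → ℝ) (σ : ℝ → ℝ)
    (hσ : ∀ y, σ y = ∑ k : Fin (p + 1), cf k * y ^ (k : ℕ)) (s : ℝ) (hs : 0 < s)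
    (F G : MvPolynomial (Fin d) ℝ) (hG : G.totalDegree ≤ p) (U : Set (Fin d → ℝ))
    (hGF : ∀ x ∈ Uᶜ, MvPolynomial.eval x G = MvPolynomial.eval x F)
    (ω : Fin N → (Fin d → ℝ) × ℝ) (l : ℝ) (hl : 0 < l)
    (hlow : ∀ u : multiIdx d p → ℝ, l * ∑ β, u β ^ 2
            ≤ (1 / (N : ℝ)) * ∑ i, (∑ β, u β * feat cf s β.1 (ω i)) ^ 2) :
    ∃ a ∈ interpSet d N σ U F (scaleF s ω), ∑ i, a i ^ 2 ≤ l⁻¹ * ∑ β : multiIdx d p,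
      ((s ^ (∑ j, β.1 j))⁻¹ * G.coeff (Finsupp.equivFunOnFinite.symm β.1)) ^ 2 := by
  obtain ⟨a, ha, hab⟩ := aux_lower N (fun i (β : multiIdx d p) => feat cf s β.1 (ω i)) l hl hlow
    (fun β => (s ^ (∑ j, β.1 j))⁻¹ * G.coeff (Finsupp.equivFunOnFinite.symm β.1))
  refine ⟨a, fun x hx => ?_, hab⟩
  rw [fRF_scale cf σ hσ, ← hGF x hx, eval_multiIdx G hG]
  refine Finset.sum_congr rfl fun β _ => ?_
  rw [ha β, mul_inv_cancel_left₀ (pow_pos hs _).ne']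

lemma interp_minnorm {d N : ℕ} (σ : ℝ → ℝ) (U : Set (Fin d → ℝ)) (F : MvPolynomial (Fin d) ℝ)
    (ω : Fin N → (Fin d → ℝ) × ℝ) (hne : (interpSet d N σ U F ω).Nonempty) :
    ∃ astar ∈ interpSet d N σ U F ω,
      (∀ a ∈ interpSet d N σ U F ω, ∑ i, astar i ^ 2 ≤ ∑ i, a i ^ 2) ∧
      (∀ a ∈ interpSet d N σ U F ω,
        (∀ a' ∈ interpSet d N σ U F ω, ∑ i, a i ^ 2 ≤ ∑ i, a' i ^ 2) → a = astar) := by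
  refine aux_minnorm _ ?_ ?_ hne
  · have : interpSet d N σ U F ω
        = ⋂ x ∈ Uᶜ, {a | fRF d N σ ω a x = MvPolynomial.eval x F} := by
      ext a; simp only [Set.mem_iInter]; rfl
    rw [this]
    refine isClosed_biInter fun x _ => isClosed_eq ?_ continuous_const
    unfold fRF; fun_prop
  · intro a ha b hb x hx
    have h1 := ha x hx
    have h2 := hb x hx
    have h3 : fRF d N σ ω (fun i => (a i + b i) / 2) x
        = (fRF d N σ ω a x + fRF d N σ ω b x) / 2 := by
      unfold fRF
      rw [← mul_add, ← Finset.sum_add_distrib, mul_div_assoc, Finset.sum_div]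
      congr 1
      exact Finset.sum_congr rfl fun i _ => by ring
    rw [h3, h1, h2]; ring

lemma allMom_mon {d : ℕ} (β : Fin d → ℕ) : AllMom (gaussD d) (fun x => ∏ j, x j ^ β j) := by
  refine AllMom.prod _ fun j _ => AllMom.pow ?_ _
  exact (allMom_gauss 1).comp (measurePreserving_eval (fun _ : Fin d => gaussianReal 0 1) j)

noncomputable def monC (d p : ℕ) : ℝ :=
  ∫ x, ∑ β : multiIdx d p, (∏ j, x j ^ β.1 j) ^ 2 ∂(gaussD d)

lemma monC_nonneg (d p : ℕ) : 0 ≤ monC d p :=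
  integral_nonneg fun _ => Finset.sum_nonneg fun _ _ => sq_nonneg _

lemma poly_l2 {d p : ℕ} (r : multiIdx d p → ℝ) :
    ∫ x, (∑ β : multiIdx d p, r β * ∏ j, x j ^ β.1 j) ^ 2 ∂(gaussD d)
      ≤ (∑ β, r β ^ 2) * monC d p := by
  unfold monC
  rw [← integral_const_mul]
  refine integral_mono ?_ ?_ fun x => ?_
  · exact ((AllMom.sum _ fun β _ => (AllMom.const _).mul (allMom_mon β.1)).pow 2).integrable
  · exact ((AllMom.const _).mul (AllMom.sum _ fun β _ => (allMom_mon β.1).pow 2)).integrable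
  · exact Finset.sum_mul_sq_le_sq_mul_sq Finset.univ r (fun β => ∏ j, x j ^ β.1 j)

lemma min_spec {d p : ℕ} (U : Set (Fin d → ℝ)) (F : MvPolynomial (Fin d) ℝ)
    (hF : F.totalDegree ≤ p) : ∃ G : MvPolynomial (Fin d) ℝ, G.totalDegree ≤ p ∧
    (∀ x ∈ Uᶜ, MvPolynomial.eval x G = MvPolynomial.eval x F) ∧
      G.totalDegree = minInterpDeg d p U F := by
  have : minInterpDeg d p U F ∈ {k : ℕ | ∃ G : MvPolynomial (Fin d) ℝ, G.totalDegree ≤ p ∧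
    (∀ x ∈ Uᶜ, MvPolynomial.eval x G = MvPolynomial.eval x F) ∧ G.totalDegree = k} :=
    Nat.sInf_mem ⟨_, F, hF, fun _ _ => rfl, rfl⟩
  exact this

lemma core {d p N : ℕ} (cf : Fin (p + 1) → ℝ) (σ : ℝ → ℝ)
    (hσ : ∀ y, σ y = ∑ k : Fin (p + 1), cf k * y ^ (k : ℕ)) (s : ℝ) (hs : 0 < s) (hs1 : s ≤ 1)
    (F G : MvPolynomial (Fin d) ℝ) (hG : G.totalDegree ≤ p) (U : Set (Fin d → ℝ))
    (hGF : ∀ x ∈ Uᶜ, MvPolynomial.eval x G = MvPolynomial.eval x F)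
    (ω : Fin N → (Fin d → ℝ) × ℝ) (l L : ℝ) (hl : 0 < l) (hL : 0 < L)
    (hlow : ∀ u : multiIdx d p → ℝ, l * ∑ β, u β ^ 2
            ≤ (1 / (N : ℝ)) * ∑ i, (∑ β, u β * feat cf s β.1 (ω i)) ^ 2)
    (hup : ∑ β : multiIdx d p, (1 / (N : ℝ)) *
            ∑ i, feat cf s β.1 (ω i) * feat cf s β.1 (ω i) ≤ L)
    (astar : Fin N → ℝ)
    (hmin : ∀ a ∈ interpSet d N σ U F (scaleF s ω), ∑ i, astar i ^ 2 ≤ ∑ i, a i ^ 2) :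
    ∃ h : MvPolynomial (Fin d) ℝ, h.totalDegree ≤ G.totalDegree ∧
      ∫ x, (fRF d N σ (scaleF s ω) astar x - MvPolynomial.eval x h) ^ 2 ∂(gaussD d)
        ≤ s ^ 2 * (L * (l⁻¹ * ∑ β : multiIdx d p,
          G.coeff (Finsupp.equivFunOnFinite.symm β.1) ^ 2)) * monC d p := by
  classical
  obtain ⟨a, ha, hab⟩ := interp_exists cf σ hσ s hs F G hG U hGF ω l hl hlow
  set q := G.totalDegree with hq
  set y : multiIdx d p → ℝ := fun β => (1 / Real.sqrt N) * ∑ i, astar i * feat cf s β.1 (ω i)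
    with hy
  set g : multiIdx d p → ℝ := fun β => G.coeff (Finsupp.equivFunOnFinite.symm β.1) with hg
  have hspos : ∀ n : ℕ, 0 < s ^ n := fun n => pow_pos hs n
  -- bound on the target
  have b1 : ∑ β : multiIdx d p, ((s ^ (∑ j, β.1 j))⁻¹ * g β) ^ 2
      ≤ ((s ^ q)⁻¹) ^ 2 * ∑ β, g β ^ 2 := by
    rw [Finset.mul_sum]
    refine Finset.sum_le_sum fun β _ => ?_
    rw [mul_pow]
    by_cases hβ : ∑ j, β.1 j ≤ q
    · refine mul_le_mul_of_nonneg_right ?_ (sq_nonneg _)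
      refine pow_le_pow_left₀ (inv_nonneg.2 (hspos _).le) ?_ 2
      exact inv_anti₀ (hspos _) (pow_le_pow_of_le_one hs.le hs1 hβ)
    · have : g β = 0 := by
        by_contra hne
        have h1 := MvPolynomial.le_totalDegree (MvPolynomial.mem_support_iff.2 hne)
        rw [Finsupp.sum_fintype _ _ (by simp)] at h1
        exact hβ h1
      simp [this]
  have b2 : ∑ β, y β ^ 2 ≤ L * (l⁻¹ * (((s ^ q)⁻¹) ^ 2 * ∑ β, g β ^ 2)) := by
    have h1 := aux_upper N (fun i (β : multiIdx d p) => feat cf s β.1 (ω i)) astar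
    have hA : 0 ≤ ∑ i, astar i ^ 2 := Finset.sum_nonneg fun _ _ => sq_nonneg _
    calc ∑ β, y β ^ 2 ≤ _ := h1
      _ ≤ (∑ i, astar i ^ 2) * L := mul_le_mul_of_nonneg_left hup hA
      _ = L * ∑ i, astar i ^ 2 := mul_comm _ _
      _ ≤ L * (l⁻¹ * ∑ β : multiIdx d p, ((s ^ (∑ j, β.1 j))⁻¹ * g β) ^ 2) :=
          mul_le_mul_of_nonneg_left ((hmin a ha).trans hab) hL.le
      _ ≤ _ := mul_le_mul_of_nonneg_left
          (mul_le_mul_of_nonneg_left b1 (inv_nonneg.2 hl.le)) hL.le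
  set r : multiIdx d p → ℝ := fun β => if ∑ j, β.1 j ≤ q then 0 else s ^ (∑ j, β.1 j) * y β
    with hr
  have b3 : ∑ β, r β ^ 2 ≤ s ^ 2 * (L * (l⁻¹ * ∑ β, g β ^ 2)) := by
    have h1 : ∑ β, r β ^ 2 ≤ (s ^ (q + 1)) ^ 2 * ∑ β, y β ^ 2 := by
      rw [Finset.mul_sum]
      refine Finset.sum_le_sum fun β _ => ?_
      simp only [hr]
      split_ifs with hβ
      · rw [zero_pow two_ne_zero]; positivity
      · rw [mul_pow]
        refine mul_le_mul_of_nonneg_right ?_ (sq_nonneg _)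
        refine pow_le_pow_left₀ (hspos _).le ?_ 2
        exact pow_le_pow_of_le_one hs.le hs1 (by omega)
    refine h1.trans ((mul_le_mul_of_nonneg_left b2 (sq_nonneg _)).trans (le_of_eq ?_))
    have := (hspos q).ne'
    field_simp
    ring
  refine ⟨∑ β : multiIdx d p, if ∑ j, β.1 j ≤ q then
    MvPolynomial.monomial (Finsupp.equivFunOnFinite.symm β.1) (s ^ (∑ j, β.1 j) * y β) else 0,
    ?_, ?_⟩
  · refine MvPolynomial.totalDegree_finsetSum_le fun β _ => ?_
    split_ifs with hβ
    · refine (MvPolynomial.totalDegree_monomial_le _ _).trans ?_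
      rw [Finsupp.sum_fintype _ _ (by simp)]
      simpa using hβ
    · simp
  · have e : ∀ x : Fin d → ℝ, fRF d N σ (scaleF s ω) astar x - MvPolynomial.eval x
        (∑ β : multiIdx d p, if ∑ j, β.1 j ≤ q then
          MvPolynomial.monomial (Finsupp.equivFunOnFinite.symm β.1) (s ^ (∑ j, β.1 j) * y β)
          else 0) = ∑ β : multiIdx d p, r β * ∏ j, x j ^ β.1 j := by
      intro x
      rw [fRF_scale cf σ hσ, map_sum, ← Finset.sum_sub_distrib]
      refine Finset.sum_congr rfl fun β _ => ?_
      simp only [hr]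
      split_ifs with hβ
      · rw [MvPolynomial.eval_monomial, Finsupp.prod_fintype _ _ (by simp)]
        simp [hy]
      · simp [hy]
    simp_rw [e]
    exact (poly_l2 r).trans (mul_le_mul_of_nonneg_right b3 (monC_nonneg d p))

/-- GOTU for random features in the small features regime.
(i) For every ε > 0 and η > 0, for all large enough N, with probability ≥ 1 − η the
interpolation set A is nonempty. (ii) For all δ, η > 0 there is ε₀ > 0 such that for all
ε ∈ (0, ε₀) and all large enough N, with probability ≥ 1 − η the set A is nonempty, has a
unique element `a*` of minimal Euclidean norm, and the `L²(γ_d)` distance of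
`x ↦ f_RF(a*; x)` to `Π_{p*}(ℝ^d)` is at most δ. -/
theorem stmt0 (d p : ℕ) (hd : 1 ≤ d) (hp : 1 ≤ p)
    (σ : ℝ → ℝ) (cf : Fin (p + 1) → ℝ) (hcf : ∀ k, cf k ≠ 0)
    (hσ : ∀ y, σ y = ∑ k : Fin (p + 1), cf k * y ^ (k : ℕ))
    (F : MvPolynomial (Fin d) ℝ) (hF : F.totalDegree ≤ p)
    (U : Set (Fin d → ℝ)) (hU : U ≠ Set.univ) :
    -- (i)
    (∀ ε : ℝ, 0 < ε → ∀ η : ℝ, 0 < η → ∃ N₀ : ℕ, ∀ N : ℕ, N₀ ≤ N →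
      ENNReal.ofReal (1 - η) ≤
        (Measure.pi fun _ : Fin N => featMeas d ε.toNNReal)
          {ω | (interpSet d N σ U F ω).Nonempty}) ∧
    -- (ii)
    (∀ δ : ℝ, 0 < δ → ∀ η : ℝ, 0 < η → ∃ ε₀ > (0 : ℝ), ∀ ε : ℝ, 0 < ε → ε < ε₀ →
      ∃ N₀ : ℕ, ∀ N : ℕ, N₀ ≤ N →
        ENNReal.ofReal (1 - η) ≤
          (Measure.pi fun _ : Fin N => featMeas d ε.toNNReal)
            {ω | ∃ astar ∈ interpSet d N σ U F ω,
              (∀ a ∈ interpSet d N σ U F ω, ∑ i, astar i ^ 2 ≤ ∑ i, a i ^ 2) ∧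
              (∀ a ∈ interpSet d N σ U F ω,
                (∀ a' ∈ interpSet d N σ U F ω, ∑ i, a i ^ 2 ≤ ∑ i, a' i ^ 2) →
                a = astar) ∧
              ∃ h : MvPolynomial (Fin d) ℝ, h.totalDegree ≤ minInterpDeg d p U F ∧
                Real.sqrt (∫ x, (fRF d N σ ω astar x - MvPolynomial.eval x h) ^ 2
                    ∂(gaussD d)) ≤ δ}) := by
  constructor
  · intro ε hε η hη
    have hs : 0 < Real.sqrt ε := Real.sqrt_pos.2 hε
    obtain ⟨l, hl, L, hL, H⟩ := event_prob (d := d) cf hcf (Real.sqrt ε)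
    obtain ⟨N₀, hN₀⟩ := H (Real.sqrt ε) ⟨hs.le, le_refl _⟩ η hη
    refine ⟨N₀, fun N hN => ?_⟩
    refine (hN₀ N hN).trans (le_trans (measure_mono ?_) (scale_meas d N ε hε _))
    rintro ω ⟨h1, -⟩
    obtain ⟨a, ha, -⟩ := interp_exists cf σ hσ _ hs F F hF U (fun _ _ => rfl) ω l hl h1
    exact ⟨a, ha⟩
  · intro δ hδ η hη
    obtain ⟨l, hl, L, hL, H⟩ := event_prob (d := d) cf hcf 1
    obtain ⟨G, hG, hGF, hGd⟩ := min_spec U F hF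
    set K := (L * (l⁻¹ * ∑ β : multiIdx d p,
          G.coeff (Finsupp.equivFunOnFinite.symm β.1) ^ 2)) * monC d p with hK
    have hKn : 0 ≤ K := by
      have := monC_nonneg d p
      positivity
    refine ⟨min 1 (δ ^ 2 / (K + 1)), by positivity, fun ε hε hε0 => ?_⟩
    have hs : 0 < Real.sqrt ε := Real.sqrt_pos.2 hε
    have hε1 : ε ≤ 1 := (hε0.trans_le (min_le_left _ _)).le
    have hs1 : Real.sqrt ε ≤ 1 := Real.sqrt_le_one.2 hε1
    have hε2 : ε * K ≤ δ ^ 2 := by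
      have := hε0.trans_le (min_le_right _ _)
      rw [lt_div_iff₀ (by positivity)] at this
      nlinarith
    obtain ⟨N₀, hN₀⟩ := H (Real.sqrt ε) ⟨hs.le, hs1⟩ η hη
    refine ⟨N₀, fun N hN => ?_⟩
    refine (hN₀ N hN).trans (le_trans (measure_mono ?_) (scale_meas d N ε hε _))
    rintro ω ⟨h1, h2⟩
    obtain ⟨a, ha, -⟩ := interp_exists cf σ hσ _ hs F F hF U (fun _ _ => rfl) ω l hl h1
    obtain ⟨b, hb, hbmin, hbu⟩ := interp_minnorm σ U F (scaleF (Real.sqrt ε) ω) ⟨a, ha⟩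
    obtain ⟨h, hh, hint⟩ := core cf σ hσ _ hs hs1 F G hG U hGF ω l L hl hL h1 h2 b hbmin
    refine ⟨b, hb, hbmin, hbu, h, hGd ▸ hh, ?_⟩
    refine Real.sqrt_le_iff.2 ⟨hδ.le, hint.trans ?_⟩
    rw [mul_assoc, Real.sq_sqrt hε.le]
    exact hε2
end

section
/- Fix integers d ≥ 1 and p ≥ 1, let σ satisfy Assumption A, and fix ε > 0. Let (w_i, b_i)_{i ≥ 1} be i.i.d. with w_i ∼ N(0, ε I_d) and b_i ∼ N(0, ε) independent. Then for every η > 0 there exists N₀ ∈ ℕ such that for all N ≥ N₀, with probability at least 1 − η, the linear span of the functions x ↦ σ(⟨w_i, x⟩ + b_i), i = 1, …, N, is equal to Π_p(ℝ^d). (The span is always contained in Π_p(ℝ^d) since σ is a polynomial of degree p.) -/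
open MeasureTheory ProbabilityTheory

lemma aux_poly_ae (μ : Measure ℝ) [NullSingletonClass μ] (q : Polynomial ℝ) (hq : q ≠ 0) :
    ∀ᵐ y ∂μ, q.eval y ≠ 0 := by
  have h : {y : ℝ | q.eval y = 0}.Finite := by
    refine (q.roots.toFinset.finite_toSet).subset ?_
    intro y hy
    simpa [hq] using hy
  have h2 : μ {y : ℝ | q.eval y = 0} = 0 := h.measure_zero μ
  rw [ae_iff]
  simpa using h2

lemma aux_mvpoly_ae (μ : Measure ℝ) [IsProbabilityMeasure μ] [NullSingletonClass μ] (n : ℕ) :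
    ∀ P : MvPolynomial (Fin n) ℝ, P ≠ 0 →
      ∀ᵐ x ∂(Measure.pi fun _ : Fin n => μ), MvPolynomial.eval x P ≠ 0 := by
  induction n with
  | zero =>
    intro P hP
    refine Filter.Eventually.of_forall fun x => ?_
    rw [MvPolynomial.eq_C_of_isEmpty P] at hP ⊢
    intro h
    apply hP
    rw [MvPolynomial.eval_C] at h
    rw [h, MvPolynomial.C_0]
  | succ n ih =>
    intro P hP
    have hmp := measurePreserving_piFinSuccAbove (fun _ : Fin (n + 1) => μ) 0
    have key : ∀ᵐ z ∂(μ.prod (Measure.pi fun _ : Fin n => μ)),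
        MvPolynomial.eval (Fin.cons z.1 z.2 : Fin (n + 1) → ℝ) P ≠ 0 := by
      have hm : MeasurableSet {z : ℝ × (Fin n → ℝ) |
          MvPolynomial.eval (Fin.cons z.1 z.2 : Fin (n + 1) → ℝ) P ≠ 0} := by
        have hc : Continuous fun z : ℝ × (Fin n → ℝ) =>
            MvPolynomial.eval (Fin.cons z.1 z.2 : Fin (n + 1) → ℝ) P := by
          refine (MvPolynomial.continuous_eval P).comp ?_
          exact Continuous.finCons (by fun_prop) (by fun_prop)
        exact (isOpen_ne.preimage hc).measurableSet
      rw [Measure.ae_prod_iff_ae_ae hm]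
      rw [Measure.ae_ae_comm hm]
      set q := MvPolynomial.finSuccEquiv ℝ n P with hq
      have hq0 : q ≠ 0 := by
        rw [hq]; simpa using hP
      filter_upwards [ih q.leadingCoeff (by simpa using hq0)] with s hs
      have : Polynomial.map (MvPolynomial.eval s) q ≠ 0 := by
        intro h0
        apply hs
        have := congrArg (fun r => r.coeff q.natDegree) h0
        simpa using this
      filter_upwards [aux_poly_ae μ _ this] with y hy
      rw [MvPolynomial.eval_eq_eval_mv_eval']
      exact hy
    have := hmp.quasiMeasurePreserving.ae key
    filter_upwards [this] with x hx
    convert hx using 3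
    ext i
    refine Fin.cases ?_ (fun i => ?_) i <;> simp [MeasurableEquiv.piFinSuccAbove, Fin.tail, Fin.removeNth]

lemma aux_li_ae {Θ ι : Type*} [Fintype ι] [TopologicalSpace Θ] [MeasurableSpace Θ]
    [SecondCountableTopology Θ] [BorelSpace Θ]
    (μ : Measure Θ) [IsProbabilityMeasure μ] (φ : Θ → ι → ℝ) (hφ : Continuous φ)
    (h : ∀ W : Submodule ℝ (ι → ℝ), W < ⊤ → ∀ᵐ θ ∂μ, φ θ ∉ W) (n : ℕ) :
    ∀ m : ℕ, m ≤ n → m ≤ Fintype.card ι → ∀ᵐ ω ∂(Measure.pi fun _ : Fin n => μ),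
      ∃ f : Fin m → Fin n, LinearIndependent ℝ (fun i => φ (ω (f i))) := by
  have triv : ∀ n, ∀ᵐ ω ∂(Measure.pi fun _ : Fin n => μ),
      ∃ f : Fin 0 → Fin n, LinearIndependent ℝ (fun i => φ (ω (f i))) := fun n =>
    Filter.Eventually.of_forall fun ω => ⟨Fin.elim0, linearIndependent_empty_type⟩
  induction n with
  | zero =>
    intro m hm _
    obtain rfl : m = 0 := by omega
    exact triv _
  | succ n ih =>
    intro m hm hmc
    rcases m with _ | m
    · exact triv _
    have hmp := measurePreserving_piFinSuccAbove (fun _ : Fin (n + 1) => μ) 0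
    have key : ∀ᵐ z ∂(μ.prod (Measure.pi fun _ : Fin n => μ)),
        ∃ f : Fin m → Fin n,
          LinearIndependent ℝ (Fin.cons (φ z.1) (fun i => φ (z.2 (f i))) : Fin (m + 1) → ι → ℝ) := by
      have hm' : MeasurableSet {z : Θ × (Fin n → Θ) | ∃ f : Fin m → Fin n,
          LinearIndependent ℝ
            (Fin.cons (φ z.1) (fun i => φ (z.2 (f i))) : Fin (m + 1) → ι → ℝ)} := by
        rw [Set.setOf_exists]
        refine (isOpen_iUnion fun f => ?_).measurableSet
        have hc : Continuous fun z : Θ × (Fin n → Θ) =>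
            (Fin.cons (φ z.1) (fun i => φ (z.2 (f i))) : Fin (m + 1) → ι → ℝ) := by
          refine Continuous.finCons (by fun_prop) (by fun_prop)
        exact (isOpen_setOf_linearIndependent (𝕜 := ℝ)).preimage hc
      rw [Measure.ae_prod_iff_ae_ae hm']
      rw [Measure.ae_ae_comm hm']
      filter_upwards [ih m (by omega) (by omega)] with s hs
      obtain ⟨f, hf⟩ := hs
      have hlt : Submodule.span ℝ (Set.range fun i => φ (s (f i))) < ⊤ := by
        rw [lt_top_iff_ne_top]
        intro htop
        have h1 := finrank_span_eq_card hf
        rw [htop, finrank_top] at h1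
        simp at h1
        omega
      filter_upwards [h _ hlt] with y hy
      exact ⟨f, linearIndependent_finCons.2 ⟨hf, hy⟩⟩
    have := hmp.quasiMeasurePreserving.ae key
    filter_upwards [this] with x hx
    obtain ⟨f, hf⟩ := hx
    refine ⟨Fin.cons 0 (fun i => (f i).succ), ?_⟩
    convert hf using 1
    ext i
    refine Fin.cases ?_ (fun i => ?_) i <;> simp [MeasurableEquiv.piFinSuccAbove, Fin.tail, Fin.removeNth]

/-- exponents of total degree at most `p` -/
def auxS (d p : ℕ) : Finset (Fin d → ℕ) :=
  (Finset.range (p + 1)).biUnion fun k => Finset.piAntidiag Finset.univ k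

lemma mem_auxS {d p : ℕ} {a : Fin d → ℕ} : a ∈ auxS d p ↔ ∑ i, a i ≤ p := by
  simp [auxS, Nat.lt_succ_iff]

/-- coordinates of the feature in the monomial basis -/
noncomputable def auxPhi (d p : ℕ) (Q : Polynomial ℝ) (θ : (Fin d → ℝ) × ℝ) (a : auxS d p) : ℝ :=
  (Polynomial.hasseDeriv (∑ i, a.1 i) Q).eval θ.2 * Nat.multinomial Finset.univ a.1 *
    ∏ j, θ.1 j ^ a.1 j

lemma auxPhi_cont (d p : ℕ) (Q : Polynomial ℝ) : Continuous (auxPhi d p Q) := by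
  refine continuous_pi fun a => ?_
  unfold auxPhi
  fun_prop

lemma auxPhi_expand (d p : ℕ) (Q : Polynomial ℝ) (hQ : Q.natDegree = p)
    (θ : (Fin d → ℝ) × ℝ) (x : Fin d → ℝ) :
    Q.eval (∑ j, θ.1 j * x j + θ.2) = ∑ a : auxS d p, auxPhi d p Q θ a * ∏ j, x j ^ a.1 j := by
  rw [← Polynomial.taylor_eval, Polynomial.eval_eq_sum_range, Polynomial.natDegree_taylor, hQ]
  unfold auxPhi
  rw [Finset.sum_coe_sort (auxS d p) (fun a : Fin d → ℕ =>
    (Polynomial.hasseDeriv (∑ i, a i) Q).eval θ.2 * Nat.multinomial Finset.univ a *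
    (∏ j, θ.1 j ^ a j) * ∏ j, x j ^ a j)]
  unfold auxS
  rw [Finset.sum_biUnion]
  · refine Finset.sum_congr rfl fun k _ => ?_
    rw [Finset.sum_pow_eq_sum_piAntidiag, Finset.mul_sum, Polynomial.taylor_coeff]
    refine Finset.sum_congr rfl fun a ha => ?_
    have : ∑ i, a i = k := by simpa using ha
    rw [this]
    simp_rw [mul_pow, Finset.prod_mul_distrib]
    ring
  · intro k _ l _ hkl
    refine Finset.disjoint_left.2 fun a ha hb => hkl ?_
    simp at ha hb
    omega

lemma auxPhi_ae (d p : ℕ) (Q : Polynomial ℝ) (hQ : Q.natDegree = p) (hQ0 : Q ≠ 0)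
    (v : NNReal) (hv : v ≠ 0) (W : Submodule ℝ (auxS d p → ℝ)) (hW : W < ⊤) :
    ∀ᵐ θ ∂(featMeas d v), auxPhi d p Q θ ∉ W := by
  haveI := nullSingletonClass_gaussianReal (μ := 0) hv
  obtain ⟨f, hf0, hf⟩ := Submodule.exists_le_ker_of_lt_top W hW
  suffices ∀ᵐ θ ∂(featMeas d v), f (auxPhi d p Q θ) ≠ 0 by
    filter_upwards [this] with θ hθ hmem
    exact hθ (hf hmem)
  have hfc : Continuous f := LinearMap.continuous_of_finiteDimensional f
  have hm : MeasurableSet {θ : (Fin d → ℝ) × ℝ | f (auxPhi d p Q θ) ≠ 0} :=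
    (isOpen_ne.preimage (hfc.comp (auxPhi_cont d p Q))).measurableSet
  unfold featMeas
  rw [Measure.ae_prod_iff_ae_ae hm, Measure.ae_ae_comm hm]
  have hall : ∀ᵐ b ∂(gaussianReal 0 v), ∀ a : auxS d p,
      (Polynomial.hasseDeriv (∑ i, a.1 i) Q).eval b ≠ 0 := by
    rw [ae_all_iff]
    intro a
    apply aux_poly_ae
    intro h0
    have hle := mem_auxS.1 a.2
    have := congrArg (fun r => r.coeff (p - ∑ i, a.1 i)) h0
    simp only [Polynomial.hasseDeriv_coeff, Polynomial.coeff_zero] at this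
    rw [Nat.sub_add_cancel hle] at this
    rcases mul_eq_zero.1 this with h | h
    · have := Nat.choose_pos hle
      norm_cast at h
      omega
    · apply hQ0
      rw [← Polynomial.leadingCoeff_eq_zero, Polynomial.leadingCoeff, hQ, h]
  filter_upwards [hall] with b hb
  let c : auxS d p → ℝ := fun a => f (Pi.single a 1) *
    ((Polynomial.hasseDeriv (∑ i, a.1 i) Q).eval b * Nat.multinomial Finset.univ a.1)
  let P : MvPolynomial (Fin d) ℝ :=
    ∑ a : auxS d p, MvPolynomial.monomial (Finsupp.equivFunOnFinite.symm a.1) (c a)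
  have hP : P ≠ 0 := by
    intro h0
    apply hf0
    refine LinearMap.pi_ext' fun a => LinearMap.ext_ring ?_
    have := congrArg (MvPolynomial.coeff (Finsupp.equivFunOnFinite.symm a.1)) h0
    simp only [P, MvPolynomial.coeff_sum, MvPolynomial.coeff_monomial, MvPolynomial.coeff_zero,
      EmbeddingLike.apply_eq_iff_eq] at this
    rw [Finset.sum_eq_single a] at this
    · simp only [if_true, c] at this
      have h2 : (Nat.multinomial Finset.univ a.1 : ℝ) ≠ 0 := by
        exact_mod_cast (Nat.multinomial_pos _ _).ne'
      have h3 := (mul_eq_zero.1 this).resolve_right (mul_ne_zero (hb a) h2)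
      simpa using h3
    · intro a' _ hne
      rw [if_neg]
      exact fun h => hne (Subtype.ext h)
    · simp
  filter_upwards [aux_mvpoly_ae (gaussianReal 0 v) d P hP] with w hw
  intro h0
  apply hw
  rw [← h0, LinearMap.pi_apply_eq_sum_univ f]
  simp only [P, map_sum, MvPolynomial.eval_monomial, c]
  refine Finset.sum_congr rfl fun a _ => ?_
  have : (fun j => if a = j then (1 : ℝ) else 0) = Pi.single a 1 := by
    ext j; simp [Pi.single_apply, eq_comm]
  rw [this]
  simp [auxPhi, Finsupp.prod_fintype]
  ring

/-- monomial synthesis map -/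
noncomputable def auxT (d p : ℕ) : (auxS d p → ℝ) →ₗ[ℝ] ((Fin d → ℝ) → ℝ) where
  toFun c := fun x => ∑ a, c a * ∏ j, x j ^ a.1 j
  map_add' c c' := by ext x; simp [add_mul, Finset.sum_add_distrib]
  map_smul' r c := by ext x; simp [mul_assoc, Finset.mul_sum]

lemma auxT_range (d p : ℕ) : (LinearMap.range (auxT d p) : Set ((Fin d → ℝ) → ℝ)) =
    {f : (Fin d → ℝ) → ℝ | ∃ P : MvPolynomial (Fin d) ℝ,
              P.totalDegree ≤ p ∧ ∀ x, f x = MvPolynomial.eval x P} := by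
  ext f
  simp only [SetLike.mem_coe, LinearMap.mem_range, Set.mem_setOf_eq]
  constructor
  · rintro ⟨c, rfl⟩
    refine ⟨∑ a : auxS d p, MvPolynomial.monomial (Finsupp.equivFunOnFinite.symm a.1) (c a), ?_, ?_⟩
    · refine MvPolynomial.totalDegree_finsetSum_le fun a _ => ?_
      refine (MvPolynomial.totalDegree_monomial_le _ _).trans ?_
      have := mem_auxS.1 a.2
      simpa [Finsupp.sum_fintype] using this
    · intro x
      simp [auxT, MvPolynomial.eval_monomial, Finsupp.prod_fintype]
  · rintro ⟨P, hP, hf⟩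
    refine ⟨fun a => P.coeff (Finsupp.equivFunOnFinite.symm a.1), ?_⟩
    ext x
    rw [hf, MvPolynomial.eval_eq']
    simp only [auxT, LinearMap.coe_mk, AddHom.coe_mk]
    rw [Finset.sum_coe_sort (auxS d p) (fun a : Fin d → ℕ =>
      P.coeff (Finsupp.equivFunOnFinite.symm a) * ∏ j, x j ^ a j)]
    symm
    refine Finset.sum_of_injOn (fun m => (m : Fin d → ℕ)) ?_ ?_ ?_ ?_
    · exact fun a _ b _ h => DFunLike.coe_injective h
    · intro m hm
      refine Finset.mem_coe.2 (mem_auxS.2 ?_)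
      have := MvPolynomial.le_totalDegree hm
      rw [Finsupp.sum_fintype _ _ (by simp)] at this
      exact this.trans hP
    · intro a _ ha
      have : P.coeff (Finsupp.equivFunOnFinite.symm a) = 0 := by
        by_contra hne
        exact ha ⟨Finsupp.equivFunOnFinite.symm a, by simpa using hne, by simp⟩
      rw [this, zero_mul]
    · intro m _
      simp

/-- under Assumption A, in the small features regime with parameter ε > 0,
for every η > 0 there is N₀ such that for all N ≥ N₀, with probability at least 1 − η
the span of the N random features x ↦ σ(⟨wᵢ,x⟩ + bᵢ) equals Π_p(ℝ^d). -/
theorem stmt2 (d p : ℕ) (hd : 1 ≤ d) (hp : 1 ≤ p)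
    (σ : ℝ → ℝ) (cf : Fin (p + 1) → ℝ) (hcf : ∀ k, cf k ≠ 0)
    (hσ : ∀ y, σ y = ∑ k : Fin (p + 1), cf k * y ^ (k : ℕ))
    (ε : ℝ) (hε : 0 < ε) :
    ∀ η : ℝ, 0 < η → ∃ N₀ : ℕ, ∀ N : ℕ, N₀ ≤ N →
      ENNReal.ofReal (1 - η) ≤
        (Measure.pi fun _ : Fin N => featMeas d ε.toNNReal)
          {ω : Fin N → (Fin d → ℝ) × ℝ |
            (Submodule.span ℝ (Set.range fun i : Fin N =>
                fun x : Fin d → ℝ => σ (∑ j, (ω i).1 j * x j + (ω i).2)) :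
              Set ((Fin d → ℝ) → ℝ)) =
            {f : (Fin d → ℝ) → ℝ | ∃ P : MvPolynomial (Fin d) ℝ,
              P.totalDegree ≤ p ∧ ∀ x, f x = MvPolynomial.eval x P}} := by
  intro η hη
  let Q : Polynomial ℝ := ∑ k : Fin (p + 1), Polynomial.monomial (k : ℕ) (cf k)
  have hQc : Q.coeff p ≠ 0 := by
    have : Q.coeff p = cf (Fin.last p) := by
      simp only [Q, Polynomial.finset_sum_coeff, Polynomial.coeff_monomial]
      rw [Finset.sum_eq_single (Fin.last p)]
      · simp
      · intro k _ hk
        rw [if_neg]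
        exact fun h => hk (Fin.ext h)
      · simp
    rw [this]; exact hcf _
  have hQ0 : Q ≠ 0 := by
    intro h; rw [h] at hQc; simp at hQc
  have hQ : Q.natDegree = p := by
    refine le_antisymm ?_ (Polynomial.le_natDegree_of_ne_zero hQc)
    refine Polynomial.natDegree_sum_le_of_forall_le _ _ fun k _ => ?_
    exact (Polynomial.natDegree_monomial_le _).trans (Nat.lt_succ_iff.1 k.2)
  have hσQ : ∀ y, σ y = Q.eval y := by
    intro y
    rw [hσ]
    simp [Q, Polynomial.eval_finset_sum]
  have hv : ε.toNNReal ≠ 0 := by simpa using hε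
  haveI : IsProbabilityMeasure (featMeas d ε.toNNReal) := by
    unfold featMeas; infer_instance
  refine ⟨Fintype.card (auxS d p), fun N hN => ?_⟩
  have hae := aux_li_ae (featMeas d ε.toNNReal) (auxPhi d p Q) (auxPhi_cont d p Q)
    (auxPhi_ae d p Q hQ hQ0 _ hv) N _ hN le_rfl
  refine le_trans (b := 1) (by simpa using hη.le) ?_
  rw [← measure_univ (μ := Measure.pi fun _ : Fin N => featMeas d ε.toNNReal)]
  refine measure_mono_ae ?_
  filter_upwards [hae] with ω hω _
  obtain ⟨f, hf⟩ := hω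
  change (_ : Set ((Fin d → ℝ) → ℝ)) = _
  rw [← auxT_range]
  have hfeat : (fun i : Fin N => fun x : Fin d → ℝ => σ (∑ j, (ω i).1 j * x j + (ω i).2)) =
      auxT d p ∘ fun i => auxPhi d p Q (ω i) := by
    ext i x
    rw [hσQ, auxPhi_expand d p Q hQ]
    rfl
  have htop : Submodule.span ℝ (Set.range fun i : Fin N => auxPhi d p Q (ω i)) = ⊤ := by
    rw [eq_top_iff, ← hf.span_eq_top_of_card_eq_finrank' (by simp)]
    refine Submodule.span_mono ?_
    rintro _ ⟨i, rfl⟩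
    exact ⟨f i, rfl⟩
  rw [hfeat, Set.range_comp, Submodule.span_image, htop, LinearMap.range_eq_map]
end

section
/- Fix integers d ≥ 1 and p ≥ 1, let σ satisfy Assumption A, and fix ε > 0. Then the matrix Φ(ε) is positive definite; equivalently, the functions (w, b) ↦ φ̂_{w,b}(T), for T ∈ ℕ^d_{≤p}, are linearly independent in L²(ℝ^d × ℝ, N(0, ε I_d) ⊗ N(0, ε)). -/
open MeasureTheory ProbabilityTheory

/-- The normalized (probabilists') Hermite polynomial `H_t = He_t / √(t!)` evaluated at `y`. -/
noncomputable def hermN (t : ℕ) (y : ℝ) : ℝ :=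
  (Polynomial.aeval y (Polynomial.hermite t)) / Real.sqrt (Nat.factorial t)

/-- The multivariate Hermite polynomial `χ_T(x) = ∏ i, H_{T i}(x i)`. -/
noncomputable def chiH {d : ℕ} (T : Fin d → ℕ) (x : Fin d → ℝ) : ℝ :=
  ∏ i, hermN (T i) (x i)

/-- The Hermite coefficient `φ̂_{w,b}(T) = ∫ σ(⟨w,x⟩ + b) χ_T(x) dγ_d(x)`
of the random feature `φ_{w,b}(x) = σ(⟨w,x⟩ + b)`. -/
noncomputable def phiHat (d : ℕ) (σ : ℝ → ℝ) (w : Fin d → ℝ) (b : ℝ)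
    (T : Fin d → ℕ) : ℝ :=
  ∫ x, σ (∑ i, w i * x i + b) * chiH T x ∂(gaussD d)

/-- The index set `ℕ^d_{≤p}` of multi-indices of total degree at most `p`
(each coordinate then being at most `p`, so we may record it in `Fin (p+1)`). -/
abbrev MIdx (d p : ℕ) := {T : Fin d → Fin (p + 1) // (∑ i, (T i : ℕ)) ≤ p}

/-- The multi-index in `ℕ^d` corresponding to an element of `MIdx d p`. -/
def MIdx.toFun {d p : ℕ} (T : MIdx d p) : Fin d → ℕ := fun i => (T.1 i : ℕ)

/-- The matrix `Φ(ε)` with entries `Φ(ε)_{T,T'} = E_{w,b}[φ̂_{w,b}(T) φ̂_{w,b}(T')]`,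
where `w ∼ N(0, ε I_d)` and `b ∼ N(0, ε)` are independent. -/
noncomputable def PhiMat (d p : ℕ) (σ : ℝ → ℝ) (ε : ℝ) :
    Matrix (MIdx d p) (MIdx d p) ℝ := fun T T' =>
  ∫ wb : (Fin d → ℝ) × ℝ,
    phiHat d σ wb.1 wb.2 T.toFun * phiHat d σ wb.1 wb.2 T'.toFun
      ∂(featMeas d ε.toNNReal)

open Finset in
/-- The multivariate Hermite polynomial as an `MvPolynomial`. -/
noncomputable def chiP {d : ℕ} (T : Fin d → ℕ) : MvPolynomial (Fin d) ℝ :=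
  ∑ f ∈ Fintype.piFinset (fun i => Finset.range (T i + 1)),
    MvPolynomial.monomial (Finsupp.equivFunOnFinite.symm f)
      (∏ i, (((Polynomial.hermite (T i)).coeff (f i) : ℝ) / Real.sqrt (Nat.factorial (T i))))

theorem hermN_eq (t : ℕ) (y : ℝ) :
    hermN t y = ∑ j ∈ Finset.range (t + 1),
      (((Polynomial.hermite t).coeff j : ℝ) / Real.sqrt (Nat.factorial t)) * y ^ j := by
  unfold hermN
  rw [Polynomial.aeval_eq_sum_range, Polynomial.natDegree_hermite, Finset.sum_div]
  refine Finset.sum_congr rfl fun j _ => ?_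
  rw [zsmul_eq_mul]; ring

theorem eval_chiP {d : ℕ} (T : Fin d → ℕ) (x : Fin d → ℝ) :
    MvPolynomial.eval x (chiP T) = chiH T x := by
  unfold chiP chiH
  simp_rw [hermN_eq]
  rw [Finset.prod_univ_sum, map_sum]
  refine Finset.sum_congr rfl fun f _ => ?_
  rw [MvPolynomial.eval_monomial, Finset.prod_mul_distrib, Finsupp.prod_fintype _ _ (by simp)]
  simp

theorem coeff_chiP_ne {d : ℕ} (T : Fin d → ℕ) (m : Fin d →₀ ℕ)
    (h : MvPolynomial.coeff m (chiP T) ≠ 0) : ∀ i, m i ≤ T i := by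
  unfold chiP at h
  rw [MvPolynomial.coeff_sum] at h
  obtain ⟨f, hf, hne⟩ := Finset.exists_ne_zero_of_sum_ne_zero h
  rw [MvPolynomial.coeff_monomial] at hne
  split_ifs at hne with he
  · intro i
    rw [Fintype.mem_piFinset] at hf
    have := hf i
    rw [← he]
    simp at this ⊢
    omega
  · exact absurd rfl hne

theorem coeff_chiP_self {d : ℕ} (T : Fin d → ℕ) :
    MvPolynomial.coeff (Finsupp.equivFunOnFinite.symm T) (chiP T) ≠ 0 := by
  unfold chiP
  rw [MvPolynomial.coeff_sum, Finset.sum_eq_single T]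
  · rw [MvPolynomial.coeff_monomial, if_pos rfl, Finset.prod_ne_zero_iff]
    intro i _
    rw [Polynomial.coeff_hermite_self]
    have : (0:ℝ) < Real.sqrt (Nat.factorial (T i)) :=
      Real.sqrt_pos.2 (by exact_mod_cast Nat.factorial_pos _)
    simp [this.ne']
  · intro f _ hf
    rw [MvPolynomial.coeff_monomial, if_neg]
    simpa using hf
  · intro h
    exact absurd (by simp [Fintype.mem_piFinset]) h

theorem chiP_indep {d p : ℕ} (c : MIdx d p → ℝ)
    (h : ∑ T, c T • chiP T.toFun = 0) : c = 0 := by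
  by_contra hc
  obtain ⟨T0, hT0⟩ := Function.ne_iff.1 hc
  obtain ⟨T, hT, hmax⟩ := Finset.exists_max_image (Finset.univ.filter fun T => c T ≠ 0)
    (fun T : MIdx d p => ∑ i, T.toFun i) ⟨T0, by simpa using hT0⟩
  have h2 := congrArg (MvPolynomial.coeff (Finsupp.equivFunOnFinite.symm T.toFun)) h
  rw [MvPolynomial.coeff_sum, Finset.sum_eq_single T] at h2
  · rw [MvPolynomial.coeff_smul, MvPolynomial.coeff_zero, smul_eq_mul, mul_eq_zero] at h2
    rcases h2 with h2 | h2
    · simp [h2] at hT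
    · exact coeff_chiP_self _ h2
  · intro S _ hS
    rw [MvPolynomial.coeff_smul, smul_eq_mul]
    by_contra hne
    rw [mul_eq_zero, not_or] at hne
    have hle := coeff_chiP_ne _ _ hne.2
    have hm := hmax S (by simpa using hne.1)
    have hle' : ∀ i, T.toFun i ≤ S.toFun i := fun i => by simpa using hle i
    have heq : ∑ i, T.toFun i = ∑ i, S.toFun i :=
      le_antisymm (Finset.sum_le_sum fun i _ => hle' i) hm
    have := (Finset.sum_eq_sum_iff_of_le fun i _ => hle' i).1 heq
    apply hS
    ext i
    exact (this i (Finset.mem_univ i)).symm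
  · simp

theorem integrable_pow_gauss (v : NNReal) (n : ℕ) :
    Integrable (fun x : ℝ => x ^ n) (gaussianReal 0 v) := by
  have := (memLp_id_gaussianReal (μ := 0) (v := v) n)
  have h2 := MemLp.integrable_norm_pow' (f := id) (p := n) (μ := gaussianReal 0 v)
    (by simpa using this)
  refine h2.mono' (by fun_prop) (Filter.Eventually.of_forall fun x => by simp)

theorem integrable_eval_pi {d : ℕ} (v : NNReal) (q : MvPolynomial (Fin d) ℝ) :
    Integrable (fun x => MvPolynomial.eval x q) (Measure.pi fun _ : Fin d => gaussianReal 0 v) := by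
  simp_rw [MvPolynomial.eval_eq']
  refine integrable_finsetSum _ fun m _ => Integrable.const_mul ?_ _
  exact Integrable.fintype_prod (f := fun i (x : ℝ) => x ^ m i)
    (fun i => integrable_pow_gauss v (m i))

/-- The point of `Option (Fin d) → ℝ` given by `(w,b)`. -/
def optPt {d : ℕ} (wb : (Fin d → ℝ) × ℝ) : Option (Fin d) → ℝ :=
  fun o => o.elim wb.2 wb.1

theorem integrable_eval_feat {d : ℕ} (v : NNReal) (q : MvPolynomial (Option (Fin d)) ℝ) :
    Integrable (fun wb => MvPolynomial.eval (optPt wb) q) (featMeas d v) := by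
  simp_rw [MvPolynomial.eval_eq']
  refine integrable_finsetSum _ fun m _ => Integrable.const_mul ?_ _
  simp only [Fintype.prod_option, optPt, Option.elim]
  refine (?_ : Integrable (fun wb : (Fin d → ℝ) × ℝ =>
    wb.2 ^ m none * ∏ i, wb.1 i ^ m (some i)) _)
  simp_rw [mul_comm (_ ^ m none)]
  exact Integrable.mul_prod (f := fun w : Fin d → ℝ => ∏ i, w i ^ m (some i))
    (g := fun b : ℝ => b ^ m none)
    (Integrable.fintype_prod (f := fun i (x : ℝ) => x ^ m (some i))
    (fun i => integrable_pow_gauss v (m (some i)))) (integrable_pow_gauss v _)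

theorem continuous_eval_feat {d : ℕ} (q : MvPolynomial (Option (Fin d)) ℝ) :
    Continuous (fun wb : (Fin d → ℝ) × ℝ => MvPolynomial.eval (optPt wb) q) := by
  refine (MvPolynomial.continuous_eval q).comp (continuous_pi fun o => ?_)
  cases o <;> simp only [optPt, Option.elim] <;> fun_prop

theorem openPos_gauss {v : NNReal} (hv : v ≠ 0) :
    Measure.IsOpenPosMeasure (gaussianReal 0 v) :=
  (gaussianReal_absolutelyContinuous' 0 hv).isOpenPosMeasure

/-- Mixed moments. -/
noncomputable def momI {d : ℕ} (k : Option (Fin d) → ℕ) (q : MvPolynomial (Fin d) ℝ) : ℝ :=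
  ∫ x, (∏ i, x i ^ k (some i)) * MvPolynomial.eval x q ∂(gaussD d)

theorem integrable_mom {d : ℕ} (k : Fin d → ℕ) (q : MvPolynomial (Fin d) ℝ) :
    Integrable (fun x => (∏ i, x i ^ k i) * MvPolynomial.eval x q) (gaussD d) := by
  have := integrable_eval_pi 1 ((∏ i, MvPolynomial.X i ^ k i) * q)
  simpa [gaussD, map_prod] using this

open Finset in
/-- The feature coefficient as a polynomial. -/
noncomputable def featP {d p : ℕ} (cf : Fin (p + 1) → ℝ) (q : MvPolynomial (Fin d) ℝ) :
    MvPolynomial (Option (Fin d)) ℝ :=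
  ∑ n : Fin (p + 1), ∑ k ∈ piAntidiag (univ : Finset (Option (Fin d))) (n : ℕ),
    MvPolynomial.monomial (Finsupp.equivFunOnFinite.symm k)
      (cf n * (Nat.multinomial univ k * momI k q))

open Finset in
theorem eval_featP {d p : ℕ} (cf : Fin (p + 1) → ℝ) (q : MvPolynomial (Fin d) ℝ)
    (σ : ℝ → ℝ) (hσ : ∀ y, σ y = ∑ k : Fin (p + 1), cf k * y ^ (k : ℕ))
    (wb : (Fin d → ℝ) × ℝ) :
    MvPolynomial.eval (optPt wb) (featP cf q) =
      ∫ x, σ (∑ i, wb.1 i * x i + wb.2) * MvPolynomial.eval x q ∂(gaussD d) := by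
  have key : ∀ x : Fin d → ℝ, σ (∑ i, wb.1 i * x i + wb.2) * MvPolynomial.eval x q =
      ∑ n : Fin (p + 1), ∑ k ∈ piAntidiag (univ : Finset (Option (Fin d))) (n : ℕ),
        (cf n * Nat.multinomial univ k * ∏ o, optPt wb o ^ k o) *
          ((∏ i, x i ^ k (some i)) * MvPolynomial.eval x q) := by
    intro x
    have h1 : ∑ i, wb.1 i * x i + wb.2 =
        ∑ o : Option (Fin d), (optPt wb o * (o.elim 1 x : ℝ)) := by
      rw [Fintype.sum_option]; simp [optPt, add_comm]
    rw [hσ, h1, sum_mul]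
    refine sum_congr rfl fun n _ => ?_
    rw [sum_pow_eq_sum_piAntidiag, mul_sum, sum_mul]
    refine sum_congr rfl fun k _ => ?_
    simp_rw [mul_pow, prod_mul_distrib]
    rw [Fintype.prod_option (fun o : Option (Fin d) => (o.elim 1 x : ℝ) ^ k o)]
    simp only [Option.elim, one_pow, one_mul]
    ring
  simp_rw [key]
  rw [integral_finsetSum _ fun n _ => integrable_finsetSum _ fun k _ =>
    (integrable_mom (fun i => k (some i)) q).const_mul _]
  unfold featP
  rw [map_sum]
  refine sum_congr rfl fun n _ => ?_
  rw [integral_finsetSum _ fun k _ => (integrable_mom (fun i => k (some i)) q).const_mul _, map_sum]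
  refine sum_congr rfl fun k _ => ?_
  rw [integral_const_mul, MvPolynomial.eval_monomial, Finsupp.prod_fintype _ _ (by simp)]
  simp only [momI, Finsupp.equivFunOnFinite_symm_apply_apply]
  ring

open Finset in
theorem coeff_featP {d p : ℕ} (cf : Fin (p + 1) → ℝ) (q : MvPolynomial (Fin d) ℝ)
    (k : Option (Fin d) → ℕ) (hk : ∑ o, k o = p) :
    MvPolynomial.coeff (Finsupp.equivFunOnFinite.symm k) (featP cf q) =
      cf (Fin.last p) * (Nat.multinomial univ k * momI k q) := by
  unfold featP
  simp_rw [MvPolynomial.coeff_sum]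
  rw [sum_eq_single (Fin.last p), sum_eq_single k]
  · simp
  · intro f _ hf
    rw [MvPolynomial.coeff_monomial, if_neg]
    simpa using hf
  · intro h
    exact absurd (by simp [mem_piAntidiag, hk]) h
  · intro n _ hn
    refine sum_eq_zero fun f hf => ?_
    rw [MvPolynomial.coeff_monomial, if_neg]
    intro he
    have he' : f = k := by simpa using he
    rw [mem_piAntidiag, he', hk] at hf
    exact hn (Fin.ext (by simpa using hf.1.symm))
  · simp

open Finset in
theorem q_zero {d p : ℕ} (cf : Fin (p + 1) → ℝ) (hcf : ∀ k, cf k ≠ 0)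
    (q : MvPolynomial (Fin d) ℝ) (hq : ∀ m ∈ q.support, ∑ i, m i ≤ p)
    (h : featP cf q = 0) : q = 0 := by
  have hm : ∀ m ∈ q.support,
      ∫ x, (∏ i, x i ^ m i) * MvPolynomial.eval x q ∂(gaussD d) = 0 := by
    intro m hm
    have hle := hq m hm
    have h1 := coeff_featP cf q (fun o => o.elim (p - ∑ i, m i) m)
      (by rw [Fintype.sum_option]; simp; omega)
    rw [h, MvPolynomial.coeff_zero] at h1
    have h2 := h1.symm
    rw [mul_eq_zero, mul_eq_zero] at h2
    rcases h2 with h2 | h2 | h2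
    · exact absurd h2 (hcf _)
    · exact absurd h2 (by exact_mod_cast (Nat.multinomial_pos _ _).ne')
    · simpa [momI] using h2
  have hz : ∫ x, MvPolynomial.eval x q * MvPolynomial.eval x q ∂(gaussD d) = 0 := by
    have : ∀ x, MvPolynomial.eval x q * MvPolynomial.eval x q =
        ∑ m ∈ q.support, q.coeff m * ((∏ i, x i ^ m i) * MvPolynomial.eval x q) := by
      intro x
      conv_lhs => enter [1]; rw [MvPolynomial.eval_eq']
      rw [sum_mul]
      exact sum_congr rfl fun m _ => by ring
    simp_rw [this]
    rw [integral_finsetSum _ fun m _ => (integrable_mom (fun i => m i) q).const_mul _]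
    refine sum_eq_zero fun m hm' => ?_
    rw [integral_const_mul, hm m hm', mul_zero]
  have : ∀ _ : Fin d, Measure.IsOpenPosMeasure (gaussianReal 0 1) :=
    fun _ => openPos_gauss one_ne_zero
  have hop : Measure.IsOpenPosMeasure (gaussD d) := by unfold gaussD; infer_instance
  refine MvPolynomial.funext fun x => ?_
  rw [map_zero]
  by_contra hx
  have hc := MvPolynomial.continuous_eval q
  have hpos := integral_pos_of_integrable_nonneg_nonzero (μ := gaussD d)
    (f := fun x => MvPolynomial.eval x q * MvPolynomial.eval x q) (x := x)
    (hc.mul hc) (by simpa [gaussD] using integrable_eval_pi 1 (q * q))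
    (fun x => mul_self_nonneg _) (mul_self_ne_zero.2 hx)
  exact hpos.ne' hz

theorem phiHat_eq {d p : ℕ} (cf : Fin (p + 1) → ℝ)
    (σ : ℝ → ℝ) (hσ : ∀ y, σ y = ∑ k : Fin (p + 1), cf k * y ^ (k : ℕ))
    (wb : (Fin d → ℝ) × ℝ) (T : Fin d → ℕ) :
    phiHat d σ wb.1 wb.2 T = MvPolynomial.eval (optPt wb) (featP cf (chiP T)) := by
  rw [eval_featP cf _ σ hσ]
  simp_rw [eval_chiP]
  rfl

theorem momI_sum {d : ℕ} {ι : Type*} [Fintype ι] (c : ι → ℝ) (k : Option (Fin d) → ℕ)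
    (q : ι → MvPolynomial (Fin d) ℝ) :
    momI k (∑ T, c T • q T) = ∑ T, c T * momI k (q T) := by
  unfold momI
  simp_rw [← integral_const_mul]
  rw [← integral_finsetSum _ fun T _ => (integrable_mom (fun i => k (some i)) (q T)).const_mul _]
  refine integral_congr_ae (Filter.Eventually.of_forall fun x => ?_)
  simp only [map_sum, MvPolynomial.smul_eval, Finset.mul_sum]
  exact Finset.sum_congr rfl fun T _ => by ring

theorem featP_sum {d p : ℕ} {ι : Type*} [Fintype ι] (cf : Fin (p + 1) → ℝ) (c : ι → ℝ)
    (q : ι → MvPolynomial (Fin d) ℝ) :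
    featP cf (∑ T, c T • q T) = ∑ T, c T • featP cf (q T) := by
  unfold featP
  simp_rw [Finset.smul_sum]
  rw [Finset.sum_comm]
  refine Finset.sum_congr rfl fun n _ => ?_
  rw [Finset.sum_comm]
  refine Finset.sum_congr rfl fun k _ => ?_
  simp_rw [MvPolynomial.smul_monomial]
  rw [← map_sum, momI_sum]
  congr 1
  simp_rw [Finset.mul_sum, smul_eq_mul]
  exact Finset.sum_congr rfl fun T _ => by ring

theorem core_s3 {d p : ℕ} (cf : Fin (p + 1) → ℝ) (hcf : ∀ k, cf k ≠ 0)
    (σ : ℝ → ℝ) (hσ : ∀ y, σ y = ∑ k : Fin (p + 1), cf k * y ^ (k : ℕ))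
    (c : MIdx d p → ℝ)
    (h : ∀ wb : (Fin d → ℝ) × ℝ, ∑ T, c T * phiHat d σ wb.1 wb.2 T.toFun = 0) : c = 0 := by
  apply chiP_indep
  apply q_zero cf hcf
  · intro m hm
    rw [MvPolynomial.mem_support_iff, MvPolynomial.coeff_sum] at hm
    obtain ⟨T, _, hT⟩ := Finset.exists_ne_zero_of_sum_ne_zero hm
    rw [MvPolynomial.coeff_smul, smul_eq_mul] at hT
    have := coeff_chiP_ne _ _ (right_ne_zero_of_mul hT)
    exact (Finset.sum_le_sum fun i _ => this i).trans T.2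
  · rw [featP_sum]
    refine MvPolynomial.funext fun y => ?_
    have hy : y = optPt (fun i => y (some i), y none) := by
      ext o; cases o <;> rfl
    have := h (fun i => y (some i), y none)
    simp_rw [phiHat_eq cf σ hσ (fun i => y (some i), y none)] at this
    rw [← hy] at this
    simpa [map_sum, MvPolynomial.smul_eval] using this

/-- for a polynomial activation σ of degree p with all coefficients nonzero
(Assumption A) and any ε > 0, the matrix Φ(ε) is positive definite; equivalently, the
functions (w,b) ↦ φ̂_{w,b}(T), T ∈ ℕ^d_{≤p}, are linearly independent. -/
theorem stmt3 (d p : ℕ) (hd : 1 ≤ d) (hp : 1 ≤ p)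
    (σ : ℝ → ℝ) (cf : Fin (p + 1) → ℝ) (hcf : ∀ k, cf k ≠ 0)
    (hσ : ∀ y, σ y = ∑ k : Fin (p + 1), cf k * y ^ (k : ℕ))
    (ε : ℝ) (hε : 0 < ε) :
    (PhiMat d p σ ε).PosDef ∧
      LinearIndependent ℝ
        (fun (T : MIdx d p) => fun wb : (Fin d → ℝ) × ℝ =>
          phiHat d σ wb.1 wb.2 T.toFun) := by
  have hv : ε.toNNReal ≠ 0 := by simpa using hε
  refine ⟨Matrix.PosDef.of_dotProduct_mulVec_pos ?_ ?_, ?_⟩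
  · ext T T'
    simp only [Matrix.conjTranspose_apply, PhiMat, star_trivial]
    simp_rw [mul_comm]
  · intro c hc
    have hint : ∀ T T' : MIdx d p, Integrable (fun wb : (Fin d → ℝ) × ℝ =>
        phiHat d σ wb.1 wb.2 T.toFun * phiHat d σ wb.1 wb.2 T'.toFun)
        (featMeas d ε.toNNReal) := by
      intro T T'
      simp_rw [phiHat_eq cf σ hσ, ← map_mul]
      exact integrable_eval_feat _ _
    have hsq : ∀ wb : (Fin d → ℝ) × ℝ,
        (∑ T, c T * phiHat d σ wb.1 wb.2 T.toFun) * (∑ T, c T * phiHat d σ wb.1 wb.2 T.toFun)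
        = ∑ T : MIdx d p, ∑ T' : MIdx d p, (c T * c T') *
          (phiHat d σ wb.1 wb.2 T.toFun * phiHat d σ wb.1 wb.2 T'.toFun) := by
      intro wb
      rw [Finset.sum_mul_sum]
      exact Finset.sum_congr rfl fun T _ => Finset.sum_congr rfl fun T' _ => by ring
    have hint2 : Integrable (fun wb : (Fin d → ℝ) × ℝ =>
        (∑ T, c T * phiHat d σ wb.1 wb.2 T.toFun) * (∑ T, c T * phiHat d σ wb.1 wb.2 T.toFun))
        (featMeas d ε.toNNReal) := by
      simp_rw [hsq]
      exact integrable_finsetSum _ fun T _ => integrable_finsetSum _ fun T' _ =>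
        (hint T T').const_mul _
    have heq : star c ⬝ᵥ (PhiMat d p σ ε).mulVec c = ∫ wb : (Fin d → ℝ) × ℝ,
        (∑ T, c T * phiHat d σ wb.1 wb.2 T.toFun) * (∑ T, c T * phiHat d σ wb.1 wb.2 T.toFun)
        ∂(featMeas d ε.toNNReal) := by
      simp_rw [hsq]
      rw [integral_finsetSum _ fun T _ => integrable_finsetSum _ fun T' _ =>
        (hint T T').const_mul _]
      simp only [dotProduct, Matrix.mulVec, star_trivial]
      refine Finset.sum_congr rfl fun T _ => ?_
      rw [integral_finsetSum _ fun T' _ => (hint T T').const_mul _, Finset.mul_sum]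
      refine Finset.sum_congr rfl fun T' _ => ?_
      rw [integral_const_mul, PhiMat]
      ring
    rw [heq]
    have hex : ∃ wb : (Fin d → ℝ) × ℝ, ∑ T, c T * phiHat d σ wb.1 wb.2 T.toFun ≠ 0 := by
      by_contra hcon
      push Not at hcon
      exact hc (core_s3 cf hcf σ hσ c hcon)
    obtain ⟨wb, hwb⟩ := hex
    have h1 : Measure.IsOpenPosMeasure (gaussianReal 0 ε.toNNReal) := openPos_gauss hv
    have hop : Measure.IsOpenPosMeasure (featMeas d ε.toNNReal) := by
      unfold featMeas
      infer_instance
    have hcont : Continuous (fun wb : (Fin d → ℝ) × ℝ =>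
        ∑ T, c T * phiHat d σ wb.1 wb.2 T.toFun) := by
      simp_rw [phiHat_eq cf σ hσ]
      exact continuous_finsetSum _ fun T _ => continuous_const.mul (continuous_eval_feat _)
    exact integral_pos_of_integrable_nonneg_nonzero (x := wb) (hcont.mul hcont) hint2
      (fun x => mul_self_nonneg _) (mul_self_ne_zero.2 hwb)
  · rw [Fintype.linearIndependent_iff]
    intro c h
    have := core_s3 cf hcf σ hσ c fun wb => by simpa using congrFun h wb
    intro T
    rw [this]; rfl
end

section
/- Fix integers d ≥ 1 and p ≥ 1 and let σ satisfy Assumption A. Let g ∈ Π_p(ℝ^d) be a nonzero polynomial, let s = deg g, and let ĝ = (⟨g, χ_T⟩_{L²(γ_d)})_{T ∈ ℕ^d_{≤p}} be its vector of Hermite coefficients. Then there exist c₁ > 0, c₂ > 0 and ε₀ > 0 such that for all ε ∈ (0, ε₀), the matrix Φ(ε) is invertible and c₁ ε^{−s} ≤ ĝᵀ Φ(ε)^{−1} ĝ ≤ c₂ ε^{−s}. -/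
open MeasureTheory ProbabilityTheory

/-- The vector of Hermite coefficients `ĝ = (⟨g, χ_T⟩_{L²(γ_d)})_{T ∈ ℕ^d_{≤p}}`
of a polynomial `G`. -/
noncomputable def hermVec (d p : ℕ) (G : MvPolynomial (Fin d) ℝ) : MIdx d p → ℝ :=
  fun T => ∫ x, MvPolynomial.eval x G * chiH T.toFun x ∂(gaussD d)

/-! ### One-dimensional facts -/

lemma integrable_poly_gauss (P : Polynomial ℝ) (v : NNReal) :
    Integrable (fun x => P.eval x) (gaussianReal 0 v) := by
  have hpow : ∀ n : ℕ, Integrable (fun x : ℝ => x ^ n) (gaussianReal 0 v) := by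
    intro n
    have h := (memLp_id_gaussianReal' (μ := 0) (v := v) (n : ENNReal) (by simp)).integrable_norm_pow'
    refine (integrable_norm_iff (by fun_prop)).1 ?_
    simpa [norm_pow] using h
  simp_rw [Polynomial.eval_eq_sum_range]
  exact integrable_finsetSum _ fun i _ => (hpow i).const_mul _

lemma integrable_poly_pdf (P : Polynomial ℝ) :
    Integrable (fun x => gaussianPDFReal 0 1 x * P.eval x) volume := by
  have h := integrable_poly_gauss P 1
  rw [gaussianReal_of_var_ne_zero 0 one_ne_zero,
    integrable_withDensity_iff_integrable_smul' (measurable_gaussianPDF 0 1)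
      (Filter.Eventually.of_forall fun x => ENNReal.ofReal_lt_top)] at h
  simpa [gaussianPDF, ENNReal.toReal_ofReal (gaussianPDFReal_nonneg 0 1 _)] using h

lemma hasDerivAt_pdf (x : ℝ) :
    HasDerivAt (gaussianPDFReal 0 1) (-x * gaussianPDFReal 0 1 x) x := by
  have : gaussianPDFReal 0 1 = fun x => (√(2 * Real.pi * (1:NNReal)))⁻¹ * Real.exp (- (x - 0) ^ 2 / (2 * (1:NNReal))) := rfl
  rw [this]
  have h : HasDerivAt (fun x : ℝ => - (x - 0) ^ 2 / (2 * ((1:NNReal) : ℝ))) (-x) x := by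
    have := (((hasDerivAt_id x).sub_const 0).pow 2).neg.div_const (2 * ((1:NNReal) : ℝ))
    refine this.congr_deriv ?_
    simp; ring
  refine (h.exp.const_mul (√(2 * Real.pi * (1:NNReal)))⁻¹).congr_deriv ?_
  ring

lemma stein (P : Polynomial ℝ) :
    ∫ x, x * P.eval x ∂(gaussianReal 0 1) = ∫ x, P.derivative.eval x ∂(gaussianReal 0 1) := by
  rw [integral_gaussianReal_eq_integral_smul one_ne_zero,
    integral_gaussianReal_eq_integral_smul one_ne_zero]
  simp only [smul_eq_mul]
  have h1 : Integrable (fun x => gaussianPDFReal 0 1 x * (x * P.eval x)) volume := by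
    have h := integrable_poly_pdf (Polynomial.X * P)
    simp only [Polynomial.eval_mul, Polynomial.eval_X] at h
    exact h
  have h2 := integrable_poly_pdf P.derivative
  have h := integral_eq_zero_of_hasDerivAt_of_integrable
    (f := fun x => gaussianPDFReal 0 1 x * P.eval x)
    (f' := fun x => gaussianPDFReal 0 1 x * P.derivative.eval x
      - gaussianPDFReal 0 1 x * (x * P.eval x))
    (fun x => by
      refine ((hasDerivAt_pdf x).mul (P.hasDerivAt x)).congr_deriv ?_
      ring) (h2.sub h1) (integrable_poly_pdf P)
  rw [integral_sub h2 h1] at h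
  linarith

/-- real Hermite polynomial -/
noncomputable def herR (t : ℕ) : Polynomial ℝ := (Polynomial.hermite t).map (Int.castRingHom ℝ)

lemma herR_succ (t : ℕ) : herR (t + 1) = Polynomial.X * herR t - (herR t).derivative := by
  simp [herR, Polynomial.hermite_succ, Polynomial.derivative_map]

lemma herR_moment_succ (t a : ℕ) :
    ∫ x, x ^ a * (herR (t + 1)).eval x ∂(gaussianReal 0 1)
      = a * ∫ x, x ^ (a - 1) * (herR t).eval x ∂(gaussianReal 0 1) := by
  have h := stein (Polynomial.X ^ a * herR t)
  have h1 := integrable_poly_gauss (Polynomial.X * (Polynomial.X ^ a * herR t)) 1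
  have h2 := integrable_poly_gauss (Polynomial.X ^ a * (herR t).derivative) 1
  have h3 := integrable_poly_gauss (Polynomial.X ^ (a-1) * (herR t)) 1
  simp only [Polynomial.derivative_mul, Polynomial.derivative_X_pow, Polynomial.eval_add, Polynomial.eval_mul,
    Polynomial.eval_pow, Polynomial.eval_X, Polynomial.eval_C, Polynomial.eval_natCast, map_natCast] at h h1 h2 h3
  have e1 : ∀ x : ℝ, x ^ a * (herR (t + 1)).eval x
      = x * (x ^ a * (herR t).eval x) - x ^ a * (herR t).derivative.eval x := by
    intro x; rw [herR_succ]; simp; ring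
  simp_rw [e1]
  rw [integral_sub h1 h2, h, integral_add _ h2]
  · simp_rw [mul_assoc]
    rw [integral_const_mul]; ring
  · simp_rw [mul_assoc]
    exact h3.const_mul _

lemma herR_moment (t : ℕ) : ∀ a ≤ t, ∫ x, x ^ a * (herR t).eval x ∂(gaussianReal 0 1)
    = if a = t then (t.factorial : ℝ) else 0 := by
  induction t with
  | zero => intro a ha; obtain rfl : a = 0 := by omega
            simp [herR]
  | succ t ih =>
    intro a ha
    rw [herR_moment_succ]
    rcases a with _ | a
    · simp
    · rw [Nat.add_sub_cancel, ih a (by omega)]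
      by_cases h : a = t
      · simp [h, Nat.factorial_succ]
      · simp [h]

/-- the polynomial of `hermN` -/
noncomputable def herNP (t : ℕ) : Polynomial ℝ := Polynomial.C (Real.sqrt (Nat.factorial t))⁻¹ * herR t

lemma hermN_eq_s5 (t : ℕ) (y : ℝ) : hermN t y = (herNP t).eval y := by
  simp only [hermN, herNP, herR, Polynomial.eval_mul, Polynomial.eval_C, Polynomial.aeval_def,
    Polynomial.eval_map, div_eq_inv_mul]
  rfl

/-- one-dimensional Hermite moments -/
noncomputable def mom (t a : ℕ) : ℝ := ∫ x, x ^ a * hermN t x ∂(gaussianReal 0 1)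

lemma mom_lt {t a : ℕ} (h : a < t) : mom t a = 0 := by
  have := herR_moment t a h.le
  simp only [mom, hermN_eq_s5, herNP, Polynomial.eval_mul, Polynomial.eval_C, mul_left_comm _ (Real.sqrt _)⁻¹ _]
  rw [integral_const_mul, this, if_neg h.ne]; simp

lemma mom_self (t : ℕ) : mom t t ≠ 0 := by
  have := herR_moment t t le_rfl
  simp only [mom, hermN_eq_s5, herNP, Polynomial.eval_mul, Polynomial.eval_C, mul_left_comm _ (Real.sqrt _)⁻¹ _]
  rw [integral_const_mul, this, if_pos rfl]
  have : 0 < (t.factorial : ℝ) := by exact_mod_cast t.factorial_pos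
  positivity

lemma exists_dual (p : ℕ) (a : ℕ) (ha : a ≤ p) : ∃ h : Polynomial ℝ, ∀ j ≤ p,
    ∫ x, h.eval x * x ^ j ∂(gaussianReal 0 1) = if a = j then 1 else 0 := by
  let A : Matrix (Fin (p+1)) (Fin (p+1)) ℝ := fun t j => mom t j
  have hA : IsUnit A.det := by
    rw [Matrix.det_of_isUpperTriangular]
    · rw [isUnit_iff_ne_zero, Finset.prod_ne_zero_iff]
      exact fun i _ => mom_self _
    · intro i j hij
      exact mom_lt hij
  refine ⟨∑ t : Fin (p+1), Polynomial.C (A⁻¹ ⟨a, by omega⟩ t) * herNP t, fun j hj => ?_⟩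
  have h := congrFun (congrFun (Matrix.nonsing_inv_mul A hA) ⟨a, by omega⟩) ⟨j, by omega⟩
  rw [Matrix.mul_apply, Matrix.one_apply] at h
  simp only [Fin.mk.injEq] at h
  rw [← h]
  simp only [Polynomial.eval_finsetSum, Finset.sum_mul, Polynomial.eval_mul, Polynomial.eval_C, mul_assoc]
  rw [integral_finsetSum]
  · refine Finset.sum_congr rfl fun t _ => ?_
    rw [integral_const_mul]
    congr 1
    simp only [A, mom, hermN_eq_s5, mul_comm]
  · intro t _
    have := integrable_poly_gauss (herNP t * Polynomial.X ^ j) 1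
    simp at this
    exact this.const_mul _

lemma gauss_scale (P : Polynomial ℝ) {r : ℝ} (v : NNReal) (hv : (v:ℝ) = r ^ 2) :
    ∫ x, P.eval x ∂(gaussianReal 0 v) = ∫ x, P.eval (r * x) ∂(gaussianReal 0 1) := by
  have h := gaussianReal_map_const_mul (μ := 0) (v := 1) r
  have e : gaussianReal (r * 0) (.mk (r ^ 2) (sq_nonneg _) * 1) = gaussianReal 0 v := by
    congr 1
    · simp
    · ext; simp [hv]
  rw [e] at h
  rw [← h, integral_map (by fun_prop) (by fun_prop)]

/-- dual polynomials for variance `ε`, with uniform control on the norm. -/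
lemma exists_dual_eps (p : ℕ) (a : ℕ) (ha : a ≤ p) : ∃ K : ℝ, ∀ ε : ℝ, 0 < ε →
    ∃ h : Polynomial ℝ, (∀ j ≤ p,
      ∫ x, h.eval x * x ^ j ∂(gaussianReal 0 ε.toNNReal) = if a = j then 1 else 0) ∧
      ε ^ a * ∫ x, h.eval x * h.eval x ∂(gaussianReal 0 ε.toNNReal) = K := by
  obtain ⟨h, hh⟩ := exists_dual p a ha
  refine ⟨∫ x, h.eval x * h.eval x ∂(gaussianReal 0 1), fun ε hε => ?_⟩
  set r := Real.sqrt ε with hr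
  have hr0 : 0 < r := Real.sqrt_pos.2 hε
  have hv : (ε.toNNReal : ℝ) = r ^ 2 := by
    rw [Real.coe_toNNReal _ hε.le, Real.sq_sqrt hε.le]
  have hε2 : ε = r ^ 2 := by rw [Real.sq_sqrt hε.le]
  refine ⟨Polynomial.C (r ^ a)⁻¹ * h.comp (Polynomial.C r⁻¹ * Polynomial.X), fun j hj => ?_, ?_⟩
  · have := gauss_scale ((Polynomial.C (r ^ a)⁻¹ * h.comp (Polynomial.C r⁻¹ * Polynomial.X)) * Polynomial.X ^ j) _ hv
    rw [Polynomial.C_mul'] at this ⊢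
    simp only [Polynomial.eval_mul, Polynomial.eval_pow, Polynomial.eval_X, Polynomial.eval_smul,
      Polynomial.eval_comp, Polynomial.eval_C, inv_mul_cancel_left₀ hr0.ne', mul_pow, smul_eq_mul] at this ⊢
    rw [this]
    have e : ∀ x, (r ^ a)⁻¹ * h.eval x * (r ^ j * x ^ j) = ((r ^ a)⁻¹ * r ^ j) * (h.eval x * x ^ j) := by
      intro x; ring
    simp_rw [e]
    rw [integral_const_mul, hh j hj]
    split_ifs with haj
    · subst haj; field_simp
    · simp
  · have := gauss_scale ((Polynomial.C (r ^ a)⁻¹ * h.comp (Polynomial.C r⁻¹ * Polynomial.X)) * (Polynomial.C (r ^ a)⁻¹ * h.comp (Polynomial.C r⁻¹ * Polynomial.X))) _ hv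
    rw [Polynomial.C_mul'] at this ⊢
    simp only [Polynomial.eval_mul, Polynomial.eval_pow, Polynomial.eval_X, Polynomial.eval_smul,
      Polynomial.eval_comp, Polynomial.eval_C, inv_mul_cancel_left₀ hr0.ne', mul_pow, smul_eq_mul] at this ⊢
    rw [this]
    have e : ∀ x, (r ^ a)⁻¹ * h.eval x * ((r ^ a)⁻¹ * h.eval x) = ((r ^ a)⁻¹ * (r ^ a)⁻¹) * (h.eval x * h.eval x) := by
      intro x; ring
    simp_rw [e]
    rw [integral_const_mul, hε2]
    field_simp
    ring

lemma moment_eps (a : ℕ) (ε : ℝ) (hε : 0 < ε) :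
    ∫ x, x ^ a * x ^ a ∂(gaussianReal 0 ε.toNNReal)
      = ε ^ a * ∫ x, x ^ a * x ^ a ∂(gaussianReal 0 1) := by
  have hv : (ε.toNNReal : ℝ) = (Real.sqrt ε) ^ 2 := by
    rw [Real.coe_toNNReal _ hε.le, Real.sq_sqrt hε.le]
  have := gauss_scale (Polynomial.X ^ a * Polynomial.X ^ a) _ hv
  simp only [Polynomial.eval_mul, Polynomial.eval_pow, Polynomial.eval_X] at this
  rw [this, ← integral_const_mul]
  congr 1; ext x
  nth_rw 3 [← Real.sq_sqrt hε.le]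
  ring

/-! ### Product functions on feature space -/

/-- product of one-variable polynomials on feature space -/
noncomputable def prodF {d : ℕ} (f : Option (Fin d) → Polynomial ℝ) (z : (Fin d → ℝ) × ℝ) : ℝ :=
  (∏ i, (f (some i)).eval (z.1 i)) * (f none).eval z.2

lemma prodF_mul {d : ℕ} (f g : Option (Fin d) → Polynomial ℝ) (z : (Fin d → ℝ) × ℝ) :
    prodF f z * prodF g z = prodF (fun o => f o * g o) z := by
  simp only [prodF, Polynomial.eval_mul, Finset.prod_mul_distrib]
  ring

lemma prodF_integrable {d : ℕ} (f : Option (Fin d) → Polynomial ℝ) (v : NNReal) :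
    Integrable (prodF f) (featMeas d v) := by
  unfold featMeas
  exact Integrable.mul_prod
    (Integrable.fintype_prod (f := fun i x => (f (some i)).eval x)
      (fun i => integrable_poly_gauss _ v)) (integrable_poly_gauss (f none) v)

lemma prodF_integral {d : ℕ} (f : Option (Fin d) → Polynomial ℝ) (v : NNReal) :
    ∫ z, prodF f z ∂(featMeas d v) = ∏ o, ∫ x, (f o).eval x ∂(gaussianReal 0 v) := by
  unfold featMeas prodF
  rw [integral_prod_mul (fun w : Fin d → ℝ => ∏ i, (f (some i)).eval (w i))
      (fun b => (f none).eval b),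
    integral_fintype_prod_eq_prod (f := fun i x => (f (some i)).eval x), Fintype.prod_option, mul_comm]

/-- monomials on feature space -/
noncomputable def monF {d : ℕ} (β : Option (Fin d) → ℕ) : Option (Fin d) → Polynomial ℝ :=
  fun o => Polynomial.X ^ β o

lemma integral_cs {Ω : Type*} [MeasurableSpace Ω] (μ : Measure Ω) (P h : Ω → ℝ)
    (h1 : Integrable (fun z => P z * P z) μ) (h2 : Integrable (fun z => h z * P z) μ)
    (h3 : Integrable (fun z => h z * h z) μ) :
    (∫ z, h z * P z ∂μ) ^ 2 ≤ (∫ z, h z * h z ∂μ) * ∫ z, P z * P z ∂μ := by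
  have key : ∀ t : ℝ, 0 ≤ (∫ z, h z * h z ∂μ) * (t * t) + (2 * ∫ z, h z * P z ∂μ) * t
      + ∫ z, P z * P z ∂μ := by
    intro t
    have : ∫ z, (t * h z + P z) ^ 2 ∂μ = (∫ z, h z * h z ∂μ) * (t * t)
        + (2 * ∫ z, h z * P z ∂μ) * t + ∫ z, P z * P z ∂μ := by
      have e : ∀ z, (t * h z + P z) ^ 2 = (t * t) * (h z * h z) + (2 * t) * (h z * P z) + P z * P z := by
        intro z; ring
      simp_rw [e]
      rw [integral_add (f := fun z => (t * t) * (h z * h z) + (2 * t) * (h z * P z))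
          ((h3.const_mul _).add (h2.const_mul _)) h1,
        integral_add (h3.const_mul _) (h2.const_mul _), integral_const_mul, integral_const_mul]
      ring
    rw [← this]
    exact integral_nonneg fun z => sq_nonneg _
  have := discrim_le_zero key
  unfold discrim at this
  nlinarith

lemma integrable_mul_sum {d : ℕ} (S : Finset (Option (Fin d) → ℕ)) (c : (Option (Fin d) → ℕ) → ℝ)
    (f : Option (Fin d) → Polynomial ℝ) (v : NNReal) :
    Integrable (fun z => prodF f z * ∑ β ∈ S, c β * prodF (monF β) z) (featMeas d v) := by
  simp_rw [Finset.mul_sum, mul_left_comm, prodF_mul]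
  exact integrable_finsetSum _ fun β _ => (prodF_integrable _ v).const_mul _

lemma integrable_sum_mul_sum {d : ℕ} (S : Finset (Option (Fin d) → ℕ))
    (c c' : (Option (Fin d) → ℕ) → ℝ) (v : NNReal) :
    Integrable (fun z => (∑ β ∈ S, c β * prodF (monF β) z) * ∑ β ∈ S, c' β * prodF (monF β) z)
      (featMeas d v) := by
  simp_rw [Finset.sum_mul, mul_assoc]
  exact integrable_finsetSum _ fun β _ => (integrable_mul_sum S c' _ v).const_mul _

lemma coef_bound {d p : ℕ} (S : Finset (Option (Fin d) → ℕ)) (hS : ∀ β ∈ S, ∀ o, β o ≤ p)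
    (β₀ : Option (Fin d) → ℕ) (hβ₀ : β₀ ∈ S) :
    ∃ K : ℝ, 0 < K ∧ ∀ ε : ℝ, 0 < ε → ∀ c : (Option (Fin d) → ℕ) → ℝ,
      c β₀ ^ 2 * ε ^ (∑ o, β₀ o) ≤ K * ∫ z, (∑ β ∈ S, c β * prodF (monF β) z) *
        (∑ β ∈ S, c β * prodF (monF β) z) ∂(featMeas d ε.toNNReal) := by
  have H := fun o => exists_dual_eps p (β₀ o) (hS _ hβ₀ o)
  choose K hK using H
  refine ⟨max 1 (∏ o, K o), by positivity, fun ε hε c => ?_⟩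
  choose h h1 h2 using fun o => hK o ε hε
  set μ := featMeas d ε.toNNReal with hμ
  set P := fun z => ∑ β ∈ S, c β * prodF (monF β) z with hP
  have e1 : ∫ z, prodF h z * P z ∂μ = c β₀ := by
    simp only [hP, Finset.mul_sum, mul_left_comm (prodF h _), prodF_mul]
    rw [integral_finsetSum _ fun β _ => (prodF_integrable _ _).const_mul _]
    simp_rw [integral_const_mul]
    rw [Finset.sum_eq_single_of_mem β₀ hβ₀]
    · rw [prodF_integral]
      rw [Finset.prod_eq_one, mul_one]
      intro o _
      have := h1 o (β₀ o) (hS _ hβ₀ o)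
      simpa [monF] using this
    · intro β hβ hne
      obtain ⟨o, ho⟩ := Function.ne_iff.1 hne
      rw [prodF_integral, Finset.prod_eq_zero (Finset.mem_univ o), mul_zero]
      have := h1 o (β o) (hS _ hβ o)
      rw [if_neg ho.symm] at this
      simpa [monF] using this
  have e2 : ε ^ (∑ o, β₀ o) * ∫ z, prodF h z * prodF h z ∂μ = ∏ o, K o := by
    simp_rw [prodF_mul]
    rw [prodF_integral, ← Finset.prod_pow_eq_pow_sum, ← Finset.prod_mul_distrib]
    refine Finset.prod_congr rfl fun o _ => ?_
    rw [← h2 o]; simp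
  have e3 := integral_cs μ P (prodF h) (integrable_sum_mul_sum S c c _)
    (integrable_mul_sum S c h _) (by simp_rw [prodF_mul]; exact prodF_integrable _ _)
  have e4 : 0 ≤ ∫ z, P z * P z ∂μ := integral_nonneg fun z => mul_self_nonneg _
  rw [e1] at e3
  calc c β₀ ^ 2 * ε ^ (∑ o, β₀ o) ≤ ((∫ z, prodF h z * prodF h z ∂μ) * ∫ z, P z * P z ∂μ) * ε ^ (∑ o, β₀ o) := by
        gcongr
    _ = (ε ^ (∑ o, β₀ o) * ∫ z, prodF h z * prodF h z ∂μ) * ∫ z, P z * P z ∂μ := by ring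
    _ = (∏ o, K o) * ∫ z, P z * P z ∂μ := by rw [e2]
    _ ≤ _ := by
        refine mul_le_mul_of_nonneg_right (le_max_right _ _) e4

lemma upper_bound {d : ℕ} (S : Finset (Option (Fin d) → ℕ)) (s : ℕ)
    (c : (Option (Fin d) → ℕ) → ℝ) (hc : ∀ β ∈ S, (∑ o, β o) < s → c β = 0) :
    ∃ K : ℝ, 0 < K ∧ ∀ ε : ℝ, 0 < ε → ε < 1 →
      ∫ z, (∑ β ∈ S, c β * prodF (monF β) z) *
        (∑ β ∈ S, c β * prodF (monF β) z) ∂(featMeas d ε.toNNReal) ≤ K * ε ^ s := by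
  let M : (Option (Fin d) → ℕ) → ℝ := fun β => ∏ o, ∫ x, x ^ β o * x ^ β o ∂(gaussianReal 0 1)
  have hM : ∀ β, 0 ≤ M β := fun β => Finset.prod_nonneg fun o _ =>
    integral_nonneg fun x => mul_self_nonneg _
  have hsum : 0 ≤ S.card * ∑ β ∈ S, c β ^ 2 * M β :=
    mul_nonneg (by positivity) (Finset.sum_nonneg fun β _ => mul_nonneg (sq_nonneg _) (hM β))
  refine ⟨1 + S.card * ∑ β ∈ S, c β ^ 2 * M β, by positivity, fun ε hε hε1 => ?_⟩
  have hint : ∀ β, ∫ z, prodF (monF β) z * prodF (monF β) z ∂(featMeas d ε.toNNReal)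
      = ε ^ (∑ o, β o) * M β := by
    intro β
    simp_rw [prodF_mul]
    rw [prodF_integral, ← Finset.prod_pow_eq_pow_sum, ← Finset.prod_mul_distrib]
    refine Finset.prod_congr rfl fun o _ => ?_
    rw [← moment_eps _ _ hε]; simp [monF]
  calc _ ≤ ∫ z, S.card * ∑ β ∈ S, c β ^ 2 * (prodF (monF β) z * prodF (monF β) z) ∂(featMeas d ε.toNNReal) := by
        refine integral_mono (integrable_sum_mul_sum S c c _) ?_ ?_
        · refine Integrable.const_mul (integrable_finsetSum _ fun β _ => ?_) _
          simp_rw [prodF_mul]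
          exact (prodF_integrable _ _).const_mul _
        · intro z
          have := sq_sum_le_card_mul_sum_sq (s := S) (f := fun β => c β * prodF (monF β) z)
          simp only [mul_pow] at this
          simpa only [← pow_two] using this
    _ = S.card * ∑ β ∈ S, c β ^ 2 * (ε ^ (∑ o, β o) * M β) := by
        rw [integral_const_mul, integral_finsetSum]
        · simp_rw [integral_const_mul, hint]
        · intro β _
          simp_rw [prodF_mul]
          exact (prodF_integrable _ _).const_mul _
    _ ≤ S.card * ∑ β ∈ S, c β ^ 2 * (ε ^ s * M β) := by
        refine mul_le_mul_of_nonneg_left (Finset.sum_le_sum fun β hβ => ?_) (by positivity)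
        by_cases h : (∑ o, β o) < s
        · rw [hc β hβ h]; simp
        · exact mul_le_mul_of_nonneg_left (mul_le_mul_of_nonneg_right
            (pow_le_pow_of_le_one hε.le hε1.le (not_lt.1 h)) (hM β)) (sq_nonneg _)
    _ = (S.card * ∑ β ∈ S, c β ^ 2 * M β) * ε ^ s := by
        rw [mul_assoc, Finset.sum_mul]
        congr 1
        exact Finset.sum_congr rfl fun β _ => by ring
    _ ≤ _ := by
        refine mul_le_mul_of_nonneg_right ?_ (by positivity)
        linarith

/-! ### Expansions -/

/-- multivariate Hermite moments -/
noncomputable def momD {d : ℕ} (α T : Fin d → ℕ) : ℝ := ∏ i, mom (T i) (α i)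

lemma momD_self {d : ℕ} (T : Fin d → ℕ) : momD T T ≠ 0 :=
  Finset.prod_ne_zero_iff.2 fun _ _ => mom_self _

lemma momD_eq_zero {d : ℕ} {α T : Fin d → ℕ} (h : ∑ i, α i ≤ ∑ i, T i) (hne : α ≠ T) :
    momD α T = 0 := by
  have : ∃ i, α i < T i := by
    by_contra! hcon
    apply hne
    have heq := (Finset.sum_eq_sum_iff_of_le (s := Finset.univ) (fun i _ => hcon i)).1
      (le_antisymm (Finset.sum_le_sum fun i _ => hcon i) h)
    funext i
    exact (heq i (Finset.mem_univ i)).symm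
  obtain ⟨i, hi⟩ := this
  exact Finset.prod_eq_zero (Finset.mem_univ i) (mom_lt hi)

lemma mono_chi {d : ℕ} (α T : Fin d → ℕ) (x : Fin d → ℝ) :
    (∏ i, x i ^ α i) * chiH T x = ∏ i, (Polynomial.X ^ α i * herNP (T i)).eval (x i) := by
  simp [chiH, hermN_eq_s5, Finset.prod_mul_distrib]

lemma mono_chi_integrable {d : ℕ} (α T : Fin d → ℕ) :
    Integrable (fun x : Fin d → ℝ => (∏ i, x i ^ α i) * chiH T x) (gaussD d) := by
  simp_rw [mono_chi]
  exact Integrable.fintype_prod (f := fun i x => (Polynomial.X ^ α i * herNP (T i)).eval x)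
    (fun i => integrable_poly_gauss _ _)

lemma mono_chi_integral {d : ℕ} (α T : Fin d → ℕ) :
    ∫ x : Fin d → ℝ, (∏ i, x i ^ α i) * chiH T x ∂(gaussD d) = momD α T := by
  simp_rw [mono_chi]
  refine (integral_fintype_prod_eq_prod
    (f := fun i x => (Polynomial.X ^ α i * herNP (T i)).eval x)
    (μ := fun _ : Fin d => gaussianReal 0 1)).trans ?_
  simp [momD, mom, hermN_eq_s5]

lemma hermVec_eq {d p : ℕ} (G : MvPolynomial (Fin d) ℝ) (T : MIdx d p) :
    hermVec d p G T = ∑ m ∈ G.support, G.coeff m * momD m T.toFun := by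
  simp only [hermVec, MvPolynomial.eval_eq', Finset.sum_mul, mul_assoc]
  rw [integral_finsetSum _ fun m _ => (mono_chi_integrable _ _).const_mul _]
  simp_rw [integral_const_mul, mono_chi_integral]

/-- index set of the monomials in `(w, b)` -/
noncomputable def SS (d p : ℕ) : Finset (Option (Fin d) → ℕ) :=
  (Fintype.piFinset fun _ => Finset.range (p + 1)).filter fun β => ∑ o, β o ≤ p

lemma mem_SS {d p : ℕ} (β : Option (Fin d) → ℕ) : β ∈ SS d p ↔ ∑ o, β o ≤ p := by
  simp only [SS, Finset.mem_filter, Fintype.mem_piFinset, Finset.mem_range, and_iff_right_iff_imp]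
  intro h o
  have := Finset.single_le_sum (f := β) (fun _ _ => Nat.zero_le _) (Finset.mem_univ o)
  omega

/-- coefficient of the monomial -/
noncomputable def kap {d p : ℕ} (cf : Fin (p + 1) → ℝ) (β : Option (Fin d) → ℕ) : ℝ :=
  (if h : ∑ o, β o < p + 1 then cf ⟨∑ o, β o, h⟩ else 0) * Nat.multinomial Finset.univ β

lemma kap_ne {d p : ℕ} (cf : Fin (p + 1) → ℝ) (hcf : ∀ k, cf k ≠ 0) (β : Option (Fin d) → ℕ)
    (hβ : ∑ o, β o ≤ p) : kap cf β ≠ 0 := by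
  unfold kap
  rw [dif_pos (by omega)]
  exact mul_ne_zero (hcf _) (by exact_mod_cast (Nat.multinomial_pos _ _).ne')

lemma sigma_expand_s5 {d p : ℕ} (σ : ℝ → ℝ) (cf : Fin (p + 1) → ℝ)
    (hσ : ∀ y, σ y = ∑ k : Fin (p + 1), cf k * y ^ (k : ℕ)) (z : Option (Fin d) → ℝ) :
    σ (∑ o, z o) = ∑ β ∈ SS d p, kap cf β * ∏ o, z o ^ β o := by
  rw [hσ]
  rw [← Finset.sum_fiberwise_of_maps_to (s := SS d p) (t := Finset.range (p + 1))
    (g := fun β => ∑ o, β o) (fun β hβ => by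
      have := (mem_SS β).1 hβ
      simp only [Finset.mem_range]; omega),
    Finset.sum_range]
  refine Finset.sum_congr rfl fun k _ => ?_
  rw [Finset.sum_pow_eq_sum_piAntidiag, Finset.mul_sum]
  refine Finset.sum_congr ?_ ?_
  · ext β
    simp only [Finset.mem_piAntidiag, Finset.mem_filter, mem_SS, Finset.mem_univ]
    have := k.2
    constructor
    · rintro ⟨h, -⟩
      have h' : ∑ o, β o = k := h
      exact ⟨by omega, h⟩
    · rintro ⟨-, h⟩; exact ⟨h, by simp⟩
  · intro β hβ
    have hk : ∑ o, β o = k := (Finset.mem_filter.1 hβ).2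
    have : kap cf β = cf k * Nat.multinomial Finset.univ β := by
      unfold kap
      rw [dif_pos (by omega)]
      congr 2
      exact Fin.ext hk
    rw [this, mul_assoc]

lemma phiHat_eq_s5 {d p : ℕ} (σ : ℝ → ℝ) (cf : Fin (p + 1) → ℝ)
    (hσ : ∀ y, σ y = ∑ k : Fin (p + 1), cf k * y ^ (k : ℕ)) (wb : (Fin d → ℝ) × ℝ)
    (T : Fin d → ℕ) :
    phiHat d σ wb.1 wb.2 T
      = ∑ β ∈ SS d p, (kap cf β * momD (fun i => β (some i)) T) * prodF (monF β) wb := by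
  have e : ∀ x : Fin d → ℝ, σ (∑ i, wb.1 i * x i + wb.2) * chiH T x
      = ∑ β ∈ SS d p, (kap cf β * prodF (monF β) wb) *
        ((∏ i, x i ^ β (some i)) * chiH T x) := by
    intro x
    have h := sigma_expand_s5 (d := d) σ cf hσ (fun o => o.elim wb.2 (fun i => wb.1 i * x i))
    rw [Fintype.sum_option] at h
    simp only [Option.elim_none, Option.elim_some] at h
    rw [add_comm, h, Finset.sum_mul]
    refine Finset.sum_congr rfl fun β _ => ?_
    rw [Fintype.prod_option]
    simp only [Option.elim_none, Option.elim_some, mul_pow, Finset.prod_mul_distrib, prodF, monF,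
      Polynomial.eval_pow, Polynomial.eval_X]
    ring
  unfold phiHat
  simp_rw [e]
  rw [integral_finsetSum _ fun β _ => (mono_chi_integrable _ _).const_mul _]
  simp_rw [integral_const_mul, mono_chi_integral]
  exact Finset.sum_congr rfl fun β _ => by ring

/-! ### Linear algebra and the quadratic form -/

open Matrix in
lemma la_main {n : Type*} [Fintype n] [DecidableEq n] (Φ : Matrix n n ℝ) (hs : Φᵀ = Φ)
    (hpos : ∀ v, v ≠ 0 → 0 < v ⬝ᵥ (Φ *ᵥ v)) (g : n → ℝ) :
    IsUnit Φ.det ∧ (∀ v, (g ⬝ᵥ v) ^ 2 ≤ (g ⬝ᵥ (Φ⁻¹ *ᵥ g)) * (v ⬝ᵥ (Φ *ᵥ v))) ∧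
      (Φ⁻¹ *ᵥ g) ⬝ᵥ (Φ *ᵥ (Φ⁻¹ *ᵥ g)) = g ⬝ᵥ (Φ⁻¹ *ᵥ g) := by
  have hdet : IsUnit Φ.det := by
    rw [isUnit_iff_ne_zero]
    intro h0
    obtain ⟨v, hv, hv0⟩ := Matrix.exists_mulVec_eq_zero_iff.2 h0
    have := hpos v hv
    rw [hv0] at this
    simp at this
  have hy : Φ *ᵥ (Φ⁻¹ *ᵥ g) = g := by
    rw [Matrix.mulVec_mulVec, Matrix.mul_nonsing_inv _ hdet, Matrix.one_mulVec]
  have hsw : ∀ u v, u ⬝ᵥ (Φ *ᵥ v) = v ⬝ᵥ (Φ *ᵥ u) := by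
    intro u v
    rw [Matrix.dotProduct_mulVec, ← Matrix.mulVec_transpose, hs, dotProduct_comm]
  have hnn : ∀ v, 0 ≤ v ⬝ᵥ (Φ *ᵥ v) := by
    intro v
    by_cases h : v = 0
    · simp [h]
    · exact (hpos v h).le
  refine ⟨hdet, fun v => ?_, ?_⟩
  · set y := Φ⁻¹ *ᵥ g with hyd
    have key : ∀ t : ℝ, 0 ≤ (v ⬝ᵥ (Φ *ᵥ v)) * (t * t) + (2 * (g ⬝ᵥ v)) * t + g ⬝ᵥ y := by
      intro t
      have h := hnn (t • v + y)
      have h2 : y ⬝ᵥ (Φ *ᵥ v) = g ⬝ᵥ v := by rw [hsw, hy, dotProduct_comm]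
      have h3 : v ⬝ᵥ g = g ⬝ᵥ v := dotProduct_comm _ _
      have h4 : y ⬝ᵥ g = g ⬝ᵥ y := dotProduct_comm _ _
      simp only [Matrix.mulVec_add, Matrix.mulVec_smul, hy, add_dotProduct, dotProduct_add,
        smul_dotProduct, dotProduct_smul, smul_eq_mul, h2, h3, h4] at h
      linarith
    have := discrim_le_zero key
    unfold discrim at this
    nlinarith
  · rw [hy, dotProduct_comm]

/-- moment of the test function with Hermite coefficients `v` -/
noncomputable def mv {d p : ℕ} (v : MIdx d p → ℝ) (α : Fin d → ℕ) : ℝ :=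
  ∑ T, v T * momD α T.toFun

lemma quad_eq_s5 {d p : ℕ} (σ : ℝ → ℝ) (cf : Fin (p + 1) → ℝ)
    (hσ : ∀ y, σ y = ∑ k : Fin (p + 1), cf k * y ^ (k : ℕ)) (ε : ℝ) (v : MIdx d p → ℝ) :
    v ⬝ᵥ ((PhiMat d p σ ε).mulVec v) =
      ∫ z, (∑ β ∈ SS d p, (kap cf β * mv v (fun i => β (some i))) * prodF (monF β) z) *
        (∑ β ∈ SS d p, (kap cf β * mv v (fun i => β (some i))) * prodF (monF β) z)
        ∂(featMeas d ε.toNNReal) := by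
  have e : ∀ z, (∑ β ∈ SS d p, (kap cf β * mv v (fun i => β (some i))) * prodF (monF β) z)
      = ∑ T : MIdx d p, v T * phiHat d σ z.1 z.2 T.toFun := by
    intro z
    simp_rw [phiHat_eq_s5 σ cf hσ, mv, Finset.mul_sum, Finset.sum_mul]
    rw [Finset.sum_comm]
    refine Finset.sum_congr rfl fun T _ => Finset.sum_congr rfl fun β _ => by ring
  have hi : ∀ T T' : MIdx d p, Integrable (fun z : (Fin d → ℝ) × ℝ =>
      phiHat d σ z.1 z.2 T.toFun * phiHat d σ z.1 z.2 T'.toFun) (featMeas d ε.toNNReal) := by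
    intro T T'
    simp_rw [phiHat_eq_s5 σ cf hσ]
    exact integrable_sum_mul_sum _ _ _ _
  simp_rw [e, Finset.sum_mul_sum, mul_mul_mul_comm]
  rw [integral_finsetSum _ fun T _ => integrable_finsetSum _ fun T' _ => (hi T T').const_mul _]
  simp only [dotProduct, Matrix.mulVec, Finset.mul_sum]
  refine Finset.sum_congr rfl fun T _ => ?_
  rw [integral_finsetSum _ fun T' _ => (hi T T').const_mul _]
  refine Finset.sum_congr rfl fun T' _ => ?_
  rw [integral_const_mul]
  simp only [PhiMat]
  ring

lemma mv_bound {d p : ℕ} (σ : ℝ → ℝ) (cf : Fin (p + 1) → ℝ) (hcf : ∀ k, cf k ≠ 0)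
    (hσ : ∀ y, σ y = ∑ k : Fin (p + 1), cf k * y ^ (k : ℕ)) (α : Fin d → ℕ) (hα : ∑ i, α i ≤ p) :
    ∃ K : ℝ, 0 < K ∧ ∀ ε : ℝ, 0 < ε → ∀ v : MIdx d p → ℝ,
      mv v α ^ 2 * ε ^ (∑ i, α i) ≤ K * (v ⬝ᵥ ((PhiMat d p σ ε).mulVec v)) := by
  let β : Option (Fin d) → ℕ := fun o => o.elim 0 α
  have hβs : ∑ o, β o = ∑ i, α i := by simp [β, Fintype.sum_option]
  have hk := kap_ne cf hcf β (by omega)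
  obtain ⟨K, hK, h⟩ := coef_bound (p := p) (SS d p) (fun β hβ o => by
    have h1 := (mem_SS β).1 hβ
    have := Finset.single_le_sum (f := β) (fun _ _ => Nat.zero_le _) (Finset.mem_univ o)
    omega) β ((mem_SS β).2 (by omega))
  refine ⟨K / kap cf β ^ 2, by positivity, fun ε hε v => ?_⟩
  have := h ε hε (fun β => kap cf β * mv v (fun i => β (some i)))
  rw [← quad_eq_s5 σ cf hσ ε v, hβs] at this
  have e : (fun i => β (some i)) = α := rfl
  simp only [e] at this
  rw [div_mul_eq_mul_div, le_div_iff₀ (by positivity)]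
  linarith

lemma MIdx.toFun_inj {d p : ℕ} {T T' : MIdx d p} (h : T.toFun = T'.toFun) : T = T' := by
  apply Subtype.ext
  funext i
  exact Fin.ext (congrFun h i)

lemma exists_mv_ne {d p : ℕ} (v : MIdx d p → ℝ) (hv : v ≠ 0) :
    ∃ T : MIdx d p, mv v T.toFun ≠ 0 := by
  obtain ⟨T1, hT1⟩ := Function.ne_iff.1 hv
  obtain ⟨T, hT, hmin⟩ := Finset.exists_min_image
    (Finset.univ.filter fun T : MIdx d p => v T ≠ 0) (fun T => ∑ i, T.toFun i)
    ⟨T1, by simpa using hT1⟩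
  refine ⟨T, ?_⟩
  unfold mv
  rw [Finset.sum_eq_single_of_mem T (Finset.mem_univ T)]
  · exact mul_ne_zero (by simpa using hT) (momD_self _)
  · intro T' _ hne
    by_cases h0 : v T' = 0
    · simp [h0]
    · rw [momD_eq_zero (hmin T' (by simpa using h0)) fun h => hne (MIdx.toFun_inj h).symm, mul_zero]

lemma herm_dot {d p : ℕ} (G : MvPolynomial (Fin d) ℝ) (v : MIdx d p → ℝ) :
    hermVec d p G ⬝ᵥ v = ∑ m ∈ G.support, G.coeff m * mv v m := by
  simp only [dotProduct, hermVec_eq, mv, Finset.sum_mul, Finset.mul_sum]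
  rw [Finset.sum_comm]
  exact Finset.sum_congr rfl fun m _ => Finset.sum_congr rfl fun T _ => by ring

lemma sum_le_totalDegree {d : ℕ} (G : MvPolynomial (Fin d) ℝ) {m : Fin d →₀ ℕ}
    (hm : m ∈ G.support) : ∑ i, m i ≤ G.totalDegree := by
  have := MvPolynomial.le_totalDegree hm
  rwa [Finsupp.sum_fintype _ _ (fun _ => rfl)] at this

open Matrix in
/-- under Assumption A, for a nonzero polynomial g of total degree s ≤ p,
there exist c₁, c₂, ε₀ > 0 such that for all ε ∈ (0, ε₀), Φ(ε) is invertible and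
c₁ ε^{−s} ≤ ĝᵀ Φ(ε)⁻¹ ĝ ≤ c₂ ε^{−s}. -/
theorem stmt5 (d p : ℕ) (hd : 1 ≤ d) (hp : 1 ≤ p)
    (σ : ℝ → ℝ) (cf : Fin (p + 1) → ℝ) (hcf : ∀ k, cf k ≠ 0)
    (hσ : ∀ y, σ y = ∑ k : Fin (p + 1), cf k * y ^ (k : ℕ))
    (G : MvPolynomial (Fin d) ℝ) (hG : G ≠ 0) (hGdeg : G.totalDegree ≤ p) :
    ∃ c₁ > (0 : ℝ), ∃ c₂ > (0 : ℝ), ∃ ε₀ > (0 : ℝ), ∀ ε : ℝ, 0 < ε → ε < ε₀ →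
      IsUnit (PhiMat d p σ ε).det ∧
        c₁ * (ε ^ G.totalDegree)⁻¹ ≤
          hermVec d p G ⬝ᵥ ((PhiMat d p σ ε)⁻¹ *ᵥ hermVec d p G) ∧
        hermVec d p G ⬝ᵥ ((PhiMat d p σ ε)⁻¹ *ᵥ hermVec d p G) ≤
          c₂ * (ε ^ G.totalDegree)⁻¹ := by
  have hB := fun m : G.support => mv_bound σ cf hcf hσ (m.1 : Fin d → ℕ)
    ((sum_le_totalDegree G m.2).trans hGdeg)
  choose K hK0 hK using hB
  -- a top-degree monomial
  obtain ⟨m0, hm0, hm0s⟩ : ∃ m ∈ G.support, ∑ i, m i = G.totalDegree := by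
    obtain ⟨m, hm, h⟩ := Finset.exists_mem_eq_sup G.support (MvPolynomial.support_nonempty.2 hG)
      (fun s => s.sum fun _ e => e)
    refine ⟨m, hm, ?_⟩
    rw [MvPolynomial.totalDegree, h, Finsupp.sum_fintype _ _ (fun _ => rfl)]
  have hm0p : ∀ i, m0 i ≤ p := fun i => by
    have := Finset.single_le_sum (f := m0) (fun _ _ => Nat.zero_le _) (Finset.mem_univ i)
    omega
  let T0 : MIdx d p := ⟨fun i => ⟨m0 i, by have := hm0p i; omega⟩, by
    change ∑ i, m0 i ≤ p
    omega⟩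
  have hT0 : T0.toFun = m0 := rfl
  let v0 : MIdx d p → ℝ := Pi.single T0 1
  have hmv0 : ∀ α, mv v0 α = momD α m0 := by
    intro α
    unfold mv
    rw [Finset.sum_eq_single_of_mem T0 (Finset.mem_univ _)]
    · simp [v0, hT0]
    · intro T _ hne
      simp [v0, hne]
  have hg0 : hermVec d p G ⬝ᵥ v0 ≠ 0 := by
    rw [herm_dot, Finset.sum_eq_single_of_mem m0 hm0]
    · rw [hmv0]
      exact mul_ne_zero (MvPolynomial.mem_support_iff.1 hm0) (momD_self _)
    · intro m hm hne
      rw [hmv0, momD_eq_zero, mul_zero]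
      · rw [hm0s]; exact sum_le_totalDegree G hm
      · exact fun h => hne (DFunLike.coe_injective h)
  obtain ⟨L, hL0, hL⟩ := upper_bound (SS d p) G.totalDegree
    (fun β => kap cf β * mv v0 (fun i => β (some i))) (by
      intro β _ hβ
      rw [Fintype.sum_option] at hβ
      rw [hmv0, momD_eq_zero, mul_zero]
      · omega
      · intro h
        have : ∑ i, β (some i) = ∑ i, m0 i := Finset.sum_congr rfl fun i _ => congrFun h i
        omega)
  have hC0 : 0 ≤ G.support.card * ∑ m : G.support, G.coeff m.1 ^ 2 * K m :=
    mul_nonneg (by positivity) (Finset.sum_nonneg fun m _ => mul_nonneg (sq_nonneg _) (hK0 m).le)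
  refine ⟨(hermVec d p G ⬝ᵥ v0) ^ 2 / L, by positivity,
    1 + G.support.card * ∑ m : G.support, G.coeff m.1 ^ 2 * K m, by positivity, 1, one_pos,
    fun ε hε hε1 => ?_⟩
  have hεs : 0 < ε ^ G.totalDegree := by positivity
  have hsymm : (PhiMat d p σ ε)ᵀ = PhiMat d p σ ε := by
    ext T T'
    simp only [Matrix.transpose_apply, PhiMat, mul_comm]
  have hnn : ∀ v, 0 ≤ v ⬝ᵥ ((PhiMat d p σ ε) *ᵥ v) := by
    intro v
    rw [quad_eq_s5 σ cf hσ]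
    exact integral_nonneg fun z => mul_self_nonneg _
  have hpos : ∀ v, v ≠ 0 → 0 < v ⬝ᵥ ((PhiMat d p σ ε) *ᵥ v) := by
    intro v hv
    obtain ⟨T, hT⟩ := exists_mv_ne v hv
    obtain ⟨K', hK', h⟩ := mv_bound σ cf hcf hσ T.toFun T.2
    have h1 := h ε hε v
    have h2 : 0 < mv v T.toFun ^ 2 * ε ^ (∑ i, T.toFun i) := by positivity
    exact pos_of_mul_pos_right (h2.trans_le h1) hK'.le
  obtain ⟨hdet, hlow, hself⟩ := la_main _ hsymm hpos (hermVec d p G)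
  refine ⟨hdet, ?_, ?_⟩
  · have h1 := hlow v0
    have h2 := hL ε hε hε1
    rw [← quad_eq_s5 σ cf hσ] at h2
    have h3 : 0 ≤ hermVec d p G ⬝ᵥ ((PhiMat d p σ ε)⁻¹ *ᵥ hermVec d p G) := by
      rw [← hself]; exact hnn _
    rw [← div_eq_mul_inv, div_div, div_le_iff₀ (by positivity)]
    exact h1.trans (mul_le_mul_of_nonneg_left h2 h3)
  · set y := (PhiMat d p σ ε)⁻¹ *ᵥ hermVec d p G with hy
    set Q := hermVec d p G ⬝ᵥ y with hQ
    have hQ0 : 0 ≤ Q := by rw [← hself]; exact hnn _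
    have hsq : Q ^ 2 ≤ (G.support.card * ∑ m : G.support, G.coeff m.1 ^ 2 * K m)
        * (ε ^ G.totalDegree)⁻¹ * Q := by
      have h1 : Q = ∑ m : G.support, G.coeff m.1 * mv y m.1 := by
        rw [hQ, herm_dot]
        exact (Finset.sum_coe_sort G.support (fun m => G.coeff m * mv y m)).symm
      have h2 := sq_sum_le_card_mul_sum_sq (s := Finset.univ)
        (f := fun m : G.support => G.coeff m.1 * mv y m.1)
      rw [← h1] at h2
      refine h2.trans ?_
      have h3 : ∀ m : G.support, mv y m.1 ^ 2 ≤ K m * (ε ^ G.totalDegree)⁻¹ * Q := by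
        intro m
        have h4 := hK m ε hε y
        rw [hself] at h4
        have h5 : ε ^ G.totalDegree ≤ ε ^ (∑ i, m.1 i) :=
          pow_le_pow_of_le_one hε.le hε1.le (sum_le_totalDegree G m.2)
        have h6 : mv y m.1 ^ 2 * ε ^ G.totalDegree ≤ K m * Q :=
          (mul_le_mul_of_nonneg_left h5 (sq_nonneg _)).trans h4
        have h7 : K m * (ε ^ G.totalDegree)⁻¹ * Q = K m * Q / ε ^ G.totalDegree := by
          rw [div_eq_mul_inv]; ring
        rw [h7, le_div_iff₀ hεs]
        exact h6
      rw [Finset.card_univ, Fintype.card_coe, mul_assoc, mul_assoc, Finset.sum_mul]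
      refine mul_le_mul_of_nonneg_left (Finset.sum_le_sum fun m _ => ?_) (by positivity)
      rw [mul_pow]
      refine (mul_le_mul_of_nonneg_left (h3 m) (sq_nonneg _)).trans (le_of_eq ?_)
      ring
    rcases hQ0.eq_or_lt with h0 | h0
    · rw [← h0]; positivity
    · have h1 : Q ≤ (G.support.card * ∑ m : G.support, G.coeff m.1 ^ 2 * K m)
        * (ε ^ G.totalDegree)⁻¹ := by
        rw [pow_two] at hsq
        exact le_of_mul_le_mul_right hsq h0
      refine h1.trans (mul_le_mul_of_nonneg_right ?_ (by positivity))
      linarith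
end

section
/- Fix an integer n ≥ 1, a polynomial σ : ℂ → ℂ, an integer d₀ ≥ 1, and j ∈ {0, …, n−1}^{d₀}, and assume σ^{(|j|)}(0) ≠ 0, where σ^{(m)} denotes the m-th complex derivative of σ. For each d ≥ d₀ let j^{(d)} ∈ {0, …, n−1}^d be j extended by zeros in coordinates d₀+1, …, d, and let w, b have the d-dependent complex Gaussian distribution described in the context. Then E_{w,b}[ |φ̂_{w,b}(j^{(d)})|² ] = Θ(d^{−|j|}) as d → ∞: there exist constants c₁ > 0, c₂ > 0 and d₁ ≥ d₀ such that c₁ d^{−|j|} ≤ E_{w,b}[ |φ̂_{w,b}(j^{(d)})|² ] ≤ c₂ d^{−|j|} for all d ≥ d₁. -/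
open MeasureTheory ProbabilityTheory Complex

/-- The `k`-th `n`-th root of unity `exp(2πik/n)`. -/
noncomputable def rootU (n : ℕ) (k : Fin n) : ℂ :=
  Complex.exp (2 * Real.pi * Complex.I * (k : ℕ) / n)

/-- The discrete Fourier coefficient
`φ̂_{w,b}(j) = (1/n^d) Σ_{x ∈ 𝕌_n^d} σ(⟨w,x⟩ + b) conj(χ_j(x))`, where
`⟨w,x⟩ = Σᵢ conj(wᵢ) xᵢ` and `χ_j(x) = x₁^{j₁} ⋯ x_d^{j_d}`; points of `𝕌_n^d` are
parametrized by `k : Fin d → Fin n` via `xᵢ = exp(2πik_i/n)`. -/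
noncomputable def phiHatC (n d : ℕ) (σ : ℂ → ℂ) (w : Fin d → ℂ) (b : ℂ)
    (j : Fin d → Fin n) : ℂ :=
  (1 / (n : ℂ) ^ d) * ∑ k : Fin d → Fin n,
    σ ((∑ i, (starRingEnd ℂ) (w i) * rootU n (k i)) + b) *
      (starRingEnd ℂ) (∏ i, rootU n (k i) ^ (j i : ℕ))

/-- Real/imaginary parts `(re, im)` assembled into a complex number. -/
noncomputable def toC (z : ℝ × ℝ) : ℂ := z.1 + z.2 * Complex.I

/-- The law of `(w, b)` where `w ∈ ℂ^d` has i.i.d. coordinates, each with independent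
`N(0, v)` real and imaginary parts, and `b ∈ ℂ` likewise, independent of `w`; complex
numbers are represented by pairs `(re, im)`. -/
noncomputable def cFeatMeas (d : ℕ) (v : NNReal) :
    Measure ((Fin d → ℝ × ℝ) × (ℝ × ℝ)) :=
  (Measure.pi fun _ : Fin d => (gaussianReal 0 v).prod (gaussianReal 0 v)).prod
    ((gaussianReal 0 v).prod (gaussianReal 0 v))

/-- The multi-index j ∈ {0,…,n−1}^{d₀} extended by zeros to dimension d. -/
def extIdx {n d₀ : ℕ} (hn : 1 ≤ n) (j : Fin d₀ → Fin n) (d : ℕ) : Fin d → Fin n :=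
  fun i => if h : (i : ℕ) < d₀ then j ⟨(i : ℕ), h⟩ else ⟨0, hn⟩


theorem toC_eq (z : ℝ × ℝ) : toC z = Complex.measurableEquivRealProd.symm z := by
  apply Complex.ext <;> simp [toC, Complex.measurableEquivRealProd_symm_apply]

/-- Density of the complex Gaussian. -/
noncomputable def gdens (v : NNReal) (z : ℂ) : ℝ :=
  (2 * Real.pi * v)⁻¹ * Real.exp (-(2 * (v : ℝ))⁻¹ * ‖z‖ ^ (2 : ℝ))

theorem gdens_toC (v : NNReal) (z : ℝ × ℝ) :
    (gaussianPDF 0 v z.1 * gaussianPDF 0 v z.2).toReal = gdens v (toC z) := by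
  rw [ENNReal.toReal_mul, toReal_gaussianPDF, toReal_gaussianPDF]
  unfold gaussianPDFReal gdens
  have h1 : ‖toC z‖ ^ (2 : ℝ) = z.1 ^ 2 + z.2 ^ 2 := by
    rw [Real.rpow_two, ← Complex.normSq_eq_norm_sq, Complex.normSq_apply]
    simp [toC]; ring
  rw [h1]
  have h2 : (Real.sqrt (2 * Real.pi * v))⁻¹ * (Real.sqrt (2 * Real.pi * v))⁻¹
      = (2 * Real.pi * v)⁻¹ := by
    rw [← mul_inv, Real.mul_self_sqrt (by positivity)]
  rw [← h2]
  have h3 : -(2 * (v : ℝ))⁻¹ * (z.1 ^ 2 + z.2 ^ 2)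
      = -(z.1 - 0) ^ 2 / (2 * v) + -(z.2 - 0) ^ 2 / (2 * v) := by
    simp [div_eq_mul_inv]; ring
  rw [h3, Real.exp_add]; ring

theorem gprod_eq {v : NNReal} (hv : v ≠ 0) :
    (gaussianReal 0 v).prod (gaussianReal 0 v) =
      (volume : Measure (ℝ × ℝ)).withDensity
        (fun z => gaussianPDF 0 v z.1 * gaussianPDF 0 v z.2) := by
  rw [gaussianReal_of_var_ne_zero 0 hv,
    prod_withDensity (measurable_gaussianPDF 0 v) (measurable_gaussianPDF 0 v)]
  rfl

theorem meas_pdf2 (v : NNReal) : Measurable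
    (fun z : ℝ × ℝ => gaussianPDF 0 v z.1 * gaussianPDF 0 v z.2) :=
  ((measurable_gaussianPDF 0 v).comp measurable_fst).mul
    ((measurable_gaussianPDF 0 v).comp measurable_snd)

theorem pdf2_lt (v : NNReal) (z : ℝ × ℝ) :
    gaussianPDF 0 v z.1 * gaussianPDF 0 v z.2 < ⊤ :=
  ENNReal.mul_lt_top gaussianPDF_lt_top gaussianPDF_lt_top

theorem gprod_integral {v : NNReal} (hv : v ≠ 0) (f : ℂ → ℂ) :
    ∫ z, f (toC z) ∂((gaussianReal 0 v).prod (gaussianReal 0 v)) = ∫ z : ℂ, gdens v z • f z := by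
  rw [gprod_eq hv, integral_withDensity_eq_integral_toReal_smul (meas_pdf2 v)
    (Filter.Eventually.of_forall (pdf2_lt v))]
  simp_rw [gdens_toC, toC_eq]
  exact (Complex.volume_preserving_equiv_real_prod.symm).integral_comp
    Complex.measurableEquivRealProd.symm.measurableEmbedding (fun z => gdens v z • f z)

theorem gprod_integrable {v : NNReal} (hv : v ≠ 0) (f : ℂ → ℂ)
    (hf : Integrable (fun z : ℂ => gdens v z • f z)) :
    Integrable (fun z => f (toC z)) ((gaussianReal 0 v).prod (gaussianReal 0 v)) := by
  rw [gprod_eq hv, integrable_withDensity_iff_integrable_smul' (meas_pdf2 v)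
    (Filter.Eventually.of_forall (pdf2_lt v))]
  simp_rw [gdens_toC, toC_eq]
  exact (Complex.volume_preserving_equiv_real_prod.symm).integrable_comp_of_integrable hf

theorem norm_moment {v : NNReal} (hv : v ≠ 0) (q : ℕ) :
    ∫ z : ℂ, gdens v z * ‖z‖ ^ q
      = (2 * Real.pi * v)⁻¹ * (Real.pi * ((2 * (v : ℝ))⁻¹) ^ (-((q : ℝ) + 2) / 2)
        * Real.Gamma (((q : ℝ) + 2) / 2)) := by
  have hb : (0 : ℝ) < (2 * (v : ℝ))⁻¹ := by
    have : (0 : ℝ) < v := NNReal.coe_pos.2 (pos_iff_ne_zero.2 hv)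
    positivity
  have h := Complex.integral_rpow_mul_exp_neg_mul_rpow (p := 2) (q := q) (by norm_num)
    (by have : (0 : ℝ) ≤ q := Nat.cast_nonneg q
        linarith) hb
  have e : ∀ z : ℂ, gdens v z * ‖z‖ ^ q = (2 * Real.pi * v)⁻¹ *
      (‖z‖ ^ (q : ℝ) * Real.exp (-(2 * (v : ℝ))⁻¹ * ‖z‖ ^ (2 : ℝ))) := by
    intro z; rw [gdens, Real.rpow_natCast]; ring
  simp_rw [e]
  rw [integral_const_mul, h]
  congr 3; ring

theorem norm_moment_integrable {v : NNReal} (hv : v ≠ 0) (q : ℕ) :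
    Integrable (fun z : ℂ => gdens v z * ‖z‖ ^ q) := by
  apply not_imp_comm.1 integral_undef
  rw [norm_moment hv]
  have : (0 : ℝ) < v := NNReal.coe_pos.2 (pos_iff_ne_zero.2 hv)
  have hG : 0 < Real.Gamma (((q : ℝ) + 2) / 2) := Real.Gamma_pos_of_pos (by positivity)
  positivity

theorem gdens_cont (v : NNReal) : Continuous (gdens v) := by
  unfold gdens
  have : ∀ z : ℂ, ‖z‖ ^ (2 : ℝ) = ‖z‖ ^ 2 := fun z => Real.rpow_two _
  simp_rw [this]
  fun_prop

theorem gdens_nonneg (v : NNReal) (z : ℂ) : 0 ≤ gdens v z := by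
  unfold gdens; positivity

theorem cmoment_integrable {v : NNReal} (hv : v ≠ 0) (k l : ℕ) :
    Integrable (fun z : ℂ => gdens v z • (z ^ k * (starRingEnd ℂ) z ^ l)) := by
  refine (norm_moment_integrable hv (k + l)).mono' ?_ ?_
  · have := gdens_cont v
    have h2 : Continuous (fun z : ℂ => (starRingEnd ℂ) z) := Complex.continuous_conj
    exact Continuous.aestronglyMeasurable (by fun_prop)
  · refine Filter.Eventually.of_forall fun z => ?_
    simp [abs_of_nonneg (gdens_nonneg v z), pow_add]

theorem cmoment_diag {v : NNReal} (hv : v ≠ 0) (k : ℕ) :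
    ∫ z : ℂ, gdens v z • (z ^ k * (starRingEnd ℂ) z ^ k)
      = ((k.factorial * (2 * v) ^ k : ℝ) : ℂ) := by
  have e : ∀ z : ℂ, gdens v z • (z ^ k * (starRingEnd ℂ) z ^ k)
      = ((gdens v z * ‖z‖ ^ (2 * k) : ℝ) : ℂ) := by
    intro z
    rw [← mul_pow, Complex.mul_conj, Complex.normSq_eq_norm_sq, pow_mul]
    simp
  simp_rw [e]
  rw [integral_complex_ofReal, norm_moment hv]
  congr 1
  have h0 : (0 : ℝ) < v := NNReal.coe_pos.2 (pos_iff_ne_zero.2 hv)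
  have h1 : (((2 * k : ℕ) : ℝ) + 2) / 2 = (k : ℝ) + 1 := by push_cast; ring
  have h2 : -(((2 * k : ℕ) : ℝ) + 2) / 2 = -((k + 1 : ℕ) : ℝ) := by push_cast; ring
  rw [h1, h2, Real.Gamma_nat_eq_factorial, Real.rpow_neg (by positivity), Real.rpow_natCast]
  have := Real.pi_pos
  rw [inv_pow, inv_inv, pow_succ]
  field_simp

theorem cmoment_off (v : NNReal) {k l : ℕ} (hkl : k ≠ l) :
    ∫ z : ℂ, gdens v z • (z ^ k * (starRingEnd ℂ) z ^ l) = 0 := by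
  set f : ℂ → ℂ := fun z => gdens v z • (z ^ k * (starRingEnd ℂ) z ^ l) with hf
  set θ : ℝ := Real.pi / ((k : ℝ) - l) with hθ
  have hne : (k : ℝ) - l ≠ 0 := sub_ne_zero.2 (by exact_mod_cast hkl)
  have hrot := (rotation (Circle.exp θ)).measurePreserving.integral_comp
    (rotation (Circle.exp θ)).toHomeomorph.measurableEmbedding f
  have e : ∀ z : ℂ, f (rotation (Circle.exp θ) z) = - f z := by
    intro z
    have h1 : ‖(Circle.exp θ : ℂ)‖ = 1 := Circle.norm_coe _
    have hg : gdens v ((Circle.exp θ : ℂ) * z) = gdens v z := by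
      unfold gdens; rw [norm_mul, h1, one_mul]
    have h3 : (Circle.exp θ : ℂ) ^ k * (starRingEnd ℂ) (Circle.exp θ : ℂ) ^ l = -1 := by
      rw [Circle.coe_exp, ← Complex.exp_conj, ← Complex.exp_nat_mul, ← Complex.exp_nat_mul,
        ← Complex.exp_add, ← Complex.exp_pi_mul_I]
      congr 1
      have : ((k : ℂ) - l) ≠ 0 := by exact_mod_cast hne
      simp [hθ]
      field_simp
      ring
    simp only [hf, rotation_apply]
    rw [hg, map_mul, mul_pow, mul_pow]
    have : ((Circle.exp θ : ℂ) ^ k * z ^ k *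
        ((starRingEnd ℂ) (Circle.exp θ : ℂ) ^ l * (starRingEnd ℂ) z ^ l))
        = -(z ^ k * (starRingEnd ℂ) z ^ l) := by
      linear_combination (z ^ k * (starRingEnd ℂ) z ^ l) * h3
    rw [this, smul_neg]
  simp_rw [e] at hrot
  rw [integral_neg] at hrot
  exact self_eq_neg.1 hrot.symm

theorem gm_int {v : NNReal} (hv : v ≠ 0) (k l : ℕ) :
    Integrable (fun z => toC z ^ k * (starRingEnd ℂ) (toC z) ^ l)
      ((gaussianReal 0 v).prod (gaussianReal 0 v)) :=
  gprod_integrable hv (fun z => z ^ k * (starRingEnd ℂ) z ^ l) (cmoment_integrable hv k l)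

theorem gm_eq {v : NNReal} (hv : v ≠ 0) (k l : ℕ) :
    ∫ z, toC z ^ k * (starRingEnd ℂ) (toC z) ^ l ∂((gaussianReal 0 v).prod (gaussianReal 0 v))
      = if k = l then ((k.factorial * (2 * v) ^ k : ℝ) : ℂ) else 0 := by
  rw [gprod_integral hv (fun z => z ^ k * (starRingEnd ℂ) z ^ l)]
  split_ifs with h
  · subst h; exact cmoment_diag hv k
  · exact cmoment_off v h

/-- The monomial in the (conjugated) weights and the bias. -/
noncomputable def mon (d : ℕ) (k : Option (Fin d) → ℕ) (ω : (Fin d → ℝ × ℝ) × (ℝ × ℝ)) : ℂ :=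
  (∏ i, (starRingEnd ℂ) (toC (ω.1 i)) ^ k (some i)) * toC ω.2 ^ k none

theorem mon_mul (d : ℕ) (k l : Option (Fin d) → ℕ) (ω : (Fin d → ℝ × ℝ) × (ℝ × ℝ)) :
    mon d k ω * (starRingEnd ℂ) (mon d l ω) =
      (∏ i, (toC (ω.1 i) ^ l (some i) * (starRingEnd ℂ) (toC (ω.1 i)) ^ k (some i))) *
        (toC ω.2 ^ k none * (starRingEnd ℂ) (toC ω.2) ^ l none) := by
  simp only [mon, map_mul, map_prod, map_pow, Complex.conj_conj, Finset.prod_mul_distrib]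
  ring

theorem mon_integrable (d : ℕ) {v : NNReal} (hv : v ≠ 0) (k l : Option (Fin d) → ℕ) :
    Integrable (fun ω => mon d k ω * (starRingEnd ℂ) (mon d l ω)) (cFeatMeas d v) := by
  simp_rw [mon_mul]
  unfold cFeatMeas
  refine Integrable.mul_prod
    (f := fun x : Fin d → ℝ × ℝ => ∏ i, (toC (x i) ^ l (some i) *
      (starRingEnd ℂ) (toC (x i)) ^ k (some i)))
    (g := fun y => toC y ^ k none * (starRingEnd ℂ) (toC y) ^ l none) ?_ (gm_int hv _ _)
  exact Integrable.fintype_prod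
    (f := fun i (z : ℝ × ℝ) => toC z ^ l (some i) * (starRingEnd ℂ) (toC z) ^ k (some i))
    (fun i => gm_int hv _ _)

theorem mon_integral (d : ℕ) {v : NNReal} (hv : v ≠ 0) (k l : Option (Fin d) → ℕ) :
    ∫ ω, mon d k ω * (starRingEnd ℂ) (mon d l ω) ∂(cFeatMeas d v) =
      if k = l then (((∏ i, (k i).factorial) * (2 * v) ^ (∑ i, k i) : ℝ) : ℂ) else 0 := by
  simp_rw [mon_mul]
  unfold cFeatMeas
  rw [integral_prod_mul
    (f := fun x : Fin d → ℝ × ℝ => ∏ i, (toC (x i) ^ l (some i) *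
      (starRingEnd ℂ) (toC (x i)) ^ k (some i)))
    (g := fun y => toC y ^ k none * (starRingEnd ℂ) (toC y) ^ l none),
    integral_fintype_prod_eq_prod
    (f := fun i (z : ℝ × ℝ) => toC z ^ l (some i) * (starRingEnd ℂ) (toC z) ^ k (some i))]
  simp_rw [gm_eq hv]
  split_ifs with h1 h2 h2
  · subst h2
    simp only [if_true]
    rw [Fintype.prod_option, Fintype.sum_option, pow_add, ← Finset.prod_pow_eq_pow_sum]
    push_cast
    rw [Finset.prod_mul_distrib]
    ring
  · obtain ⟨o, ho⟩ := Function.ne_iff.1 h2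
    cases o with
    | none => exact absurd h1 ho
    | some i =>
      rw [Finset.prod_eq_zero (Finset.mem_univ i), zero_mul]
      rw [if_neg (Ne.symm ho)]
  · exact absurd (by rw [h2]) h1
  · rw [mul_zero]

theorem orth_sum {Ω ι : Type*} [MeasurableSpace Ω] [DecidableEq ι] (μ : Measure Ω)
    (S : Finset ι) (f : ι → Ω → ℂ) (c : ι → ℂ) (M : ι → ℝ)
    (hint : ∀ p q, Integrable (fun ω => f p ω * (starRingEnd ℂ) (f q ω)) μ)
    (hval : ∀ p ∈ S, ∀ q ∈ S, ∫ ω, f p ω * (starRingEnd ℂ) (f q ω) ∂μ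
      = if p = q then (M p : ℂ) else 0) :
    ∫ ω, ‖∑ p ∈ S, c p * f p ω‖ ^ 2 ∂μ = ∑ p ∈ S, ‖c p‖ ^ 2 * M p := by
  have e : ∀ ω, ((‖∑ p ∈ S, c p * f p ω‖ ^ 2 : ℝ) : ℂ) =
      ∑ p ∈ S, ∑ q ∈ S, (c p * (starRingEnd ℂ) (c q)) * (f p ω * (starRingEnd ℂ) (f q ω)) := by
    intro ω
    rw [← Complex.normSq_eq_norm_sq, ← Complex.mul_conj, map_sum, Finset.sum_mul_sum]
    refine Finset.sum_congr rfl fun p _ => Finset.sum_congr rfl fun q _ => ?_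
    rw [map_mul]; ring
  apply Complex.ofReal_injective
  rw [← integral_complex_ofReal]
  simp_rw [e]
  rw [integral_finsetSum _ (fun p _ => integrable_finsetSum _ fun q _ => (hint p q).const_mul _)]
  push_cast
  refine Finset.sum_congr rfl fun p hp => ?_
  rw [integral_finsetSum _ (fun q _ => (hint p q).const_mul _)]
  simp_rw [integral_const_mul]
  rw [Finset.sum_eq_single p]
  · rw [hval p hp p hp, if_pos rfl, Complex.mul_conj, Complex.normSq_eq_norm_sq]
    push_cast; rfl
  · intro q hq hqp
    rw [hval p hp q hq, if_neg (Ne.symm hqp), mul_zero]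
  · intro h; exact absurd hp h

/-- One-dimensional discrete Fourier coefficient of a monomial. -/
noncomputable def e1 (n a : ℕ) (j : Fin n) : ℂ :=
  (1 / (n : ℂ)) * ∑ q : Fin n, rootU n q ^ a * (starRingEnd ℂ) (rootU n q ^ (j : ℕ))

theorem rootU_eq (n : ℕ) (q : Fin n) :
    rootU n q = Complex.exp (2 * Real.pi * Complex.I / n) ^ (q : ℕ) := by
  rw [rootU, ← Complex.exp_nat_mul]; congr 1; ring

theorem norm_rootU (n : ℕ) (q : Fin n) : ‖rootU n q‖ = 1 := by
  have : 2 * Real.pi * Complex.I * (q : ℕ) / n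
      = ((2 * Real.pi * (q : ℕ) / n : ℝ) : ℂ) * Complex.I := by push_cast; ring
  rw [rootU, this, Complex.norm_exp_ofReal_mul_I]

theorem e1_norm {n : ℕ} (hn : 1 ≤ n) (a : ℕ) (j : Fin n) : ‖e1 n a j‖ ≤ 1 := by
  have h : ‖∑ q : Fin n, rootU n q ^ a * (starRingEnd ℂ) (rootU n q ^ (j : ℕ))‖ ≤ n := by
    refine (norm_sum_le _ _).trans ?_
    simp [norm_rootU]
  have hn' : (0 : ℝ) < n := by exact_mod_cast hn
  rw [e1, norm_mul, norm_div, norm_one, Complex.norm_natCast, one_div, inv_mul_le_iff₀ hn', mul_one]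
  exact h

theorem rootU_mul_conj (n : ℕ) (q : Fin n) : rootU n q * (starRingEnd ℂ) (rootU n q) = 1 := by
  rw [Complex.mul_conj, Complex.normSq_eq_norm_sq, norm_rootU]; simp

theorem e1_self {n : ℕ} (hn : 1 ≤ n) (j : Fin n) : e1 n j j = 1 := by
  have hn' : (n : ℂ) ≠ 0 := by
    have : n ≠ 0 := by omega
    exact_mod_cast this
  simp_rw [e1, map_pow, ← mul_pow, rootU_mul_conj]
  simp [hn']

theorem e1_zero {n : ℕ} (hn : 1 ≤ n) (a : ℕ) (j : Fin n) (h : a < (j : ℕ)) : e1 n a j = 0 := by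
  have hp := Complex.isPrimitiveRoot_exp n (by omega)
  set ζ := Complex.exp (2 * Real.pi * Complex.I / n) with hζ
  obtain ⟨r, hr⟩ := Nat.exists_eq_add_of_lt h
  have key : ∀ q : Fin n, rootU n q ^ a * (starRingEnd ℂ) (rootU n q ^ (j : ℕ))
      = ((starRingEnd ℂ) (ζ ^ (r + 1))) ^ (q : ℕ) := by
    intro q
    have h1 : (j : ℕ) = a + (r + 1) := by omega
    rw [h1, pow_add, map_mul, ← mul_assoc, map_pow, ← mul_pow, rootU_mul_conj, one_pow, one_mul,
      rootU_eq, ← hζ, ← map_pow, ← pow_mul, ← pow_mul, mul_comm]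
  have hs : ∑ i ∈ Finset.range n, (ζ ^ (r + 1)) ^ i = 0 := by
    have hne : ζ ^ (r + 1) ≠ 1 := hp.pow_ne_one_of_pos_of_lt (by omega) (by have := j.2; omega)
    have := mul_geom_sum (ζ ^ (r + 1)) n
    rw [← pow_mul, mul_comm (r + 1) n, pow_mul, hp.pow_eq_one, one_pow, sub_self] at this
    exact (mul_eq_zero.1 this).resolve_left (sub_ne_zero.2 hne)
  rw [e1]
  simp_rw [key]
  rw [Fin.sum_univ_eq_sum_range (fun i => ((starRingEnd ℂ) (ζ ^ (r + 1))) ^ i)]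
  simp_rw [← map_pow (starRingEnd ℂ) _ _]
  rw [← map_sum, hs, map_zero, mul_zero]

/-- index set -/
noncomputable def idxS (d N : ℕ) : Finset (Σ _ : ℕ, Option (Fin d) → ℕ) :=
  (Finset.range (N + 1)).sigma fun m => Finset.piAntidiag Finset.univ m

/-- coefficient -/
noncomputable def cf (n d : ℕ) (σp : Polynomial ℂ) (J : Fin d → Fin n)
    (p : Σ _ : ℕ, Option (Fin d) → ℕ) : ℂ :=
  σp.coeff p.1 * (Nat.multinomial Finset.univ p.2 : ℂ) * ∏ i, e1 n (p.2 (some i)) (J i)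

theorem eval_expand (d : ℕ) (σp : Polynomial ℂ) (u : Fin d → ℂ) (b : ℂ) :
    σp.eval ((∑ i, u i) + b) = ∑ p ∈ idxS d σp.natDegree,
      σp.coeff p.1 * (Nat.multinomial Finset.univ p.2 : ℂ) *
        (b ^ p.2 none * ∏ i, u i ^ p.2 (some i)) := by
  rw [Polynomial.eval_eq_sum_range, idxS, Finset.sum_sigma]
  refine Finset.sum_congr rfl fun m _ => ?_
  have h : (∑ i, u i) + b = ∑ o : Option (Fin d), (o.elim b u) := by
    rw [Fintype.sum_option]; simp [add_comm]
  rw [h, Finset.sum_pow_eq_sum_piAntidiag, Finset.mul_sum]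
  refine Finset.sum_congr rfl fun k _ => ?_
  rw [Fintype.prod_option, mul_assoc]
  rfl

theorem phiHat_expand (n d : ℕ) (σp : Polynomial ℂ) (J : Fin d → Fin n)
    (ω : (Fin d → ℝ × ℝ) × (ℝ × ℝ)) :
    phiHatC n d (fun z => σp.eval z) (fun i => toC (ω.1 i)) (toC ω.2) J =
      ∑ p ∈ idxS d σp.natDegree, cf n d σp J p * mon d p.2 ω := by
  rw [phiHatC]
  simp_rw [eval_expand, Finset.sum_mul]
  rw [Finset.sum_comm, Finset.mul_sum]
  refine Finset.sum_congr rfl fun p _ => ?_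
  have h1 : ∏ i, e1 n (p.2 (some i)) (J i) = (1 / (n : ℂ) ^ d) *
      ∑ k : Fin d → Fin n, ∏ i, (rootU n (k i) ^ p.2 (some i) *
        (starRingEnd ℂ) (rootU n (k i) ^ (J i : ℕ))) := by
    simp_rw [e1]
    rw [Finset.prod_mul_distrib, Finset.prod_const, Finset.card_univ, Fintype.card_fin,
      Finset.prod_univ_sum, Fintype.piFinset_univ, one_div_pow]
  rw [cf, h1, mon, Finset.mul_sum, Finset.mul_sum, Finset.mul_sum, Finset.sum_mul]
  refine Finset.sum_congr rfl fun k _ => ?_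
  rw [map_prod]
  simp_rw [mul_pow]
  rw [Finset.prod_mul_distrib, Finset.prod_mul_distrib]
  ring

theorem second_moment (n d : ℕ) (σp : Polynomial ℂ) (J : Fin d → Fin n) {v : NNReal}
    (hv : v ≠ 0) :
    ∫ ω : (Fin d → ℝ × ℝ) × (ℝ × ℝ),
      ‖phiHatC n d (fun z => σp.eval z) (fun i => toC (ω.1 i)) (toC ω.2) J‖ ^ 2
        ∂(cFeatMeas d v) =
      ∑ p ∈ idxS d σp.natDegree, ‖cf n d σp J p‖ ^ 2 *
        ((∏ i, (p.2 i).factorial) * (2 * v) ^ (∑ i, p.2 i) : ℝ) := by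
  classical
  simp_rw [phiHat_expand]
  apply orth_sum (cFeatMeas d v) (idxS d σp.natDegree) (fun p ω => mon d p.2 ω) (cf n d σp J)
    (fun p => ((∏ i, (p.2 i).factorial) * (2 * v) ^ (∑ i, p.2 i) : ℝ))
  · intro p q; exact mon_integrable d hv p.2 q.2
  · intro p hp q hq
    rw [mon_integral d hv]
    have hiff : p.2 = q.2 ↔ p = q := by
      constructor
      · intro h
        obtain ⟨m, k⟩ := p
        obtain ⟨m', k'⟩ := q
        simp only [idxS, Finset.mem_sigma, Finset.mem_piAntidiag] at hp hq h
        subst h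
        have : m = m' := hp.2.1.symm.trans hq.2.1
        subst this; rfl
      · rintro rfl; rfl
    simp only [hiff]

theorem sum_extIdx {n d₀ : ℕ} (hn : 1 ≤ n) (j : Fin d₀ → Fin n) {d : ℕ} (hd : d₀ ≤ d) :
    ∑ i, (extIdx hn j d i : ℕ) = ∑ i, (j i : ℕ) := by
  obtain ⟨r, rfl⟩ := Nat.exists_eq_add_of_le hd
  rw [Fin.sum_univ_add]
  simp [extIdx]

theorem card_bound (d m T : ℕ) (J : Fin d → ℕ) (hJ : ∑ i, J i = T) :
    ((Finset.piAntidiag (Finset.univ : Finset (Option (Fin d))) m).filter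
      (fun k => ∀ i, J i ≤ k (some i))).card ≤ if T ≤ m then (d + 1) ^ (m - T) else 0 := by
  classical
  split_ifs with h
  · set J' : Option (Fin d) → ℕ := fun o => o.elim 0 J with hJ'
    have hsum : ∑ o, J' o = T := by rw [Fintype.sum_option]; simpa [hJ'] using hJ
    have h1 : ((Finset.piAntidiag (Finset.univ : Finset (Option (Fin d))) m).filter
      (fun k => ∀ i, J i ≤ k (some i))).card ≤
        (Finset.piAntidiag (Finset.univ : Finset (Option (Fin d))) (m - T)).card := by
      have hle : ∀ k : Option (Fin d) → ℕ, (∀ i, J i ≤ k (some i)) → ∀ o, J' o ≤ k o := by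
        intro k hk o
        cases o with
        | none => exact Nat.zero_le _
        | some i => exact hk i
      refine Finset.card_le_card_of_injOn (fun k o => k o - J' o) ?_ ?_
      · intro k hk
        simp only [Finset.coe_filter, Finset.mem_piAntidiag, Set.mem_ofPred_eq, Finset.mem_coe] at hk ⊢
        refine ⟨?_, fun _ _ => Finset.mem_univ _⟩
        rw [Finset.sum_tsub_distrib _ (fun o _ => hle k hk.2 o), hk.1.1, hsum]
      · intro k hk l hl hkl
        simp only [Finset.coe_filter, Finset.mem_piAntidiag, Set.mem_ofPred_eq] at hk hl
        funext o
        have := congrFun hkl o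
        have a1 := hle k hk.2 o
        have a2 := hle l hl.2 o
        simp only at this
        omega
    refine h1.trans ?_
    have h2 := Finset.sum_pow_eq_sum_piAntidiag (Finset.univ : Finset (Option (Fin d)))
      (fun _ => (1 : ℕ)) (m - T)
    simp only [Finset.sum_const, Finset.card_univ, Fintype.card_option, Fintype.card_fin,
      smul_eq_mul, mul_one, one_pow, Finset.prod_const_one, Nat.cast_id] at h2
    rw [h2, Finset.card_eq_sum_ones]
    exact Finset.sum_le_sum fun k _ => Nat.multinomial_pos _ _
  · rw [Nat.le_zero, Finset.card_eq_zero, Finset.filter_eq_empty_iff]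
    intro k hk hJk
    rw [Finset.mem_piAntidiag, Fintype.sum_option] at hk
    have : ∑ i, J i ≤ ∑ i, k (some i) := Finset.sum_le_sum fun i _ => hJk i
    omega

theorem term_eq (n d : ℕ) (σp : Polynomial ℂ) (J : Fin d → Fin n) (v : ℝ) (m : ℕ)
    (k : Option (Fin d) → ℕ) (hk : ∑ i, k i = m) :
    ‖cf n d σp J ⟨m, k⟩‖ ^ 2 * ((∏ i, (k i).factorial) * (2 * v) ^ (∑ i, k i) : ℝ) =
      ‖σp.coeff m‖ ^ 2 * ((Nat.multinomial Finset.univ k : ℝ) * m.factorial)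
        * (∏ i, ‖e1 n (k (some i)) (J i)‖) ^ 2 * (2 * v) ^ m := by
  have h := Nat.multinomial_spec Finset.univ k
  rw [hk] at h
  rw [hk, ← h, cf, norm_mul, norm_mul, norm_prod, Complex.norm_natCast]
  push_cast
  ring

theorem mult_le (d m : ℕ) (k : Option (Fin d) → ℕ) (hk : ∑ i, k i = m) :
    Nat.multinomial Finset.univ k ≤ m.factorial := by
  have h := Nat.multinomial_spec Finset.univ k
  rw [hk] at h
  exact Nat.le_of_dvd (Nat.factorial_pos _) ⟨_, by rw [mul_comm]; exact h.symm⟩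

theorem upper (n d T : ℕ) (hn : 1 ≤ n) (hd : 1 ≤ d) (σp : Polynomial ℂ) (J : Fin d → Fin n)
    (hJ : ∑ i, (J i : ℕ) = T) :
    ∑ p ∈ idxS d σp.natDegree, ‖cf n d σp J p‖ ^ 2 *
        ((∏ i, (p.2 i).factorial) * (2 * (d : ℝ)⁻¹) ^ (∑ i, p.2 i) : ℝ) ≤
      (∑ m ∈ Finset.range (σp.natDegree + 1), ‖σp.coeff m‖ ^ 2 * (m.factorial : ℝ) ^ 2 * 4 ^ m)
        / (d : ℝ) ^ T := by
  classical
  have hd' : (0 : ℝ) < d := by exact_mod_cast hd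
  rw [idxS, Finset.sum_sigma, Finset.sum_div]
  refine Finset.sum_le_sum fun m _ => ?_
  set B : ℝ := ‖σp.coeff m‖ ^ 2 * (m.factorial : ℝ) ^ 2 * (2 * (d : ℝ)⁻¹) ^ m with hB
  have hB0 : 0 ≤ B := by positivity
  have hterm : ∀ k ∈ Finset.piAntidiag (Finset.univ : Finset (Option (Fin d))) m,
      ‖cf n d σp J ⟨m, k⟩‖ ^ 2 *
        ((∏ i, (k i).factorial) * (2 * (d : ℝ)⁻¹) ^ (∑ i, k i) : ℝ) ≤
      if ∀ i, (J i : ℕ) ≤ k (some i) then B else 0 := by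
    intro k hk
    have hk1 : ∑ i, k i = m := (Finset.mem_piAntidiag.1 hk).1
    rw [term_eq n d σp J _ m k hk1]
    split_ifs with hc
    · have h1 : (∏ i, ‖e1 n (k (some i)) (J i)‖) ^ 2 ≤ 1 := by
        refine pow_le_one₀ (Finset.prod_nonneg fun i _ => norm_nonneg _) ?_
        exact Finset.prod_le_one (fun i _ => norm_nonneg _) fun i _ => e1_norm hn _ _
      have h2 : (Nat.multinomial Finset.univ k : ℝ) ≤ m.factorial := by
        exact_mod_cast mult_le d m k hk1
      calc _ ≤ ‖σp.coeff m‖ ^ 2 * ((m.factorial : ℝ) * m.factorial) * 1 * (2 * (d : ℝ)⁻¹) ^ m := by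
            gcongr
        _ = B := by rw [hB]; ring
    · push Not at hc
      obtain ⟨i, hi⟩ := hc
      rw [Finset.prod_eq_zero (Finset.mem_univ i) (by rw [e1_zero hn _ _ hi, norm_zero])]
      simp
  refine (Finset.sum_le_sum hterm).trans ?_
  rw [← Finset.sum_filter, Finset.sum_const, nsmul_eq_mul]
  have hcard := card_bound d m T (fun i => (J i : ℕ)) hJ
  split_ifs at hcard with hT
  · obtain ⟨r, rfl⟩ := Nat.exists_eq_add_of_le hT
    rw [Nat.add_sub_cancel_left] at hcard
    have hcard' : (((Finset.piAntidiag (Finset.univ : Finset (Option (Fin d))) (T + r)).filter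
      (fun k => ∀ i, (J i : ℕ) ≤ k (some i))).card : ℝ) ≤ (2 * d) ^ r := by
      refine le_trans (b := (((d + 1) ^ r : ℕ) : ℝ)) (by exact_mod_cast hcard) ?_
      push_cast
      have : (1 : ℝ) ≤ d := by exact_mod_cast hd
      gcongr
      linarith
    refine (mul_le_mul_of_nonneg_right hcard' hB0).trans ?_
    have h4 : (2 * (d : ℝ)) ^ r * (2 * (d : ℝ)⁻¹) ^ (T + r) ≤ 4 ^ (T + r) / (d : ℝ) ^ T := by
      have e : (2 * (d : ℝ)) ^ r * (2 * (d : ℝ)⁻¹) ^ (T + r)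
          = (2 ^ T * 4 ^ r) / (d : ℝ) ^ T := by
        have h44 : (4 : ℝ) ^ r = 2 ^ r * 2 ^ r := by rw [← mul_pow]; norm_num
        rw [h44, pow_add, mul_pow, mul_pow, mul_pow, inv_pow, inv_pow]
        field_simp
      rw [e, pow_add]
      gcongr
      norm_num
    calc _ = ‖σp.coeff (T + r)‖ ^ 2 * ((T + r).factorial : ℝ) ^ 2 *
          ((2 * (d : ℝ)) ^ r * (2 * (d : ℝ)⁻¹) ^ (T + r)) := by rw [hB]; ring
      _ ≤ ‖σp.coeff (T + r)‖ ^ 2 * ((T + r).factorial : ℝ) ^ 2 * (4 ^ (T + r) / (d : ℝ) ^ T) := by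
          gcongr
      _ = _ := by ring
  · rw [Nat.le_zero.1 hcard]
    simp only [Nat.cast_zero, zero_mul]
    positivity

theorem lower (n d T : ℕ) (hn : 1 ≤ n) (hd : 1 ≤ d) (σp : Polynomial ℂ) (J : Fin d → Fin n)
    (hJ : ∑ i, (J i : ℕ) = T) (hc : σp.coeff T ≠ 0) :
    ‖σp.coeff T‖ ^ 2 / (d : ℝ) ^ T ≤ ∑ p ∈ idxS d σp.natDegree, ‖cf n d σp J p‖ ^ 2 *
        ((∏ i, (p.2 i).factorial) * (2 * (d : ℝ)⁻¹) ^ (∑ i, p.2 i) : ℝ) := by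
  have hd' : (0 : ℝ) < d := by exact_mod_cast hd
  set K : Option (Fin d) → ℕ := fun o => o.elim 0 (fun i => (J i : ℕ)) with hK
  have hsum : ∑ o, K o = T := by rw [Fintype.sum_option]; simpa [hK] using hJ
  have hmem : (⟨T, K⟩ : Σ _ : ℕ, Option (Fin d) → ℕ) ∈ idxS d σp.natDegree := by
    simp only [idxS, Finset.mem_sigma, Finset.mem_piAntidiag, Finset.mem_range]
    exact ⟨Nat.lt_succ_of_le (Polynomial.le_natDegree_of_ne_zero hc), hsum,
      fun _ _ => Finset.mem_univ _⟩
  refine le_trans ?_ (Finset.single_le_sum (f := fun p : (Σ _ : ℕ, Option (Fin d) → ℕ) =>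
    ‖cf n d σp J p‖ ^ 2 * ((∏ i, (p.2 i).factorial) * (2 * (d : ℝ)⁻¹) ^ (∑ i, p.2 i) : ℝ))
    (fun p _ => by positivity) hmem)
  simp only
  rw [term_eq n d σp J _ T K hsum]
  have h1 : ∏ i, ‖e1 n (K (some i)) (J i)‖ = 1 :=
    Finset.prod_eq_one fun i _ => by
      have : K (some i) = (J i : ℕ) := rfl
      rw [this, e1_self hn, norm_one]
  have h2 : (1 : ℝ) ≤ Nat.multinomial Finset.univ K := by
    exact_mod_cast Nat.multinomial_pos Finset.univ K
  have h3 : (1 : ℝ) ≤ T.factorial := by exact_mod_cast Nat.factorial_pos T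
  rw [h1, one_pow, mul_one]
  calc ‖σp.coeff T‖ ^ 2 / (d : ℝ) ^ T = ‖σp.coeff T‖ ^ 2 * (1 * 1) * (1 * (d : ℝ)⁻¹) ^ T := by
        rw [one_mul, one_mul, inv_pow]; ring
    _ ≤ _ := by gcongr; norm_num

/-- for a polynomial σ : ℂ → ℂ with σ^{(|j|)}(0) ≠ 0 and fixed
j ∈ {0,…,n−1}^{d₀}, extending j by zeros to dimension d and taking the d-dependent
complex Gaussian weights, one has E[|φ̂_{w,b}(j^{(d)})|²] = Θ(d^{−|j|}) as d → ∞. -/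
theorem stmt17 (n d₀ : ℕ) (hn : 1 ≤ n) (hd₀ : 1 ≤ d₀) (σp : Polynomial ℂ)
    (j : Fin d₀ → Fin n)
    (hσ : (Polynomial.derivative^[∑ i, (j i : ℕ)] σp).eval 0 ≠ 0) :
    ∃ c₁ > (0 : ℝ), ∃ c₂ > (0 : ℝ), ∃ d₁ : ℕ, d₀ ≤ d₁ ∧
      ∀ d : ℕ, d₁ ≤ d →
        c₁ / (d : ℝ) ^ (∑ i, (j i : ℕ)) ≤
          (∫ ω : (Fin d → ℝ × ℝ) × (ℝ × ℝ),
            ‖phiHatC n d (fun z => σp.eval z) (fun i => toC (ω.1 i)) (toC ω.2)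
                (extIdx hn j d)‖ ^ 2
            ∂(cFeatMeas d ((d : NNReal))⁻¹)) ∧
        (∫ ω : (Fin d → ℝ × ℝ) × (ℝ × ℝ),
            ‖phiHatC n d (fun z => σp.eval z) (fun i => toC (ω.1 i)) (toC ω.2)
                (extIdx hn j d)‖ ^ 2
            ∂(cFeatMeas d ((d : NNReal))⁻¹)) ≤
          c₂ / (d : ℝ) ^ (∑ i, (j i : ℕ)) := by

  have hc : σp.coeff (∑ i, (j i : ℕ)) ≠ 0 := by
    intro h0
    apply hσ
    rw [← Polynomial.coeff_zero_eq_eval_zero, Polynomial.coeff_iterate_derivative, zero_add, h0,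
      smul_zero]
  set T := ∑ i, (j i : ℕ) with hT
  have hS0 : 0 ≤ ∑ m ∈ Finset.range (σp.natDegree + 1),
      ‖σp.coeff m‖ ^ 2 * (m.factorial : ℝ) ^ 2 * 4 ^ m := by positivity
  refine ⟨‖σp.coeff T‖ ^ 2, by positivity, (∑ m ∈ Finset.range (σp.natDegree + 1),
    ‖σp.coeff m‖ ^ 2 * (m.factorial : ℝ) ^ 2 * 4 ^ m) + 1, by positivity, d₀, le_rfl, ?_⟩
  intro d hd
  have hd1 : 1 ≤ d := hd₀.trans hd
  have hv : ((d : NNReal))⁻¹ ≠ 0 := by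
    have : (d : NNReal) ≠ 0 := by
      have : d ≠ 0 := by omega
      exact_mod_cast this
    exact inv_ne_zero this
  have hcoe : ((((d : NNReal))⁻¹ : NNReal) : ℝ) = (d : ℝ)⁻¹ := by push_cast; rfl
  rw [second_moment n d σp (extIdx hn j d) hv, hcoe]
  have hJ : ∑ i, (extIdx hn j d i : ℕ) = T := sum_extIdx hn j hd
  refine ⟨lower n d T hn hd1 σp _ hJ hc, (upper n d T hn hd1 σp _ hJ).trans ?_⟩
  gcongr
  linarith
end
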